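/- arXiv:1806.07325 — 2 statements merged into one kernel-verified Lean document; each statement's English description precedes it below -/
import Mathlib

section
/- Let 𝓜 ⊂ ℝᴺ, N ≥ 3, be a compact j-connected submanifold for some integer j ∈ {1,…,N−2}, contained in an N-dimensional cube Q. Then there exist a closed (N−j−2)-dimensional Lipschitz polyhedron X ⊂ Q ∖ 𝓜, a locally Lipschitz retraction ψ : Q ∖ X → 𝓜, and a constant c = c(N, j, 𝓜) > 0 such that |Dψ(x)| ≤ c/dist(x, X) for every x ∈ Q ∖ X. -/
/-!
The retraction is the classical one of Hardt and Lin: retract the cube, minus the dual of a fine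
cubical grid, onto the `(j + 1)`-skeleton of the grid, and map the skeleton into `M` using the
vanishing of the homotopy groups up to degree `j`.

* *Near `M`.* The submanifold has positive reach (`global_reach`, from Lagrange multipliers and a
  second order Taylor estimate), so the nearest point projection is Lipschitz on a tube of width
  `ε₀`. Extended to a globally Lipschitz map, it is the map `r` of
  `exists_lipschitz_nbhd_retraction`.
* *On the skeleton.* If `π_n` vanishes, a map from the `n`-sphere to `M` extends to the ball
  (`sphere_extension_of_subsingleton`), so `r` extends cell by cell from the cells close to `M` to
  the whole `(j + 1)`-skeleton with values in `M` (`exists_skel_extension`). Smoothing gives a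
  Lipschitz map `w` on the cube which equals `r` near `M` and sends the skeleton into the tube
  (`exists_skeleton_map`).
* *Retracting onto the skeleton.* In grid coordinates let `saw` be the sawtooth function equal to
  `1` at integers and `0` at half-integers, and let `t x` be the `(j + 2)`-nd smallest of the
  numbers `saw (x i)`. Then `t` is Lipschitz, its zero set is the dual `(N - j - 2)`-skeleton, and
  `t` controls the distance to that set. Dilating each coordinate about the midpoint of its unit
  interval by the factor `1 / t x` and truncating (`squeeze`) makes every coordinate with
  `saw (x i) ≥ t x` an integer, so the image lies in the `(j + 1)`-skeleton. The Lipschitz constant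
  of this map is of the order `1 / t`.

To obtain the identity on `M`, the parameter `t` is replaced by `T = max t u`, where `u` is a
Lipschitz cutoff equal to `1` on `M` and supported in the `η`-neighbourhood of `M`, with `η` larger
than the diameter of a grid cube; this removes from the dual set the part close to `M`. With `h` the
resulting map, `ψ = r ∘ w ∘ h`.
-/

open MeasureTheory Metric Set Filter Topology Function

noncomputable section

abbrev Rn (n : ℕ) : Type := EuclideanSpace ℝ (Fin n)

/-- `Du` is a weak (distributional) differential of `u` on the set `Ω`. -/
def IsWeakFDerivOn {n N : ℕ} (Ω : Set (Rn n)) (u : Rn n → Rn N)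
    (Du : Rn n → (Rn n →L[ℝ] Rn N)) : Prop :=
  LocallyIntegrableOn u Ω volume ∧
  LocallyIntegrableOn (fun x => ‖Du x‖) Ω volume ∧
  ∀ φ : Rn n → ℝ, ContDiff ℝ (⊤ : ℕ∞) φ → HasCompactSupport φ → tsupport φ ⊆ Ω →
    ∀ e : Rn n,
      ∫ x in Ω, (fderiv ℝ φ x e) • u x = - ∫ x in Ω, φ x • Du x e

/-- Membership in the Musielak-Orlicz-Sobolev space `W^{1,p(·)}(Ω, ℝ^N)`,
with weak differential `Du`. -/
def MemW1p {n N : ℕ} (Ω : Set (Rn n)) (p : Rn n → ℝ) (u : Rn n → Rn N)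
    (Du : Rn n → (Rn n →L[ℝ] Rn N)) : Prop :=
  IsWeakFDerivOn Ω u Du ∧
  IntegrableOn u Ω volume ∧
  IntegrableOn (fun x => ‖Du x‖) Ω volume ∧
  IntegrableOn (fun x => ‖u x‖ ^ p x) Ω volume ∧
  IntegrableOn (fun x => ‖Du x‖ ^ p x) Ω volume

/-- Membership in the local space `W^{1,p(·)}_loc(Ω, ℝ^N)`. -/
def MemW1pLoc {n N : ℕ} (Ω : Set (Rn n)) (p : Rn n → ℝ) (u : Rn n → Rn N)
    (Du : Rn n → (Rn n →L[ℝ] Rn N)) : Prop :=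
  IsWeakFDerivOn Ω u Du ∧
  ∀ K : Set (Rn n), IsCompact K → K ⊆ Ω →
    IntegrableOn u K volume ∧ IntegrableOn (fun x => ‖Du x‖) K volume ∧
    IntegrableOn (fun x => ‖u x‖ ^ p x) K volume ∧
    IntegrableOn (fun x => ‖Du x‖ ^ p x) K volume

/-- `u ∈ W^{1,p(·)}₀(U, ℝ^N)`: zero boundary values, expressed through approximation
by compactly supported Sobolev maps. -/
def MemW1pZero {n N : ℕ} (U : Set (Rn n)) (p : Rn n → ℝ) (u : Rn n → Rn N)
    (Du : Rn n → (Rn n →L[ℝ] Rn N)) : Prop :=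
  MemW1p U p u Du ∧
  ∃ (φ : ℕ → Rn n → Rn N) (Dφ : ℕ → Rn n → (Rn n →L[ℝ] Rn N)),
    (∀ j, MemW1p U p (φ j) (Dφ j) ∧ HasCompactSupport (φ j) ∧ tsupport (φ j) ⊆ U) ∧
    Tendsto
      (fun j => ∫ x in U, (‖u x - φ j x‖ + ‖Du x - Dφ j x‖
        + ‖u x - φ j x‖ ^ p x + ‖Du x - Dφ j x‖ ^ p x)) atTop (nhds 0)

/-- `W^{1,p(·)}(Ω, M)` : values a.e. in `M`. -/
def MemW1pM {n N : ℕ} (Ω : Set (Rn n)) (p : Rn n → ℝ) (M : Set (Rn N))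
    (u : Rn n → Rn N) (Du : Rn n → (Rn n →L[ℝ] Rn N)) : Prop :=
  MemW1p Ω p u Du ∧ ∀ᵐ x ∂(volume.restrict Ω), u x ∈ M

/-- `W^{1,p(·)}_loc(Ω, M)` : values a.e. in `M`. -/
def MemW1pMLoc {n N : ℕ} (Ω : Set (Rn n)) (p : Rn n → ℝ) (M : Set (Rn N))
    (u : Rn n → Rn N) (Du : Rn n → (Rn n →L[ℝ] Rn N)) : Prop :=
  MemW1pLoc Ω p u Du ∧ ∀ᵐ x ∂(volume.restrict Ω), u x ∈ M

/-- A constrained local minimizer of `w ↦ ∫_Ω k(x) |Dw|^{p(x)} dx` among maps with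
values in `M`. -/
def IsConstrainedLocalMin {n N : ℕ} (Ω : Set (Rn n)) (k p : Rn n → ℝ)
    (M : Set (Rn N)) (u : Rn n → Rn N) (Du : Rn n → (Rn n →L[ℝ] Rn N)) : Prop :=
  MemW1pMLoc Ω p M u Du ∧
  LocallyIntegrableOn (fun x => k x * ‖Du x‖ ^ p x) Ω volume ∧
  ∀ U : Set (Rn n), IsOpen U → IsCompact (closure U) → closure U ⊆ Ω →
    ∀ (w : Rn n → Rn N) (Dw : Rn n → (Rn n →L[ℝ] Rn N)),
      MemW1pM U p M w Dw →
      MemW1pZero U p (fun x => w x - u x) (fun x => Dw x - Du x) →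
      ∫ x in U, k x * ‖Du x‖ ^ p x ≤ ∫ x in U, k x * ‖Dw x‖ ^ p x

/-- `M` is an `m`-dimensional `C³` embedded submanifold (without boundary) of `ℝ^N`,
described locally as a regular level set of a `C³` submersion. -/
def IsC3Submanifold {N : ℕ} (m : ℕ) (M : Set (Rn N)) : Prop :=
  ∀ x ∈ M, ∃ (U : Set (Rn N)) (f : Rn N → Rn (N - m)),
    IsOpen U ∧ x ∈ U ∧ ContDiffOn ℝ 3 f U ∧
    (M ∩ U = {y ∈ U | f y = 0}) ∧
    ∀ y ∈ U, Surjective (fderivWithin ℝ f U y)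

/-- Assumptions (M1)-(M2) on the target manifold: `M ⊆ ℝ^N`, `N ≥ 3`, is a compact
`m`-dimensional `C³` submanifold without boundary which is `([γ₂]-1)`-connected. -/
def Mconds (N m : ℕ) (M : Set (Rn N)) (γ₂ : ℝ) : Prop :=
  3 ≤ N ∧ m ≤ N ∧ M.Nonempty ∧ IsCompact M ∧ IsC3Submanifold m M ∧
  ∀ i : ℕ, i ≤ ⌊γ₂⌋₊ - 1 → ∀ x : ↥M, Subsingleton (HomotopyGroup (Fin i) ↥M x)

/-- Assumptions (P1)-(P2) on the variable exponent: `p` is `α`-Hölder on `Ω` with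
seminorm at most `Cp`, and `1 < γ₁ ≤ p(x) ≤ γ₂`. -/
def Pconds {n : ℕ} (Ω : Set (Rn n)) (p : Rn n → ℝ) (α γ₁ γ₂ Cp : ℝ) : Prop :=
  0 < α ∧ α ≤ 1 ∧ (∀ x ∈ Ω, ∀ y ∈ Ω, |p x - p y| ≤ Cp * dist x y ^ α) ∧
  1 < γ₁ ∧ ∀ x ∈ Ω, γ₁ ≤ p x ∧ p x ≤ γ₂

/-- Assumptions (K1)-(K2) on the coefficient: `k` is `α`-Hölder on `Ω` with seminorm
at most `Ck`, and `0 < λ ≤ k(x) ≤ Λ`. -/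
def Kconds {n : ℕ} (Ω : Set (Rn n)) (k : Rn n → ℝ) (α lam Lam Ck : ℝ) : Prop :=
  (∀ x ∈ Ω, ∀ y ∈ Ω, |k x - k y| ≤ Ck * dist x y ^ α) ∧
  0 < lam ∧ ∀ x ∈ Ω, lam ≤ k x ∧ k x ≤ Lam

/-- `u` is `C¹`-regular around the point `x ∈ Ω` (up to modification on a null set). -/
def C1RegularAt {n N : ℕ} (Ω : Set (Rn n)) (u : Rn n → Rn N) (x : Rn n) : Prop :=
  ∃ ε > 0, ball x ε ⊆ Ω ∧ ∃ ut : Rn n → Rn N,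
    (∀ᵐ y ∂(volume.restrict (ball x ε)), ut y = u y) ∧
    ContDiffOn ℝ 1 ut (ball x ε)

/-- The singular set of `u`: the complement in `Ω` of the largest relatively open
subset of `Ω` on which `u` is `C¹`-regular. -/
def SingularSet {n N : ℕ} (Ω : Set (Rn n)) (u : Rn n → Rn N) : Set (Rn n) :=
  {x ∈ Ω | ¬ C1RegularAt Ω u x}

/-- `u` is locally `C^{1,β}`-regular on the open set `S` (up to modification on a
null set). -/
def IsC1HolderOn {n N : ℕ} (S : Set (Rn n)) (β : ℝ) (u : Rn n → Rn N) : Prop :=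
  ∀ x ∈ S, ∃ ε > 0, ball x ε ⊆ S ∧ ∃ (ut : Rn n → Rn N) (C : ℝ),
    (∀ᵐ y ∂(volume.restrict (ball x ε)), ut y = u y) ∧
    ContDiffOn ℝ 1 ut (ball x ε) ∧
    ∀ y ∈ ball x ε, ∀ z ∈ ball x ε,
      ‖fderivWithin ℝ ut (ball x ε) y - fderivWithin ℝ ut (ball x ε) z‖
        ≤ C * dist y z ^ β

/-- An axis-parallel cube in `ℝ^N`. -/
def IsCube {N : ℕ} (Q : Set (Rn N)) : Prop :=
  ∃ (a : Rn N) (ρ : ℝ), 0 < ρ ∧ Q = {y : Rn N | ∀ i, |y i - a i| ≤ ρ}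

/-- A closed `d`-dimensional Lipschitz polyhedron: a finite union of Lipschitz images
of compact subsets of `ℝ^d`. -/
def IsLipschitzPolyhedron {N : ℕ} (d : ℕ) (X : Set (Rn N)) : Prop :=
  IsClosed X ∧
  ∃ (K : ℕ) (F : Fin K → (Rn d → Rn N)) (S : Fin K → Set (Rn d)),
    (∀ i, IsCompact (S i)) ∧
    (∀ i, ∃ C : NNReal, LipschitzOnWith C (F i) (S i)) ∧
    X = ⋃ i, F i '' S i

/-! ### Lipschitz retraction of a neighbourhood onto the submanifold -/

/-- At a nearest point `a` of the level set, `x - a` is conormal (Lagrange multipliers). -/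
lemma exists_multiplier {N k : ℕ} {M U : Set (Rn N)} {f : Rn N → Rn k} (hU : IsOpen U)
    (hf : ContDiffOn ℝ 3 f U) (hMU : M ∩ U = {y ∈ U | f y = 0})
    {a x : Rn N} (haM : a ∈ M) (haU : a ∈ U) (hsurj : Surjective (fderiv ℝ f a))
    (hmin : ∀ y ∈ M, dist x a ≤ dist x y) :
    ∃ Λ : Rn k →L[ℝ] ℝ, ∀ v, inner ℝ (x - a) v = Λ (fderiv ℝ f a v) := by
  have hfa : f a = 0 := by
    have : a ∈ M ∩ U := ⟨haM, haU⟩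
    rw [hMU] at this; exact this.2
  have hstr : HasStrictFDerivAt f (fderiv ℝ f a) a :=
    (hf.contDiffAt (hU.mem_nhds haU)).hasStrictFDerivAt (by norm_num)
  have hφ : HasStrictFDerivAt (fun y : Rn N => ‖y - x‖ ^ 2) (2 • (innerSL ℝ) (a - x)) a := by
    have h1 : HasStrictFDerivAt (fun y : Rn N => y - x) (ContinuousLinearMap.id ℝ (Rn N)) a :=
      (hasStrictFDerivAt_id a).sub_const x
    have := (hasStrictFDerivAt_norm_sq (a - x)).comp a h1
    simpa using this
  have hext : IsLocalExtrOn (fun y : Rn N => ‖y - x‖ ^ 2) {y | f y = f a} a := by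
    left
    have : ∀ᶠ y in 𝓝[{y | f y = f a}] a, y ∈ U :=
      mem_nhdsWithin_of_mem_nhds (hU.mem_nhds haU)
    filter_upwards [this, self_mem_nhdsWithin] with y hyU hy
    have hyM : y ∈ M := by
      have : y ∈ {y ∈ U | f y = 0} := ⟨hyU, by rw [← hfa]; exact hy⟩
      rw [← hMU] at this; exact this.1
    have := hmin y hyM
    rw [dist_comm x a, dist_comm x y, dist_eq_norm, dist_eq_norm] at this
    exact pow_le_pow_left₀ (norm_nonneg _) this 2
  obtain ⟨Λ, Λ₀, hne, hΛ⟩ := hext.exists_linear_map_of_hasStrictFDerivAt hstr hφ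
  have hΛ₀ : Λ₀ ≠ 0 := by
    rintro rfl
    apply hne
    rw [Prod.mk_eq_zero]
    refine ⟨LinearMap.ext fun w => ?_, rfl⟩
    obtain ⟨v, rfl⟩ := hsurj w
    simpa using hΛ v
  refine ⟨(2 * Λ₀)⁻¹ • LinearMap.toContinuousLinearMap Λ, fun v => ?_⟩
  have h := hΛ v
  have hin : inner ℝ (x - a) v = - inner ℝ (a - x) v := by rw [← inner_neg_left, neg_sub]
  simp only [_root_.smul_apply, innerSL_apply_apply, smul_eq_mul, nsmul_eq_mul,
    LinearMap.coe_toContinuousLinearMap', Nat.cast_ofNat] at h ⊢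
  rw [hin]
  field_simp
  linarith

/-- Local form of the positive reach inequality. The constant is (twice) the norm of a right
inverse of the differential times the Lipschitz constant of the differential. -/
lemma local_reach {N m : ℕ} {M : Set (Rn N)} (hM : IsC3Submanifold m M) {x₀ : Rn N}
    (hx₀ : x₀ ∈ M) :
    ∃ V : Set (Rn N), IsOpen V ∧ x₀ ∈ V ∧ ∃ C : ℝ, 0 ≤ C ∧ ∀ a ∈ M ∩ V, ∀ b ∈ M ∩ V, ∀ x,
      (∀ y ∈ M, dist x a ≤ dist x y) →
      inner ℝ (x - a) (b - a) ≤ C * ‖x - a‖ * ‖b - a‖ ^ 2 := by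
  obtain ⟨U, f, hU, hxU, hf, hMU, hs⟩ := hM x₀ hx₀
  have hs' : ∀ y ∈ U, Surjective (fderiv ℝ f y) := fun y hy => by
    rw [← fderivWithin_of_isOpen hU hy]; exact hs y hy
  have hcd : ContDiffAt ℝ 1 (fderiv ℝ f) x₀ :=
    (hf.contDiffAt (hU.mem_nhds hxU)).fderiv_right (by norm_num)
  obtain ⟨K, t, ht, hK⟩ := hcd.exists_lipschitzOnWith
  obtain ⟨R, hR⟩ := (fderiv ℝ f x₀).exists_rightInverse_of_surjective
    (LinearMap.range_eq_top.2 (hs' x₀ hxU))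
  have hnear : ∀ᶠ y in 𝓝 x₀, ‖fderiv ℝ f y - fderiv ℝ f x₀‖ * ‖R‖ < 1 / 2 := by
    have hc : ContinuousAt (fun y => ‖fderiv ℝ f y - fderiv ℝ f x₀‖ * ‖R‖) x₀ :=
      ((hcd.continuousAt.sub continuousAt_const).norm).mul continuousAt_const
    exact hc.eventually_lt_const (by simp)
  obtain ⟨ρ, hρ, hball⟩ := Metric.mem_nhds_iff.1
    (inter_mem (inter_mem ht (hU.mem_nhds hxU)) hnear)
  refine ⟨ball x₀ ρ, isOpen_ball, mem_ball_self hρ, 2 * ‖R‖ * K, by positivity, ?_⟩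
  rintro a ⟨haM, haV⟩ b ⟨hbM, hbV⟩ x hmin
  have haU : a ∈ U := (hball haV).1.2
  have hbU : b ∈ U := (hball hbV).1.2
  obtain ⟨Λ, hΛ⟩ := exists_multiplier hU hf hMU haM haU (hs' a haU) hmin
  have hzero : ∀ y ∈ M, y ∈ U → f y = 0 := fun y h1 h2 => by
    have : y ∈ M ∩ U := ⟨h1, h2⟩
    rw [hMU] at this; exact this.2
  -- second order Taylor bound
  have hT : ‖fderiv ℝ f a (b - a)‖ ≤ K * ‖b - a‖ * ‖b - a‖ := by
    have := Convex.norm_image_sub_le_of_norm_fderiv_le' (𝕜 := ℝ) (f := f)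
      (φ := fderiv ℝ f a) (C := K * ‖b - a‖) (s := ball x₀ ρ ∩ closedBall a ‖b - a‖)
      (x := a) (y := b) ?_ ?_ ((convex_ball _ _).inter (convex_closedBall _ _))
      ⟨haV, by simp⟩ ⟨hbV, by simp [dist_eq_norm]⟩
    · rw [hzero a haM haU, hzero b hbM hbU] at this
      rwa [sub_self, zero_sub, norm_neg] at this
    · intro y hy
      exact (hf.contDiffAt (hU.mem_nhds (hball hy.1).1.2)).differentiableAt (by norm_num)
    · intro y hy
      rw [← dist_eq_norm]
      refine (hK.dist_le_mul _ (hball hy.1).1.1 _ (hball haV).1.1).trans ?_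
      gcongr
      exact hy.2
  -- bound on the multiplier through the approximate right inverse `R`
  have hΛn : ‖Λ‖ ≤ 2 * ‖R‖ * ‖x - a‖ := by
    have hA : ‖Λ ∘L fderiv ℝ f a‖ ≤ ‖x - a‖ := by
      refine ContinuousLinearMap.opNorm_le_bound _ (norm_nonneg _) fun v => ?_
      rw [ContinuousLinearMap.comp_apply, ← hΛ]
      exact norm_inner_le_norm _ _
    have hdec : Λ = (Λ ∘L fderiv ℝ f a) ∘L R
        - Λ ∘L ((fderiv ℝ f a - fderiv ℝ f x₀) ∘L R) := by
      ext w
      have : fderiv ℝ f x₀ (R w) = w := by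
        have := congrArg (fun T => T w) hR
        simpa using this
      simp [this]
    have h1 : ‖Λ‖ ≤ ‖x - a‖ * ‖R‖ + ‖Λ‖ * (1 / 2) := by
      calc ‖Λ‖ ≤ ‖(Λ ∘L fderiv ℝ f a) ∘L R‖
            + ‖Λ ∘L ((fderiv ℝ f a - fderiv ℝ f x₀) ∘L R)‖ := by
              conv_lhs => rw [hdec]
              exact norm_sub_le _ _
        _ ≤ _ := by
          gcongr
          · exact (ContinuousLinearMap.opNorm_comp_le _ _).trans (by gcongr)
          · refine (ContinuousLinearMap.opNorm_comp_le _ _).trans ?_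
            gcongr
            exact (ContinuousLinearMap.opNorm_comp_le _ _).trans (hball haV).2.le
    linarith
  calc inner ℝ (x - a) (b - a) = Λ (fderiv ℝ f a (b - a)) := hΛ _
    _ ≤ ‖Λ‖ * ‖fderiv ℝ f a (b - a)‖ := (le_abs_self _).trans (Λ.le_opNorm _)
    _ ≤ (2 * ‖R‖ * ‖x - a‖) * (K * ‖b - a‖ * ‖b - a‖) := by gcongr
    _ = _ := by ring

/-- Positive reach: for `a, b ∈ M` and `x` having `a` as a nearest point,
`⟪x - a, b - a⟫` is quadratically small in `b - a`. -/
lemma global_reach {N m : ℕ} {M : Set (Rn N)} (hM : IsC3Submanifold m M) (hc : IsCompact M) :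
    ∃ C : ℝ, 0 < C ∧ ∀ a ∈ M, ∀ b ∈ M, ∀ x, (∀ y ∈ M, dist x a ≤ dist x y) →
      inner ℝ (x - a) (b - a) ≤ C * ‖x - a‖ * ‖b - a‖ ^ 2 := by
  choose! V hVo hxV C hC0 hC using fun x₀ (hx₀ : x₀ ∈ M) => local_reach hM hx₀
  obtain ⟨T, hTM⟩ := hc.elim_nhds_subcover' (fun x hx => V x)
    (fun x hx => (hVo x hx).mem_nhds (hxV x hx))
  obtain ⟨δ, hδ, hleb⟩ := lebesgue_number_lemma_of_metric (c := fun i : T => V i.1.1) hc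
    (fun i => hVo _ i.1.2) (by
      intro y hy
      obtain ⟨i, hi, hyi⟩ := mem_iUnion₂.1 (hTM hy)
      exact mem_iUnion.2 ⟨⟨i, hi⟩, hyi⟩)
  have hnn : ∀ i ∈ T, 0 ≤ C i.1 := fun i _ => hC0 _ i.2
  refine ⟨∑ i ∈ T, C i.1 + 1 / δ, by have := Finset.sum_nonneg hnn; positivity, ?_⟩
  intro a ha b hb x hmin
  have hS := Finset.sum_nonneg hnn
  by_cases hab : dist b a < δ
  · obtain ⟨i, hi⟩ := hleb a ha
    have h1 := hC i.1.1 i.1.2 a ⟨ha, hi (mem_ball_self hδ)⟩ b ⟨hb, hi hab⟩ x hmin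
    have h2 : C i.1.1 ≤ ∑ i ∈ T, C i.1 := Finset.single_le_sum hnn i.2
    refine h1.trans ?_
    gcongr
    have : 0 < 1 / δ := by positivity
    linarith
  · rw [not_lt, dist_eq_norm] at hab
    refine (real_inner_le_norm _ _).trans ?_
    have h3 : ‖b - a‖ ≤ 1 / δ * ‖b - a‖ ^ 2 := by
      rw [one_div, ← div_eq_inv_mul, le_div_iff₀ hδ]
      nlinarith [norm_nonneg (b - a)]
    have h4 : 0 ≤ (∑ i ∈ T, C i.1) * ‖b - a‖ ^ 2 := by positivity
    calc ‖x - a‖ * ‖b - a‖ ≤ ‖x - a‖ * ((∑ i ∈ T, C i.1 + 1 / δ) * ‖b - a‖ ^ 2) := by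
          gcongr; linarith
      _ = _ := by ring

/-- A compact `C³` submanifold is a Lipschitz retract of a neighbourhood; the nearest point
projection, extended to a globally Lipschitz map, does it. -/
lemma exists_lipschitz_nbhd_retraction {N m : ℕ} {M : Set (Rn N)} (hM : IsC3Submanifold m M)
    (hc : IsCompact M) (hne : M.Nonempty) :
    ∃ (r : Rn N → Rn N) (L : NNReal) (ε : ℝ), 0 < ε ∧ LipschitzWith L r ∧
      (∀ a ∈ M, r a = a) ∧ ∀ x, infDist x M ≤ ε → r x ∈ M := by
  obtain ⟨C, hC, hreach⟩ := global_reach hM hc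
  choose p hpM hp using hc.exists_infDist_eq_dist hne
  have hmin : ∀ x, ∀ y ∈ M, dist x (p x) ≤ dist x y := fun x y hy => by
    rw [← hp]; exact infDist_le_dist_of_mem hy
  have hlip : LipschitzOnWith 2 p {x | infDist x M ≤ 1 / (4 * C)} := by
    refine LipschitzOnWith.of_dist_le_mul fun x hx y hy => ?_
    have h1 := hreach _ (hpM x) _ (hpM y) x (hmin x)
    have h2 := hreach _ (hpM y) _ (hpM x) y (hmin y)
    have hx' : C * ‖x - p x‖ ≤ 1 / 4 := by
      rw [← dist_eq_norm, ← hp]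
      calc C * infDist x M ≤ C * (1 / (4 * C)) := by gcongr; exact hx
        _ = 1 / 4 := by field_simp
    have hy' : C * ‖y - p y‖ ≤ 1 / 4 := by
      rw [← dist_eq_norm, ← hp]
      calc C * infDist y M ≤ C * (1 / (4 * C)) := by gcongr; exact hy
        _ = 1 / 4 := by field_simp
    rw [dist_eq_norm, dist_eq_norm]
    set d := ‖p x - p y‖ with hd
    have hd' : ‖p y - p x‖ = d := norm_sub_rev _ _
    rw [hd'] at h1
    have h3 : inner ℝ (p x - p y) (p x - p y) = inner ℝ (x - y) (p x - p y)
        + inner ℝ (x - p x) (p y - p x) + inner ℝ (y - p y) (p x - p y) := by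
      simp only [inner_sub_left, inner_sub_right]; ring
    rw [real_inner_self_eq_norm_sq] at h3
    have h4 := real_inner_le_norm (x - y) (p x - p y)
    have h5 : d ^ 2 ≤ ‖x - y‖ * d + 1 / 4 * d ^ 2 + 1 / 4 * d ^ 2 := by
      have e1 := mul_le_mul_of_nonneg_right hx' (sq_nonneg d)
      have e2 := mul_le_mul_of_nonneg_right hy' (sq_nonneg d)
      linarith
    have hd0 : 0 ≤ d := norm_nonneg _
    rcases hd0.eq_or_lt with h0 | h0
    · rw [← h0]; positivity
    · push_cast
      by_contra hcon
      push Not at hcon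
      nlinarith
  obtain ⟨r, hr, hEq⟩ := hlip.extend_finite_dimension
  refine ⟨r, _, 1 / (4 * C), by positivity, hr, fun a ha => ?_, fun x hx => ?_⟩
  · have h0 : infDist a M = 0 := infDist_zero_of_mem ha
    rw [← hEq (show infDist a M ≤ _ by rw [h0]; positivity)]
    have := hp a
    rw [h0] at this
    exact (dist_eq_zero.1 this.symm).symm
  · rw [← hEq hx]; exact hpM x

/-- A compact submanifold does not fill a cube: in codimension zero it would be open and closed in
`ℝ^N`, and in positive codimension it has empty interior. -/
lemma exists_mem_cube_not_mem {N m : ℕ} (hN : 0 < N) {M : Set (Rn N)} (hM : IsC3Submanifold m M)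
    (hc : IsCompact M) (a : Rn N) {ρ : ℝ} (hρ : 0 < ρ) :
    ∃ p : Rn N, (∀ i, |p i - a i| ≤ ρ) ∧ p ∉ M := by
  by_contra hcon
  push Not at hcon
  have haM : a ∈ M := hcon a (by simp [hρ.le])
  have hnb : ball a ρ ⊆ M := fun y hy => hcon y fun i => by
    have := PiLp.norm_apply_le (y - a) i
    rw [mem_ball, dist_eq_norm] at hy
    simpa using this.trans hy.le
  obtain ⟨U, f, hU, haU, hf, hMU, hs⟩ := hM a haM
  have : Nonempty (Fin N) := ⟨⟨0, hN⟩⟩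
  have : Nontrivial (Rn N) := by infer_instance
  by_cases hm : N - m = 0
  · have hopen : IsOpen M := by
      rw [isOpen_iff_mem_nhds]
      intro x hx
      obtain ⟨U, f, hU, hxU, hf, hMU, -⟩ := hM x hx
      refine mem_of_superset (hU.mem_nhds hxU) fun y hy => ?_
      have : y ∈ {y ∈ U | f y = 0} := ⟨hy, by
        ext i; exact absurd i.2 (by omega)⟩
      rw [← hMU] at this; exact this.1
    have huniv : M = univ := IsClopen.eq_univ ⟨hc.isClosed, hopen⟩ ⟨a, haM⟩
    rw [huniv] at hc
    exact noncompact_univ (Rn N) hc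
  · have hev : f =ᶠ[𝓝 a] fun _ => 0 := by
      filter_upwards [hU.mem_nhds haU, ball_mem_nhds a hρ] with y hyU hy
      have : y ∈ M ∩ U := ⟨hnb hy, hyU⟩
      rw [hMU] at this; exact this.2
    have hsa := hs a haU
    rw [fderivWithin_of_isOpen hU haU, hev.fderiv_eq] at hsa
    obtain ⟨v, hv⟩ := hsa (EuclideanSpace.single ⟨0, by omega⟩ 1)
    have := congrArg (fun w : Rn (N - m) => w ⟨0, by omega⟩) hv
    simp at this

/-! ### Extending maps from spheres to balls -/

/-- Direction field wrapping the cube `{‖v‖ ≤ 1}` of `ℝⁿ` around the sphere of `ℝⁿ × ℝ`: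
the centre goes to the north pole, the boundary of the cube to the south pole. -/
def wrap {n : ℕ} (v : Fin n → ℝ) : (Fin n → ℝ) × ℝ := ((1 - ‖v‖) • v, 1 / 2 - ‖v‖)

lemma continuous_wrap {n : ℕ} : Continuous (wrap (n := n)) := by
  unfold wrap; fun_prop

lemma wrap_ne_zero {n : ℕ} (v : Fin n → ℝ) : wrap v ≠ 0 := by
  intro h
  rw [wrap, Prod.mk_eq_zero] at h
  obtain ⟨h1, h2⟩ := h
  have h3 : ‖v‖ = 1 / 2 := by linarith
  have h4 := congrArg norm h1
  rw [norm_smul, h3] at h4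
  norm_num at h4

/-- Two vectors of the cube have the same direction under `wrap` only if they are equal or both
lie on the boundary. -/
lemma wrap_inj {n : ℕ} {v v' : Fin n → ℝ} (hv : ‖v‖ ≤ 1) (hv' : ‖v'‖ ≤ 1) {l : ℝ} (hl : 0 < l)
    (h : wrap v = l • wrap v') : v = v' ∨ (‖v‖ = 1 ∧ ‖v'‖ = 1) := by
  rw [wrap, wrap, Prod.smul_mk, Prod.mk.injEq] at h
  obtain ⟨h1, h2⟩ := h
  have h3 := congrArg norm h1
  rw [norm_smul, norm_smul, norm_smul, Real.norm_of_nonneg (by linarith), Real.norm_of_nonneg hl.le,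
    Real.norm_of_nonneg (by linarith)] at h3
  rw [smul_eq_mul] at h2
  have h4 : (1 - l) * (1 / 4 + l * (1 / 2 - ‖v'‖) ^ 2) = 0 := by
    have : ‖v‖ = 1 / 2 - l * (1 / 2 - ‖v'‖) := by linarith
    rw [this] at h3
    nlinarith
  have h5 : l = 1 := by
    rcases mul_eq_zero.1 h4 with h | h
    · linarith
    · nlinarith [sq_nonneg (1 / 2 - ‖v'‖)]
  subst h5
  have h6 : ‖v‖ = ‖v'‖ := by linarith
  rw [h6, one_smul] at h1
  by_cases h7 : ‖v'‖ = 1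
  · exact Or.inr ⟨h6.trans h7, h7⟩
  · exact Or.inl (smul_right_injective _ (sub_ne_zero.2 (Ne.symm h7)) h1)

lemma wrap_surj {n : ℕ} (hn : 0 < n) {z : (Fin n → ℝ) × ℝ} (hz : ‖z‖ = 1) :
    ∃ v : Fin n → ℝ, ‖v‖ ≤ 1 ∧ ∃ l : ℝ, 0 < l ∧ wrap v = l • z := by
  obtain ⟨w, b⟩ := z
  rw [Prod.norm_mk] at hz
  have hw : ‖w‖ ≤ 1 := hz ▸ le_max_left _ _
  have hb : |b| ≤ 1 := hz ▸ le_max_right _ _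
  have hwb : 1 ≤ b ^ 2 + ‖w‖ := by
    rcases max_choice ‖w‖ ‖b‖ with h | h
    · rw [h] at hz; nlinarith [sq_nonneg b]
    · rw [h, Real.norm_eq_abs] at hz
      rw [← sq_abs, hz]; nlinarith [norm_nonneg w]
  have hcont : ContinuousOn (fun l : ℝ => l ^ 2 * b ^ 2 + l * ‖w‖) (Icc 0 1) := by fun_prop
  obtain ⟨l, ⟨hl0, -⟩, hl⟩ := intermediate_value_Icc zero_le_one hcont
    (show (1 / 4 : ℝ) ∈ Icc _ _ by constructor <;> norm_num; linarith)
  simp only at hl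
  have hlpos : 0 < l := hl0.lt_of_ne (by rintro rfl; norm_num at hl)
  -- `r` is the norm of the preimage
  set r := 1 / 2 - l * b with hr
  have hrr : r * (1 - r) = l * ‖w‖ := by rw [hr]; nlinarith
  have hnn : 0 ≤ l * ‖w‖ := by positivity
  have hr0 : 0 ≤ r := by nlinarith
  have hr1 : r ≤ 1 := by nlinarith
  rcases hr1.eq_or_lt with h1 | h1
  · have hw0 : w = 0 := by
      rw [h1] at hrr
      have : l * ‖w‖ = 0 := by linarith
      simpa [hlpos.ne'] using this
    have hv : ‖(fun _ : Fin n => (1 : ℝ))‖ = 1 := by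
      have : Nonempty (Fin n) := ⟨⟨0, hn⟩⟩
      simp
    refine ⟨fun _ => 1, hv.le, l, hlpos, ?_⟩
    rw [wrap, hv, hw0, Prod.smul_mk]
    simp only [sub_self, zero_smul, smul_zero, Prod.mk.injEq, true_and, smul_eq_mul]
    linarith
  · have h1' : 0 < 1 - r := by linarith
    have hv : ‖(l / (1 - r)) • w‖ = r := by
      rw [norm_smul, Real.norm_of_nonneg (by positivity), div_mul_eq_mul_div, ← hrr]
      field_simp
    refine ⟨(l / (1 - r)) • w, hv.le.trans hr1, l, hlpos, ?_⟩
    rw [wrap, hv, Prod.smul_mk, smul_smul, mul_div_cancel₀ _ h1'.ne', hr]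
    simp

/-- `wrap` normalised to the unit sphere. -/
def wrapDir {n : ℕ} (v : Fin n → ℝ) : (Fin n → ℝ) × ℝ := ‖wrap v‖⁻¹ • wrap v

lemma norm_wrapDir {n : ℕ} (v : Fin n → ℝ) : ‖wrapDir v‖ = 1 := by
  rw [wrapDir, norm_smul, norm_inv, norm_norm,
    inv_mul_cancel₀ (norm_ne_zero_iff.2 (wrap_ne_zero v))]

lemma continuous_wrapDir {n : ℕ} : Continuous (wrapDir (n := n)) :=
  (continuous_wrap.norm.inv₀ fun v => norm_ne_zero_iff.2 (wrap_ne_zero v)).smul continuous_wrap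

lemma wrapDir_inj {n : ℕ} {v v' : Fin n → ℝ} (hv : ‖v‖ ≤ 1) (hv' : ‖v'‖ ≤ 1)
    (h : wrapDir v = wrapDir v') : v = v' ∨ (‖v‖ = 1 ∧ ‖v'‖ = 1) := by
  have h0 : 0 < ‖wrap v‖ := norm_pos_iff.2 (wrap_ne_zero v)
  have h0' : 0 < ‖wrap v'‖ := norm_pos_iff.2 (wrap_ne_zero v')
  refine wrap_inj hv hv' (l := ‖wrap v‖ * ‖wrap v'‖⁻¹) (by positivity) ?_
  have := congrArg (fun z => ‖wrap v‖ • z) h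
  simp only [wrapDir, smul_smul] at this
  rwa [mul_inv_cancel₀ h0.ne', one_smul] at this

lemma wrapDir_surj {n : ℕ} (hn : 0 < n) {z : (Fin n → ℝ) × ℝ} (hz : ‖z‖ = 1) :
    ∃ v : Fin n → ℝ, ‖v‖ ≤ 1 ∧ wrapDir v = z := by
  obtain ⟨v, hv, l, hl, h⟩ := wrap_surj hn hz
  refine ⟨v, hv, ?_⟩
  rw [wrapDir, h, norm_smul, hz, Real.norm_of_nonneg hl.le, mul_one, smul_smul,
    inv_mul_cancel₀ hl.ne', one_smul]

lemma wrapDir_of_norm_eq_one {n : ℕ} {v : Fin n → ℝ} (hv : ‖v‖ = 1) : wrapDir v = (0, -1) := by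
  have hw : wrap v = (0, -(1 / 2)) := by rw [wrap, hv]; norm_num
  rw [wrapDir, hw, Prod.norm_mk]
  norm_num

/-- The affine map from the unit cube `Iⁿ` onto the unit ball of the sup norm. -/
def cubeToBall {n : ℕ} (y : Fin n → unitInterval) : Fin n → ℝ := fun i => 2 * (y i : ℝ) - 1

lemma continuous_cubeToBall {n : ℕ} : Continuous (cubeToBall (n := n)) := by
  unfold cubeToBall; fun_prop

lemma norm_cubeToBall_le {n : ℕ} (y : Fin n → unitInterval) : ‖cubeToBall y‖ ≤ 1 := by
  rw [pi_norm_le_iff_of_nonneg zero_le_one]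
  intro i
  rw [cubeToBall, Real.norm_eq_abs, abs_le]
  constructor <;> linarith [(y i).2.1, (y i).2.2]

lemma exists_apply_abs_eq_one {n : ℕ} {v : Fin n → ℝ} (hv : ‖v‖ = 1) : ∃ i, |v i| = 1 := by
  by_contra! hcon
  have : ‖v‖ < 1 := (pi_norm_lt_iff one_pos).2 fun i =>
    ((norm_le_pi_norm v i).trans hv.le).lt_of_ne (hcon i)
  exact this.ne hv

lemma norm_cubeToBall_eq_one_iff {n : ℕ} (y : Fin n → unitInterval) :
    ‖cubeToBall y‖ = 1 ↔ y ∈ Cube.boundary (Fin n) := by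
  constructor
  · intro h
    obtain ⟨i, hi⟩ := exists_apply_abs_eq_one h
    rw [cubeToBall] at hi
    refine ⟨i, ?_⟩
    rcases (abs_eq zero_le_one).1 hi with h | h
    · right; exact Subtype.ext (show (y i : ℝ) = 1 by linarith)
    · left; exact Subtype.ext (show (y i : ℝ) = 0 by linarith)
  · rintro ⟨i, hi⟩
    refine le_antisymm (norm_cubeToBall_le y) ?_
    have := norm_le_pi_norm (cubeToBall y) i
    rcases hi with hi | hi <;> · rw [cubeToBall, hi] at this; norm_num at this; exact this

lemma cubeToBall_injective {n : ℕ} : Injective (cubeToBall (n := n)) := by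
  intro y y' h
  funext i
  have := congrFun h i
  simp only [cubeToBall] at this
  ext; linarith

lemma cubeToBall_surj {n : ℕ} {v : Fin n → ℝ} (hv : ‖v‖ ≤ 1) : ∃ y, cubeToBall y = v := by
  have h : ∀ i, |v i| ≤ 1 := fun i => (norm_le_pi_norm v i).trans hv
  refine ⟨fun i => ⟨(v i + 1) / 2, ?_, ?_⟩, ?_⟩
  · have := (abs_le.1 (h i)).1; linarith
  · have := (abs_le.1 (h i)).2; linarith
  · funext i; simp only [cubeToBall]; ring

/-- If `π_n` vanishes at every base point, `n ≥ 1`, maps from the `n`-sphere extend to the ball: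
the ball is a quotient of `I × Iⁿ` through which any null homotopy rel boundary factors. -/
lemma sphere_extension_of_subsingleton {Y : Type*} [TopologicalSpace Y] {n : ℕ} (hn : 0 < n)
    (hπ : ∀ x : Y, Subsingleton (HomotopyGroup (Fin n) Y x))
    (f : C(sphere (0 : (Fin n → ℝ) × ℝ) 1, Y)) :
    ∃ G : C(closedBall (0 : (Fin n → ℝ) × ℝ) 1, Y),
      ∀ z (hz : z ∈ sphere (0 : (Fin n → ℝ) × ℝ) 1),
        G ⟨z, sphere_subset_closedBall hz⟩ = f ⟨z, hz⟩ := by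
  have hsph : ∀ v : Fin n → ℝ, wrapDir v ∈ sphere (0 : (Fin n → ℝ) × ℝ) 1 := fun v => by
    simp [norm_wrapDir]
  let x₀ : Y := f ⟨(0, -1), by simp [Prod.norm_mk]⟩
  let lp : C(Fin n → unitInterval, Y) :=
    f.comp ⟨fun y => ⟨wrapDir (cubeToBall y), hsph _⟩,
      (continuous_wrapDir.comp continuous_cubeToBall).subtype_mk _⟩
  have hlp : ∀ y ∈ Cube.boundary (Fin n), lp y = x₀ := by
    intro y hy
    have := wrapDir_of_norm_eq_one ((norm_cubeToBall_eq_one_iff y).2 hy)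
    simp only [lp, ContinuousMap.comp_apply, ContinuousMap.coe_mk, x₀]
    congr 2
  let γ : GenLoop (Fin n) Y x₀ := ⟨lp, hlp⟩
  have hh : GenLoop.Homotopic γ GenLoop.const := by
    have := hπ x₀
    exact Quotient.exact (s := GenLoop.Homotopic.setoid (Fin n) x₀)
      (@Subsingleton.elim (HomotopyGroup (Fin n) Y x₀) this _ _)
  obtain ⟨H⟩ := hh
  let q : unitInterval × (Fin n → unitInterval) → closedBall (0 : (Fin n → ℝ) × ℝ) 1 :=
    fun p => ⟨(1 - (p.1 : ℝ)) • wrapDir (cubeToBall p.2), by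
      rw [mem_closedBall_zero_iff, norm_smul, norm_wrapDir, mul_one, Real.norm_eq_abs, abs_le]
      constructor <;> linarith [p.1.2.1, p.1.2.2]⟩
  have hqc : Continuous q := by
    refine Continuous.subtype_mk ?_ _
    exact (by fun_prop : Continuous fun p : unitInterval × (Fin n → unitInterval) =>
      1 - (p.1 : ℝ)).smul ((continuous_wrapDir.comp continuous_cubeToBall).comp continuous_snd)
  have hsurj : ∀ z : (Fin n → ℝ) × ℝ, ‖z‖ = 1 → ∃ y, wrapDir (cubeToBall y) = z := by
    intro z hz
    obtain ⟨v, hv, rfl⟩ := wrapDir_surj hn hz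
    obtain ⟨y, rfl⟩ := cubeToBall_surj hv
    exact ⟨y, rfl⟩
  have hqs : Surjective q := by
    rintro ⟨z, hz⟩
    rw [mem_closedBall_zero_iff] at hz
    by_cases h0 : z = 0
    · refine ⟨(1, fun _ => 0), ?_⟩
      apply Subtype.ext
      simp [q, h0]
    · have h0' := norm_ne_zero_iff.2 h0
      obtain ⟨y, hy⟩ := hsurj (‖z‖⁻¹ • z) (by
        rw [norm_smul, norm_inv, norm_norm, inv_mul_cancel₀ h0'])
      refine ⟨(⟨1 - ‖z‖, by linarith, by linarith [norm_nonneg z]⟩, y), ?_⟩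
      apply Subtype.ext
      simp only [q, hy, smul_smul, sub_sub_cancel]
      rw [mul_inv_cancel₀ h0', one_smul]
  have hq : IsQuotientMap q := hqc.isClosedMap.isQuotientMap hqc hqs
  have hfac : FactorsThrough H.toContinuousMap q := by
    rintro ⟨t, y⟩ ⟨t', y'⟩ h
    have h1 : (1 - (t : ℝ)) • wrapDir (cubeToBall y)
        = (1 - (t' : ℝ)) • wrapDir (cubeToBall y') := congrArg Subtype.val h
    have h2 := congrArg norm h1
    rw [norm_smul, norm_smul, norm_wrapDir, norm_wrapDir, Real.norm_of_nonneg
      (by linarith [t.2.2]), Real.norm_of_nonneg (by linarith [t'.2.2])] at h2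
    have h3 : t = t' := by ext; linarith
    subst h3
    show H (t, y) = H (t, y')
    by_cases ht : t = 1
    · subst ht; rw [H.apply_one, H.apply_one]; rfl
    · have ht' : (1 - (t : ℝ)) ≠ 0 := fun h => ht (Subtype.ext (show (t : ℝ) = 1 by linarith))
      rcases wrapDir_inj (norm_cubeToBall_le y) (norm_cubeToBall_le y')
        (smul_right_injective _ ht' h1) with h | ⟨h, h'⟩
      · rw [cubeToBall_injective h]
      · rw [norm_cubeToBall_eq_one_iff] at h h'
        rw [H.eq_fst t h, H.eq_fst t h']
        exact (hlp y h).trans (hlp y' h').symm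
  refine ⟨IsQuotientMap.lift (f := ⟨q, hqc⟩) hq H.toContinuousMap hfac, fun z hz => ?_⟩
  obtain ⟨y, hy⟩ := hsurj z (by simpa using hz)
  have h1 : q (0, y) = ⟨z, sphere_subset_closedBall hz⟩ := by
    apply Subtype.ext; simp [q, hy]
  have h2 : IsQuotientMap.lift (f := ⟨q, hqc⟩) hq H.toContinuousMap hfac (q (0, y)) = H (0, y) :=
    congrArg (fun g => g (0, y)) (IsQuotientMap.lift_comp (f := ⟨q, hqc⟩) hq H.toContinuousMap hfac)
  rw [← h1, h2, H.apply_zero]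
  show lp y = _
  simp only [lp, ContinuousMap.comp_apply, ContinuousMap.coe_mk]
  congr 2

/-- Continuous maps into `M` defined on the unit sphere of `ℝᵈ` (sup norm) extend to the unit
ball, with values in `M`. -/
def SphereExt {E : Type*} [TopologicalSpace E] (M : Set E) (d : ℕ) : Prop :=
  ∀ f : (Fin d → ℝ) → E, ContinuousOn f (sphere 0 1) → MapsTo f (sphere 0 1) M →
    ∃ G : (Fin d → ℝ) → E, ContinuousOn G (closedBall 0 1) ∧ MapsTo G (closedBall 0 1) M ∧
      EqOn G f (sphere 0 1)

lemma sphereExt_zero {E : Type*} [TopologicalSpace E] {M : Set E} (hM : M.Nonempty) :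
    SphereExt M 0 := by
  intro f _ _
  obtain ⟨x, hx⟩ := hM
  refine ⟨fun _ => x, continuousOn_const, fun _ _ => hx, fun z hz => ?_⟩
  rw [mem_sphere_zero_iff_norm, Subsingleton.elim z 0, norm_zero] at hz
  norm_num at hz

lemma sphereExt_one {E : Type*} [TopologicalSpace E] {M : Set E}
    (hπ : ∀ x : M, Subsingleton (HomotopyGroup (Fin 0) M x)) : SphereExt M 1 := by
  intro f _ hfM
  have hs : ∀ s : ℝ, |s| = 1 → (fun _ : Fin 1 => s) ∈ sphere (0 : Fin 1 → ℝ) 1 := fun s hs => by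
    simp [hs]
  let x : M := ⟨f fun _ => -1, hfM (hs _ (by simp))⟩
  let y : M := ⟨f fun _ => 1, hfM (hs _ (by simp))⟩
  have hj : Joined x y := by
    have := hπ x
    have h2 : Subsingleton (ZerothHomotopy M) :=
      (HomotopyGroup.pi0EquivZerothHomotopy (X := M) (x := x)).symm.injective.subsingleton
    exact Quotient.exact (Subsingleton.elim (α := ZerothHomotopy M) ⟦x⟧ ⟦y⟧)
  obtain ⟨γ⟩ := hj
  refine ⟨fun z => (γ.extend ((z 0 + 1) / 2) : M), ?_, fun z _ => (γ.extend _).2, fun z hz => ?_⟩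
  · exact (continuous_subtype_val.comp (γ.continuous_extend.comp (by fun_prop))).continuousOn
  · rw [mem_sphere_zero_iff_norm] at hz
    have h0 : |z 0| = 1 := by
      rw [← hz]
      refine le_antisymm (norm_le_pi_norm z 0) ?_
      rw [pi_norm_le_iff_of_nonneg (abs_nonneg _)]
      intro i; rw [Subsingleton.elim i 0]; exact le_rfl
    have hzc : z = fun _ => z 0 := by funext i; rw [Subsingleton.elim i 0]
    rcases (abs_eq zero_le_one).1 h0 with h | h
    · rw [h] at hzc
      simp only [h]
      norm_num
      rw [hzc]
    · rw [h] at hzc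
      simp only [h]
      norm_num
      rw [hzc]

lemma sphereExt_succ {E : Type*} [TopologicalSpace E] {M : Set E} {n : ℕ} (hn : 0 < n)
    (hπ : ∀ x : M, Subsingleton (HomotopyGroup (Fin n) M x)) : SphereExt M (n + 1) := by
  intro f hf hfM
  -- the sup norm isometry `ℝⁿ⁺¹ ≃ ℝⁿ × ℝ`
  let e : (Fin (n + 1) → ℝ) → (Fin n → ℝ) × ℝ := fun z => (fun i => z i.succ, z 0)
  let e' : (Fin n → ℝ) × ℝ → (Fin (n + 1) → ℝ) := fun p => Fin.cons p.2 p.1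
  have hee : ∀ z, e' (e z) = z := fun z => by
    funext i; refine Fin.cases ?_ (fun i => ?_) i <;> simp [e, e']
  have hee' : ∀ p, e (e' p) = p := fun p => by simp [e, e']
  have hne : ∀ z, ‖e z‖ = ‖z‖ := fun z => by
    apply le_antisymm
    · rw [Prod.norm_def]
      refine max_le ?_ (norm_le_pi_norm z 0)
      rw [pi_norm_le_iff_of_nonneg (norm_nonneg _)]
      exact fun i => norm_le_pi_norm z i.succ
    · rw [pi_norm_le_iff_of_nonneg (norm_nonneg _)]
      intro i
      refine Fin.cases ?_ (fun i => ?_) i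
      · exact norm_snd_le (e z)
      · exact (norm_le_pi_norm (e z).1 i).trans (norm_fst_le (e z))
  have hne' : ∀ p, ‖e' p‖ = ‖p‖ := fun p => by rw [← hne, hee']
  have hec : Continuous e := by fun_prop
  have hec' : Continuous e' := by
    refine continuous_pi fun i => ?_
    refine Fin.cases ?_ (fun i => ?_) i
    · exact continuous_snd
    · exact (continuous_apply i).comp continuous_fst
  let F : C(sphere (0 : (Fin n → ℝ) × ℝ) 1, M) :=
    ⟨fun p => ⟨f (e' p), hfM (by simp [hne'])⟩, by
      refine Continuous.subtype_mk ?_ _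
      exact hf.comp_continuous (hec'.comp continuous_subtype_val)
        (fun p => by simp [hne'])⟩
  obtain ⟨G, hG⟩ := sphere_extension_of_subsingleton hn hπ F
  obtain ⟨x, hx⟩ : M.Nonempty := ⟨_, (F ⟨(0, 1), by simp [Prod.norm_mk]⟩).2⟩
  classical
  refine ⟨fun z => if h : e z ∈ closedBall (0 : (Fin n → ℝ) × ℝ) 1 then (G ⟨e z, h⟩ : E) else x,
    ?_, ?_, ?_⟩
  · rw [continuousOn_iff_continuous_domRestrict]
    have hmem : ∀ z : closedBall (0 : Fin (n + 1) → ℝ) 1,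
        e z ∈ closedBall (0 : (Fin n → ℝ) × ℝ) 1 := fun z => by
      have := z.2
      rw [mem_closedBall_zero_iff] at this ⊢
      rwa [hne]
    have : ((closedBall (0 : Fin (n + 1) → ℝ) 1).domRestrict fun z =>
        if h : e z ∈ closedBall (0 : (Fin n → ℝ) × ℝ) 1 then (G ⟨e z, h⟩ : E) else x)
        = fun z : closedBall (0 : Fin (n + 1) → ℝ) 1 => (G ⟨e z, hmem z⟩ : E) := by
      funext z; exact dif_pos (hmem z)
    rw [this]
    exact continuous_subtype_val.comp (G.continuous.comp
      ((hec.comp continuous_subtype_val).subtype_mk _))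
  · intro z hz
    have : e z ∈ closedBall (0 : (Fin n → ℝ) × ℝ) 1 := by simpa [hne] using hz
    simp only [dif_pos this]
    exact (G _).2
  · intro z hz
    have h1 : e z ∈ sphere (0 : (Fin n → ℝ) × ℝ) 1 := by simpa [hne] using hz
    simp only [dif_pos (sphere_subset_closedBall h1), hG _ h1]
    show f (e' (e z)) = f z
    rw [hee]

lemma sphereExt_of_connected {E : Type*} [TopologicalSpace E] {M : Set E} (hne : M.Nonempty)
    {j : ℕ} (hπ : ∀ i ≤ j, ∀ x : M, Subsingleton (HomotopyGroup (Fin i) M x)) :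
    ∀ d ≤ j + 1, SphereExt M d := by
  intro d hd
  match d with
  | 0 => exact sphereExt_zero hne
  | 1 => exact sphereExt_one (hπ 0 (by omega))
  | n + 2 => exact sphereExt_succ (Nat.succ_pos n) (hπ (n + 1) (by omega))

/-! ### Extending maps over skeleta of the integer grid -/

/-- The closed cell of the integer grid of `ℝ^N` with base vertex `c`, extended by one unit in
the directions belonging to `D`. -/
def gridCell {N : ℕ} (c : Fin N → ℤ) (D : Finset (Fin N)) : Set (Fin N → ℝ) :=
  {x | ∀ i, if i ∈ D then (c i : ℝ) ≤ x i ∧ x i ≤ c i + 1 else x i = c i}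

/-- The indices of the coordinates of `x` that are not integers. -/
def nonint {N : ℕ} (x : Fin N → ℝ) : Finset (Fin N) :=
  Finset.univ.filter fun i => (⌊x i⌋ : ℝ) ≠ x i

/-- The points with fewer than `d` non-integer coordinates, that is, the `(d - 1)`-skeleton of the
integer grid (empty for `d = 0`). -/
def skel (N d : ℕ) : Set (Fin N → ℝ) := {x | (nonint x).card < d}

/-- The smallest closed grid cell containing `x`. -/
def cellOf {N : ℕ} (x : Fin N → ℝ) : Set (Fin N → ℝ) := gridCell (fun i => ⌊x i⌋) (nonint x)

lemma not_mem_nonint {N : ℕ} {x : Fin N → ℝ} {i : Fin N} : i ∉ nonint x ↔ (⌊x i⌋ : ℝ) = x i := by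
  simp [nonint]

lemma nonint_subset {N : ℕ} {c : Fin N → ℤ} {D : Finset (Fin N)} {x : Fin N → ℝ}
    (hx : x ∈ gridCell c D) : nonint x ⊆ D := by
  intro i hi
  by_contra h
  have := hx i
  rw [if_neg h] at this
  exact not_mem_nonint.2 (by rw [this, Int.floor_intCast]) hi

lemma floor_eq_of_mem_nonint {N : ℕ} {c : Fin N → ℤ} {D : Finset (Fin N)} {x : Fin N → ℝ}
    (hx : x ∈ gridCell c D) {i : Fin N} (hi : i ∈ nonint x) : ⌊x i⌋ = c i := by
  have h := hx i
  rw [if_pos (nonint_subset hx hi)] at h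
  refine Int.floor_eq_iff.2 ⟨h.1, h.2.lt_of_ne fun h' => not_mem_nonint.2 ?_ hi⟩
  have : x i = ((c i + 1 : ℤ) : ℝ) := by rw [h']; push_cast; ring
  rw [this, Int.floor_intCast]

lemma floor_eq_of_not_mem {N : ℕ} {c : Fin N → ℤ} {D : Finset (Fin N)} {x : Fin N → ℝ}
    (hx : x ∈ gridCell c D) {i : Fin N} (hi : i ∉ D) : ⌊x i⌋ = c i := by
  have h := hx i
  rw [if_neg hi] at h
  rw [h, Int.floor_intCast]

lemma cellOf_subset {N : ℕ} {c : Fin N → ℤ} {D : Finset (Fin N)} {x : Fin N → ℝ}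
    (hx : x ∈ gridCell c D) : cellOf x ⊆ gridCell c D := by
  intro y hy i
  have hyi := hy i
  by_cases hi : i ∈ nonint x
  · rw [if_pos hi] at hyi
    simp only [floor_eq_of_mem_nonint hx hi] at hyi
    rwa [if_pos (nonint_subset hx hi)]
  · rw [if_neg hi, not_mem_nonint.1 hi] at hyi
    rw [hyi]; exact hx i

lemma mem_cellOf {N : ℕ} (x : Fin N → ℝ) : x ∈ cellOf x := by
  intro i
  split_ifs with h
  · exact ⟨Int.floor_le _, (Int.lt_floor_add_one _).le⟩
  · exact (not_mem_nonint.1 h).symm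

lemma isClosed_gridCell {N : ℕ} (c : Fin N → ℤ) (D : Finset (Fin N)) :
    IsClosed (gridCell c D) := by
  rw [gridCell, ofPred_forall]
  refine isClosed_iInter fun i => ?_
  split_ifs with h
  · exact (isClosed_le continuous_const (continuous_apply i)).inter
      (isClosed_le (continuous_apply i) continuous_const)
  · exact isClosed_eq (continuous_apply i) continuous_const

lemma locallyFinite_gridCell {N : ℕ} (P : (Fin N → ℤ) × Finset (Fin N) → Prop) :
    LocallyFinite fun σ : {p // P p} => gridCell σ.1.1 σ.1.2 := by
  intro x
  refine ⟨ball x 1, ball_mem_nhds x one_pos, ?_⟩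
  refine Finite.subset (Finite.preimage Subtype.val_injective.injOn
    (((Set.Finite.pi' fun i => Set.finite_Icc (⌊x i⌋ - 3) (⌊x i⌋ + 3)).prod
      (Set.finite_univ (α := Finset (Fin N)))))) ?_
  rintro ⟨⟨c, D⟩, hP⟩ ⟨y, hy, hyx⟩
  refine ⟨fun i => ?_, mem_univ _⟩
  have h1 := (dist_pi_lt_iff one_pos).1 (mem_ball.1 hyx) i
  rw [Real.dist_eq, abs_lt] at h1
  have h2 : (c i : ℝ) ≤ y i ∧ y i ≤ c i + 1 := by
    have := hy i
    dsimp only at this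
    split_ifs at this
    · exact this
    · rw [this]; constructor <;> linarith
  have h3 := Int.floor_le (x i)
  have h4 := Int.lt_floor_add_one (x i)
  show ⌊x i⌋ - 3 ≤ c i ∧ c i ≤ ⌊x i⌋ + 3
  constructor
  · have : ((⌊x i⌋ - 3 : ℤ) : ℝ) ≤ c i := by push_cast; linarith [h2.1, h2.2]
    exact_mod_cast this
  · have : (c i : ℝ) ≤ ((⌊x i⌋ + 3 : ℤ) : ℝ) := by push_cast; linarith [h2.1, h2.2]
    exact_mod_cast this

/-- A map defined on the boundary of a `d`-cell extends over the cell when the target has the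
extension property for the `(d - 1)`-sphere. -/
lemma exists_cell_extension {N d : ℕ} {E : Type*} [TopologicalSpace E] {M : Set E}
    (hS : SphereExt M d) {g : (Fin N → ℝ) → E} (hg : ContinuousOn g (skel N d))
    (hgM : MapsTo g (skel N d) M) (c : Fin N → ℤ) {D : Finset (Fin N)} (hD : D.card = d) :
    ∃ G : (Fin N → ℝ) → E, ContinuousOn G (gridCell c D) ∧ MapsTo G (gridCell c D) M ∧
      EqOn G g (gridCell c D ∩ skel N d) := by
  let e : D ≃ Fin d := D.equivFinOfCardEq hD
  let P : (Fin d → ℝ) → (Fin N → ℝ) := fun v i =>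
    if h : i ∈ D then (c i : ℝ) + (v (e ⟨i, h⟩) + 1) / 2 else c i
  let π : (Fin N → ℝ) → (Fin d → ℝ) := fun x k => 2 * (x (e.symm k) - c (e.symm k)) - 1
  have hP : Continuous P := by
    refine continuous_pi fun i => ?_
    by_cases h : i ∈ D
    · simp only [P, dif_pos h]; fun_prop
    · simp only [P, dif_neg h]; fun_prop
  have hπ : Continuous π := by
    refine continuous_pi fun k => ?_
    simp only [π]; fun_prop
  have hPcell : ∀ v, ‖v‖ ≤ 1 → P v ∈ gridCell c D := by
    intro v hv i
    by_cases h : i ∈ D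
    · simp only [P, dif_pos h, if_pos h]
      have := abs_le.1 ((norm_le_pi_norm v (e ⟨i, h⟩)).trans hv)
      constructor <;> linarith [this.1, this.2]
    · simp only [P, dif_neg h, if_neg h]
  have hPskel : MapsTo P (sphere 0 1) (skel N d) := by
    intro v hv
    rw [mem_sphere_zero_iff_norm] at hv
    obtain ⟨k, hk⟩ := exists_apply_abs_eq_one hv
    show (nonint (P v)).card < d
    rw [← hD]
    refine Finset.card_lt_card ((Finset.ssubset_iff_of_subset
      (nonint_subset (hPcell v hv.le))).2 ⟨(e.symm k).1, (e.symm k).2, not_mem_nonint.2 ?_⟩)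
    have : P v (e.symm k) = c (e.symm k) + (v k + 1) / 2 := by
      simp only [P, dif_pos (e.symm k).2, Subtype.coe_eta, Equiv.apply_symm_apply]
    rcases (abs_eq zero_le_one).1 hk with h | h
    · have h2 : P v (e.symm k) = ((c (e.symm k) + 1 : ℤ) : ℝ) := by
        rw [this, h]; push_cast; ring
      rw [h2, Int.floor_intCast]
    · have h2 : P v (e.symm k) = ((c (e.symm k) : ℤ) : ℝ) := by
        rw [this, h]; ring
      rw [h2, Int.floor_intCast]
  have hπball : MapsTo π (gridCell c D) (closedBall 0 1) := by
    intro x hx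
    rw [mem_closedBall_zero_iff, pi_norm_le_iff_of_nonneg zero_le_one]
    intro k
    have := hx (e.symm k)
    rw [if_pos (e.symm k).2] at this
    rw [Real.norm_eq_abs, abs_le]
    constructor <;> simp only [π] <;> linarith [this.1, this.2]
  have hPπ : ∀ x ∈ gridCell c D, P (π x) = x := by
    intro x hx
    funext i
    by_cases h : i ∈ D
    · simp only [P, π, dif_pos h, Equiv.symm_apply_apply]; ring
    · have := hx i
      rw [if_neg h] at this
      simp only [P, dif_neg h, this]
  have hπsph : MapsTo π (gridCell c D ∩ skel N d) (sphere 0 1) := by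
    rintro x ⟨hx, hxs⟩
    rw [mem_sphere_zero_iff_norm]
    refine le_antisymm (mem_closedBall_zero_iff.1 (hπball hx)) ?_
    have hne : ∃ i ∈ D, i ∉ nonint x := by
      by_contra! hcon
      have := Finset.card_le_card (show D ⊆ nonint x from hcon)
      have hxs' : (nonint x).card < d := hxs
      omega
    obtain ⟨i, hiD, hi⟩ := hne
    have hxi := hx i
    rw [if_pos hiD, ← not_mem_nonint.1 hi] at hxi
    have h1 : c i ≤ ⌊x i⌋ := by exact_mod_cast hxi.1
    have h2 : ⌊x i⌋ ≤ c i + 1 := by exact_mod_cast hxi.2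
    have h3 : ‖π x (e ⟨i, hiD⟩)‖ = 1 := by
      simp only [π, Equiv.symm_apply_apply]
      rw [← not_mem_nonint.1 hi]
      rcases (show ⌊x i⌋ = c i ∨ ⌊x i⌋ = c i + 1 by omega) with h | h
      · rw [h]; norm_num
      · rw [h]; push_cast; norm_num
    exact h3 ▸ norm_le_pi_norm (π x) _
  obtain ⟨G, hG, hGM, hGeq⟩ := hS (g ∘ P) (hg.comp hP.continuousOn hPskel) (hgM.comp hPskel)
  refine ⟨G ∘ π, hG.comp hπ.continuousOn hπball, hGM.comp hπball, fun x hx => ?_⟩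
  rw [comp_apply, hGeq (hπsph hx), comp_apply, hPπ x hx.1]

/-- Cell-by-cell extension: a map `ρ` into `M` given on a set `O` is extended to the
`k`-skeleton, keeping its values on the cells contained in `O`. -/
lemma exists_skel_extension {N k : ℕ} {E : Type*} [TopologicalSpace E] {M : Set E}
    (hS : ∀ d ≤ k, SphereExt M d) {O : Set (Fin N → ℝ)} {ρ : (Fin N → ℝ) → E}
    (hρ : ContinuousOn ρ O) (hρM : MapsTo ρ O M) :
    ∀ d ≤ k + 1, ∃ g : (Fin N → ℝ) → E, ContinuousOn g (skel N d) ∧ MapsTo g (skel N d) M ∧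
      ∀ x ∈ skel N d, cellOf x ⊆ O → g x = ρ x := by
  intro d
  induction d with
  | zero =>
    intro _
    have h0 : skel N 0 = ∅ := by ext x; simp [skel]
    exact ⟨ρ, by rw [h0]; exact continuousOn_empty _, by rw [h0]; exact mapsTo_empty _ _,
      fun _ _ _ => rfl⟩
  | succ d ih =>
    intro hd
    obtain ⟨g, hg, hgM, hgρ⟩ := ih (by omega)
    have key : ∀ (c : Fin N → ℤ) (D : Finset (Fin N)), ∃ G : (Fin N → ℝ) → E, D.card = d →
        ContinuousOn G (gridCell c D) ∧ MapsTo G (gridCell c D) M ∧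
        EqOn G g (gridCell c D ∩ skel N d) ∧ (gridCell c D ⊆ O → EqOn G ρ (gridCell c D)) := by
      intro c D
      by_cases hD : D.card = d
      swap
      · exact ⟨ρ, fun h => absurd h hD⟩
      by_cases hO : gridCell c D ⊆ O
      · exact ⟨ρ, fun _ => ⟨hρ.mono hO, hρM.mono_left hO,
          fun x hx => (hgρ x hx.2 ((cellOf_subset hx.1).trans hO)).symm, fun _ _ _ => rfl⟩⟩
      · obtain ⟨G, h1, h2, h3⟩ := exists_cell_extension (hS d (by omega)) hg hgM c hD
        exact ⟨G, fun _ => ⟨h1, h2, h3, fun h => absurd h hO⟩⟩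
    choose G hG using key
    classical
    let g' : (Fin N → ℝ) → E := fun x =>
      if x ∈ skel N d then g x else G (fun i => ⌊x i⌋) (nonint x) x
    have hcard : ∀ x ∈ skel N (d + 1), x ∉ skel N d → (nonint x).card = d := by
      intro x hx hx'
      have h1 : (nonint x).card < d + 1 := hx
      have h2 : ¬ (nonint x).card < d := hx'
      omega
    refine ⟨g', ?_, ?_, ?_⟩
    · have hU : skel N (d + 1) ⊆ ⋃ σ : {p : (Fin N → ℤ) × Finset (Fin N) // p.2.card < d + 1},
          gridCell σ.1.1 σ.1.2 := fun x hx =>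
        mem_iUnion.2 ⟨⟨(fun i => ⌊x i⌋, nonint x), hx⟩, mem_cellOf x⟩
      refine ContinuousOn.mono ?_ hU
      refine (locallyFinite_gridCell _).continuousOn_iUnion
        (fun σ => isClosed_gridCell _ _) ?_
      rintro ⟨⟨c, D⟩, hD⟩
      dsimp only at hD ⊢
      rcases Nat.lt_succ_iff_lt_or_eq.1 hD with h | h
      · have hsub : gridCell c D ⊆ skel N d := fun x hx =>
          (Finset.card_le_card (nonint_subset hx)).trans_lt h
        exact (hg.mono hsub).congr fun x hx => if_pos (hsub hx)
      · obtain ⟨h1, h2, h3, h4⟩ := hG c D h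
        refine h1.congr fun x hx => ?_
        by_cases hxs : x ∈ skel N d
        · rw [h3 ⟨hx, hxs⟩]; exact if_pos hxs
        · have hD' : nonint x = D := by
            refine Finset.eq_of_subset_of_card_le (nonint_subset hx) ?_
            have : ¬ (nonint x).card < d := hxs
            omega
          have hc' : (fun i => ⌊x i⌋) = c := by
            funext i
            by_cases hi : i ∈ D
            · exact floor_eq_of_mem_nonint hx (hD' ▸ hi)
            · exact floor_eq_of_not_mem hx hi
          simp only [g', if_neg hxs, hD', hc']
    · intro x hx
      by_cases hxs : x ∈ skel N d
      · simp only [g', if_pos hxs]; exact hgM hxs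
      · simp only [g', if_neg hxs]
        exact (hG _ _ (hcard x hx hxs)).2.1 (mem_cellOf x)
    · intro x hx hO
      by_cases hxs : x ∈ skel N d
      · simp only [g', if_pos hxs]; exact hgρ x hxs hO
      · simp only [g', if_neg hxs]
        exact (hG _ _ (hcard x hx hxs)).2.2.2 hO (mem_cellOf x)

/-! ### An explicit retraction onto a skeleton -/

/-- The sawtooth function, equal to `1` at the integers and to `0` at the half-integers. -/
def saw (x : ℝ) : ℝ := 1 - 2 * |x - round x|

lemma saw_eq (x : ℝ) : saw x = |2 * Int.fract x - 1| := by
  rw [saw, abs_sub_round_eq_min]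
  rcases le_total (Int.fract x) (1 - Int.fract x) with h | h
  · rw [min_eq_left h, abs_of_nonpos (by linarith)]; ring
  · rw [min_eq_right h, abs_of_nonneg (by linarith)]; ring

lemma saw_nonneg (x : ℝ) : 0 ≤ saw x := by rw [saw_eq]; exact abs_nonneg _

lemma saw_le_one (x : ℝ) : saw x ≤ 1 := by
  have := abs_nonneg (x - round x); rw [saw]; linarith

lemma abs_saw_sub_le (x y : ℝ) : |saw x - saw y| ≤ 2 * |x - y| := by
  have h : ∀ x y : ℝ, |x - round x| ≤ |x - y| + |y - round y| := fun x y =>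
    (round_le x (round y)).trans (abs_sub_le _ _ _)
  have h1 := h x y
  have h2 := h y x
  rw [abs_sub_comm y x] at h2
  rw [abs_le, saw, saw]
  constructor <;> linarith

lemma saw_half (n : ℤ) : saw (n + 1 / 2) = 0 := by
  rw [saw_eq, Int.fract_intCast_add, Int.fract_eq_self.2 (by norm_num)]; norm_num

lemma fract_eq_half_of_saw {x : ℝ} (h : saw x = 0) : x = ⌊x⌋ + 1 / 2 := by
  rw [saw_eq, abs_eq_zero] at h
  have := Int.floor_add_fract x
  linarith

/-- Truncation of a real number to the interval `[-1/2, 1/2]`. -/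
def clip (z : ℝ) : ℝ := max (-1 / 2) (min (1 / 2) z)

lemma abs_clip_sub_le (z w : ℝ) : |clip z - clip w| ≤ |z - w| := by
  have h1 := abs_max_sub_max_le_max (-1 / 2) (min (1 / 2) z) (-1 / 2) (min (1 / 2) w)
  have h2 := abs_min_sub_min_le_max (1 / 2) z (1 / 2) w
  simp only [sub_self, abs_zero, abs_nonneg, max_eq_right] at h1 h2
  exact h1.trans h2

lemma clip_of_le {z : ℝ} (h : z ≤ -1 / 2) : clip z = -1 / 2 := by
  rw [clip, min_eq_right (by linarith), max_eq_left h]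

lemma clip_of_ge {z : ℝ} (h : 1 / 2 ≤ z) : clip z = 1 / 2 := by
  rw [clip, min_eq_left h, max_eq_right (by norm_num)]

lemma clip_of_abs_le {z : ℝ} (h : |z| ≤ 1 / 2) : clip z = z := by
  rw [abs_le] at h
  rw [clip, min_eq_right h.2, max_eq_right (by linarith)]

lemma neg_half_le_clip (z : ℝ) : -1 / 2 ≤ clip z := le_max_left _ _

lemma clip_le_half (z : ℝ) : clip z ≤ 1 / 2 := max_le (by norm_num) (min_le_left _ _)

/-- For `0 < τ ≤ 1`: on each unit interval, the dilation by `1 / τ` about the midpoint followed by truncation to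
the interval. -/
def squeeze (τ x : ℝ) : ℝ := ⌊x⌋ + 1 / 2 + clip ((Int.fract x - 1 / 2) / τ)

lemma floor_le_squeeze (τ x : ℝ) : (⌊x⌋ : ℝ) ≤ squeeze τ x := by
  have := neg_half_le_clip ((Int.fract x - 1 / 2) / τ); rw [squeeze]; linarith

lemma squeeze_le (τ x : ℝ) : squeeze τ x ≤ ⌊x⌋ + 1 := by
  have := clip_le_half ((Int.fract x - 1 / 2) / τ); rw [squeeze]; linarith

lemma squeeze_one (x : ℝ) : squeeze 1 x = x := by
  have h0 := Int.fract_nonneg x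
  have h1 := Int.fract_lt_one x
  rw [squeeze, div_one, clip_of_abs_le (abs_le.2 ⟨by linarith, by linarith⟩)]
  linarith [Int.floor_add_fract x]

/-- On the closed interval `[n, n + 1]`, `squeeze` is given by a single formula, also at the right
end point. -/
lemma squeeze_eq {τ x : ℝ} (hτ : 0 < τ) (hτ1 : τ ≤ 1) {n : ℤ} (h0 : (n : ℝ) ≤ x)
    (h1 : x ≤ n + 1) : squeeze τ x = n + 1 / 2 + clip ((x - n - 1 / 2) / τ) := by
  have hhalf : 1 / 2 ≤ 1 / 2 / τ := by rw [le_div_iff₀ hτ]; linarith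
  rcases h1.lt_or_eq with h | h
  · have hf : ⌊x⌋ = n := Int.floor_eq_iff.2 ⟨h0, h⟩
    rw [squeeze, Int.fract, hf]
  · have hx : x = ((n + 1 : ℤ) : ℝ) := by rw [h]; push_cast; ring
    have e1 : clip ((Int.fract x - 1 / 2) / τ) = -1 / 2 := by
      refine clip_of_le ?_
      rw [hx, Int.fract_intCast, show ((0 : ℝ) - 1 / 2) / τ = -(1 / 2 / τ) by ring]; linarith
    have e2 : clip ((x - n - 1 / 2) / τ) = 1 / 2 := by
      refine clip_of_ge ?_
      rw [h, show ((n : ℝ) + 1 - n - 1 / 2) / τ = 1 / 2 / τ by ring]; exact hhalf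
    rw [squeeze, e1, e2, hx, Int.floor_intCast]; push_cast; ring

lemma squeeze_intCast {τ : ℝ} (hτ : 0 < τ) (hτ1 : τ ≤ 1) (n : ℤ) : squeeze τ n = n := by
  rw [squeeze_eq hτ hτ1 (n := n) le_rfl (by linarith), clip_of_le]
  · ring
  · have : 1 / 2 ≤ 1 / 2 / τ := by rw [le_div_iff₀ hτ]; linarith
    rw [show ((n : ℝ) - n - 1 / 2) / τ = -(1 / 2 / τ) by ring]; linarith

lemma abs_squeeze_sub_le_of_cell {τ x y : ℝ} (hτ : 0 < τ) (hτ1 : τ ≤ 1) {n : ℤ} (hx0 : (n : ℝ) ≤ x)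
    (hx1 : x ≤ n + 1) (hy0 : (n : ℝ) ≤ y) (hy1 : y ≤ n + 1) :
    |squeeze τ x - squeeze τ y| ≤ |x - y| / τ := by
  rw [squeeze_eq hτ hτ1 hx0 hx1, squeeze_eq hτ hτ1 hy0 hy1, add_sub_add_left_eq_sub]
  refine (abs_clip_sub_le _ _).trans_eq ?_
  rw [← sub_div, abs_div, abs_of_pos hτ]
  congr 2; ring

lemma abs_squeeze_sub_le {τ : ℝ} (hτ : 0 < τ) (hτ1 : τ ≤ 1) (x y : ℝ) :
    |squeeze τ x - squeeze τ y| ≤ |x - y| / τ := by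
  wlog hxy : x ≤ y generalizing x y
  · rw [abs_sub_comm, abs_sub_comm x y]; exact this y x (le_of_not_ge hxy)
  have hx0 := Int.floor_le x
  have hx1 := Int.lt_floor_add_one x
  have hy0 := Int.floor_le y
  have hy1 := Int.lt_floor_add_one y
  rcases (Int.floor_le_floor hxy).eq_or_lt with h | h
  · exact abs_squeeze_sub_le_of_cell hτ hτ1 hx0 hx1.le (h ▸ hy0) (by rw [h]; exact hy1.le)
  -- Different unit intervals: chain through the integers separating `x` from `y`.
  have hpq : ((⌊x⌋ + 1 : ℤ) : ℝ) ≤ ⌊y⌋ := by exact_mod_cast h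
  have a1 := abs_squeeze_sub_le_of_cell hτ hτ1 hx0 hx1.le (y := ((⌊x⌋ + 1 : ℤ) : ℝ))
    (by push_cast; linarith) (by push_cast; linarith)
  have a2 := abs_squeeze_sub_le_of_cell hτ hτ1 (y := y) (x := (⌊y⌋ : ℝ)) (n := ⌊y⌋) le_rfl
    (by linarith) hy0 hy1.le
  rw [squeeze_intCast hτ hτ1] at a1 a2
  have a3 : ((⌊y⌋ : ℝ) - (⌊x⌋ + 1 : ℤ)) ≤ ((⌊y⌋ : ℝ) - (⌊x⌋ + 1 : ℤ)) / τ := by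
    rw [le_div_iff₀ hτ]; nlinarith
  rw [abs_sub_comm x, abs_of_nonneg (by push_cast; linarith : 0 ≤ ((⌊x⌋ + 1 : ℤ) : ℝ) - x)] at a1
  rw [abs_sub_comm _ y, abs_of_nonneg (by linarith : 0 ≤ y - (⌊y⌋ : ℝ))] at a2
  rw [abs_sub_comm x, abs_of_nonneg (by linarith : 0 ≤ y - x)]
  have : (y - x) / τ = (((⌊x⌋ + 1 : ℤ) : ℝ) - x) / τ + ((⌊y⌋ : ℝ) - (⌊x⌋ + 1 : ℤ)) / τ
      + (y - ⌊y⌋) / τ := by ring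
  rw [this]
  rw [abs_le] at a1 a2 ⊢
  constructor <;> linarith [a1.1, a1.2, a2.1, a2.2]

lemma abs_squeeze_sub_le_param {b τ τ' : ℝ} (hb : 0 < b) (hτ : b ≤ τ) (hτ' : b ≤ τ') (x : ℝ) :
    |squeeze τ x - squeeze τ' x| ≤ |τ - τ'| / b := by
  wlog h : τ ≤ τ' generalizing τ τ'
  · rw [abs_sub_comm, abs_sub_comm τ τ']; exact this hτ' hτ (le_of_not_ge h)
  have hp : 0 < τ := by linarith
  have hp' : 0 < τ' := by linarith
  rw [squeeze, squeeze, add_sub_add_left_eq_sub]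
  set z := Int.fract x - 1 / 2 with hz
  by_cases hzb : |z| ≤ τ' / 2
  · refine (abs_clip_sub_le _ _).trans ?_
    have e : z / τ - z / τ' = z / τ' * ((τ' - τ) / τ) := by field_simp
    rw [e, abs_mul, abs_div z, abs_of_pos hp', abs_div, abs_of_pos hp, abs_sub_comm τ']
    have h1 : |z| / τ' ≤ 1 := by rw [div_le_one hp']; linarith
    have h2 : |τ - τ'| / τ ≤ |τ - τ'| / b := by gcongr
    have h3 : 0 ≤ |τ - τ'| / τ := by positivity
    nlinarith
  · have h0 : 0 ≤ |τ - τ'| / b := by positivity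
    push Not at hzb
    have aux : ∀ σ, 0 < σ → σ ≤ τ' → (0 ≤ z → clip (z / σ) = 1 / 2) ∧
        (z ≤ 0 → clip (z / σ) = -1 / 2) := by
      intro σ hσ hσ'
      refine ⟨fun hz0 => clip_of_ge ?_, fun hz0 => clip_of_le ?_⟩
      · rw [abs_of_nonneg hz0] at hzb
        rw [le_div_iff₀ hσ]; linarith
      · rw [abs_of_nonpos hz0] at hzb
        rw [div_le_iff₀ hσ]; linarith
    rcases le_total 0 z with hz0 | hz0
    · rw [(aux τ hp h).1 hz0, (aux τ' hp' le_rfl).1 hz0]; simpa using h0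
    · rw [(aux τ hp h).2 hz0, (aux τ' hp' le_rfl).2 hz0]; simpa using h0

lemma abs_squeeze_sub_le_both {b τ τ' : ℝ} (hb : 0 < b) (hτ : b ≤ τ) (hτ' : b ≤ τ')
    (hτ1 : τ ≤ 1) (x y : ℝ) :
    |squeeze τ x - squeeze τ' y| ≤ (|x - y| + |τ - τ'|) / b := by
  have h1 := abs_squeeze_sub_le (hb.trans_le hτ) hτ1 x y
  have h2 := abs_squeeze_sub_le_param hb hτ hτ' y
  have h3 : |x - y| / τ ≤ |x - y| / b := by gcongr
  calc _ ≤ |squeeze τ x - squeeze τ y| + |squeeze τ y - squeeze τ' y| := abs_sub_le _ _ _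
    _ ≤ _ := by rw [add_div]; linarith

lemma squeeze_int_of_saw {τ x : ℝ} (hτ : 0 < τ) (h : τ ≤ saw x) :
    (⌊squeeze τ x⌋ : ℝ) = squeeze τ x := by
  have key : squeeze τ x = ((⌊x⌋ : ℤ) : ℝ) ∨ squeeze τ x = ((⌊x⌋ + 1 : ℤ) : ℝ) := by
    rw [saw_eq] at h
    rcases le_total 0 (2 * Int.fract x - 1) with h0 | h0
    · rw [abs_of_nonneg h0] at h
      right
      rw [squeeze, clip_of_ge]
      · push_cast; ring
      · rw [le_div_iff₀ hτ]; linarith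
    · rw [abs_of_nonpos h0] at h
      left
      rw [squeeze, clip_of_le]
      · ring
      · rw [div_le_iff₀ hτ]; linarith
  rcases key with h | h <;> rw [h, Int.floor_intCast]

/-- `squeeze` does not leave an integer interval. -/
lemma squeeze_mem {τ x : ℝ} (hτ : 0 < τ) (hτ1 : τ ≤ 1) {n : ℕ} (h0 : 0 ≤ x) (h1 : x ≤ n) :
    0 ≤ squeeze τ x ∧ squeeze τ x ≤ n := by
  have hf : 0 ≤ ⌊x⌋ := Int.floor_nonneg.2 h0
  refine ⟨le_trans (by exact_mod_cast hf) (floor_le_squeeze τ x), ?_⟩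
  rcases h1.lt_or_eq with h | h
  · have : ⌊x⌋ < (n : ℤ) := Int.floor_lt.2 (by exact_mod_cast h)
    refine (squeeze_le τ x).trans ?_
    exact_mod_cast this
  · rw [h]
    exact_mod_cast (squeeze_intCast hτ hτ1 (n : ℤ)).le

lemma abs_squeeze_sub_self_le (τ x : ℝ) : |squeeze τ x - x| ≤ 1 := by
  have h0 := Int.floor_le x
  have h1 := Int.lt_floor_add_one x
  have h2 := floor_le_squeeze τ x
  have h3 := squeeze_le τ x
  rw [abs_le]; constructor <;> linarith

/-- The entry `a i` found here is the `k`-th smallest one, counted with multiplicity. -/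
lemma exists_orderStat {N k : ℕ} (hk : 0 < k) (hkN : k ≤ N) (a : Fin N → ℝ) :
    ∃ i, k ≤ (Finset.univ.filter fun l => a l ≤ a i).card ∧
      (Finset.univ.filter fun l => a l < a i).card < k := by
  have hne : (Finset.univ : Finset (Fin N)).Nonempty := ⟨⟨0, by omega⟩, Finset.mem_univ _⟩
  have hS : (Finset.univ.filter fun i =>
      k ≤ (Finset.univ.filter fun l => a l ≤ a i).card).Nonempty := by
    obtain ⟨i, -, hi⟩ := Finset.exists_max_image Finset.univ a hne
    refine ⟨i, Finset.mem_filter.2 ⟨Finset.mem_univ _, ?_⟩⟩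
    rw [Finset.filter_true_of_mem fun l _ => hi l (Finset.mem_univ _)]
    simpa using hkN
  obtain ⟨i, hi, hmin⟩ := Finset.exists_min_image _ a hS
  refine ⟨i, (Finset.mem_filter.1 hi).2, ?_⟩
  by_contra! hcon
  obtain ⟨l, hl, hmax⟩ := Finset.exists_max_image (Finset.univ.filter fun l => a l < a i) a
    (Finset.card_pos.1 (hk.trans_le hcon))
  have hl' := (Finset.mem_filter.1 hl).2
  refine absurd (hmin l (Finset.mem_filter.2 ⟨Finset.mem_univ _, hcon.trans ?_⟩)) (not_le.2 hl')
  refine Finset.card_le_card fun q hq => ?_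
  exact Finset.mem_filter.2 ⟨Finset.mem_univ _, hmax q hq⟩

/-- The function `t` is the `k`-th smallest of the numbers `saw (x i)`. It vanishes exactly at the
points with at least `k` half-integer coordinates, which form the dual of the `(k - 1)`-skeleton. -/
lemma exists_dual_function {N k : ℕ} (hk : 0 < k) (hkN : k ≤ N) :
    ∃ t : (Fin N → ℝ) → ℝ, (∀ x, 0 ≤ t x ∧ t x ≤ 1) ∧
      (∀ x, ∃ D : Finset (Fin N), D.card = k ∧ ∀ i ∈ D, saw (x i) ≤ t x) ∧
      (∀ x, (Finset.univ.filter fun i => saw (x i) < t x).card < k) ∧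
      (∀ x y δ, (∀ i, |x i - y i| ≤ δ) → t x ≤ t y + 2 * δ) := by
  choose f hf1 hf2 using fun a : Fin N → ℝ => exists_orderStat hk hkN a
  let s : (Fin N → ℝ) → (Fin N → ℝ) := fun x i => saw (x i)
  refine ⟨fun x => s x (f (s x)), fun x => ⟨saw_nonneg _, saw_le_one _⟩, fun x => ?_,
    fun x => hf2 (s x), fun x y δ hδ => ?_⟩
  · obtain ⟨D, hD, hDk⟩ := Finset.exists_subset_card_eq (hf1 (s x))
    exact ⟨D, hDk, fun i hi => (Finset.mem_filter.1 (hD hi)).2⟩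
  · by_contra! hcon
    have := (hf1 (s y)).trans_lt' (hf2 (s x))
    refine absurd this (not_lt.2 (Finset.card_le_card fun i hi => ?_))
    have h1 := (Finset.mem_filter.1 hi).2
    refine Finset.mem_filter.2 ⟨Finset.mem_univ _, ?_⟩
    have h2 := (abs_le.1 (abs_saw_sub_le (x i) (y i))).2
    have h3 := hδ i
    have h4 : s x i - s y i ≤ 2 * |x i - y i| := h2
    linarith

/-! ### Polyhedra and grid coordinates -/

lemma dist_le_of_apply {N : ℕ} {x y : Rn N} {δ : ℝ} (hδ : 0 ≤ δ) (h : ∀ i, |x i - y i| ≤ δ) :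
    dist x y ≤ N * δ := by
  rw [EuclideanSpace.dist_eq]
  refine Real.sqrt_le_iff.2 ⟨by positivity, ?_⟩
  have h1 : ∑ i, dist (x i) (y i) ^ 2 ≤ ∑ _i : Fin N, δ ^ 2 :=
    Finset.sum_le_sum fun i _ => by
      rw [Real.dist_eq]; exact pow_le_pow_left₀ (abs_nonneg _) (h i) 2
  have h2 : ∑ _i : Fin N, δ ^ 2 = N * δ ^ 2 := by simp
  have h3 : (N : ℝ) ≤ (N : ℝ) ^ 2 := by exact_mod_cast Nat.le_self_pow two_ne_zero N
  nlinarith [sq_nonneg δ]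

lemma abs_apply_sub_le_dist {N : ℕ} (x y : Rn N) (i : Fin N) : |x i - y i| ≤ dist x y := by
  rw [dist_eq_norm]; exact PiLp.norm_apply_le (x - y) i

/-- A compact set covered by finitely many coordinate planes of codimension `k` is a Lipschitz
polyhedron of dimension `N - k`. A plane is encoded by the set of its fixed coordinates and a
vector containing their values. -/
lemma isLipschitzPolyhedron_of_planes {N k : ℕ} {X : Set (Rn N)} (hX : IsCompact X)
    (T : Finset (Finset (Fin N) × (Fin N → ℝ))) (hT : ∀ σ ∈ T, σ.1.card = k)
    (hXT : ∀ x ∈ X, ∃ σ ∈ T, ∀ i ∈ σ.1, x i = σ.2 i) : IsLipschitzPolyhedron (N - k) X := by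
  refine ⟨hX.isClosed, ?_⟩
  have key : ∀ σ : T, ∃ F : Rn (N - k) → Rn N, (∃ C, LipschitzWith C F) ∧
      IsCompact (F ⁻¹' X) ∧ ∀ x : Rn N, (∀ i ∈ σ.1.1, x i = σ.1.2 i) → x ∈ range F := by
    rintro ⟨⟨D, v⟩, hσ⟩
    have hcard : (Finset.univ.filter fun i => i ∉ D).card = N - k := by
      have h1 := hT _ hσ
      have h2 : (Finset.univ.filter fun i => i ∉ D) = Dᶜ := by ext; simp
      rw [h2, Finset.card_compl, Fintype.card_fin, h1]
    let e := (Finset.univ.filter fun i => i ∉ D).equivFinOfCardEq hcard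
    have hmem : ∀ {i}, i ∉ D → i ∈ Finset.univ.filter fun i => i ∉ D := fun h => by simpa using h
    let F' : (Fin (N - k) → ℝ) → (Fin N → ℝ) := fun z i =>
      if h : i ∉ D then z (e ⟨i, hmem h⟩) else v i
    have hF' : LipschitzWith 1 F' := by
      refine LipschitzWith.of_dist_le_mul fun z w => ?_
      rw [NNReal.coe_one, one_mul, dist_pi_le_iff dist_nonneg]
      intro i
      by_cases h : i ∉ D
      · simp only [F', dif_pos h]; exact dist_le_pi_dist z w _
      · simp only [F', dif_neg h, dist_self]; exact dist_nonneg
    let F : Rn (N - k) → Rn N := fun z => WithLp.toLp 2 (F' z.ofLp)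
    have hF := (PiLp.lipschitzWith_toLp 2 (fun _ : Fin N => ℝ)).comp
      (hF'.comp (PiLp.lipschitzWith_ofLp 2 (fun _ : Fin (N - k) => ℝ)))
    let G : Rn N → Rn (N - k) := fun x => WithLp.toLp 2 fun l => x (e.symm l).1
    have hG : Continuous G := by
      refine (PiLp.continuous_toLp 2 _).comp (continuous_pi fun l => ?_)
      fun_prop
    have hGF : ∀ z, G (F z) = z := by
      intro z
      ext l
      have hl : (e.symm l).1 ∉ D := (Finset.mem_filter.1 (e.symm l).2).2
      show F' z.ofLp (e.symm l).1 = z l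
      simp only [F', dif_pos hl, Subtype.coe_eta, Equiv.apply_symm_apply]
    refine ⟨F, ⟨_, hF⟩, ?_, fun x hx => ⟨G x, ?_⟩⟩
    · refine (hX.image hG).of_isClosed_subset (hX.isClosed.preimage hF.continuous) ?_
      exact fun z hz => ⟨F z, hz, hGF z⟩
    · ext i
      show F' (G x).ofLp i = x i
      by_cases h : i ∉ D
      · simp only [F', dif_pos h, G, Equiv.symm_apply_apply]
      · simp only [F', dif_neg h]
        exact (hx i (not_not.1 h)).symm
  choose F hF hS hrange using key
  let e := T.equivFin
  refine ⟨T.card, fun l => F (e.symm l), fun l => F (e.symm l) ⁻¹' X, fun l => hS _, fun l => ?_, ?_⟩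
  · obtain ⟨C, hC⟩ := hF (e.symm l)
    exact ⟨C, hC.lipschitzOnWith⟩
  · refine Subset.antisymm (fun x hx => ?_) (iUnion_subset fun l => image_preimage_subset _ _)
    obtain ⟨σ, hσ, h⟩ := hXT x hx
    obtain ⟨z, rfl⟩ := hrange ⟨σ, hσ⟩ x h
    refine mem_iUnion.2 ⟨e ⟨σ, hσ⟩, z, ?_, ?_⟩
    · simpa using hx
    · simp

/-- Coordinates in which a grid of mesh `s` with a vertex at `o` becomes the integer grid. -/
def toGrid {N : ℕ} (o : Fin N → ℝ) (s : ℝ) (x : Rn N) : Fin N → ℝ := fun i => (x i - o i) / s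

/-- The inverse of `toGrid`. -/
def ofGrid {N : ℕ} (o : Fin N → ℝ) (s : ℝ) (y : Fin N → ℝ) : Rn N :=
  WithLp.toLp 2 fun i => o i + s * y i

lemma ofGrid_apply {N : ℕ} (o : Fin N → ℝ) (s : ℝ) (y : Fin N → ℝ) (i : Fin N) :
    ofGrid o s y i = o i + s * y i := rfl

lemma ofGrid_toGrid {N : ℕ} {o : Fin N → ℝ} {s : ℝ} (hs : 0 < s) (x : Rn N) :
    ofGrid o s (toGrid o s x) = x := by
  ext i
  rw [ofGrid_apply, toGrid]; field_simp; ring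

lemma toGrid_ofGrid {N : ℕ} {o : Fin N → ℝ} {s : ℝ} (hs : 0 < s) (y : Fin N → ℝ) :
    toGrid o s (ofGrid o s y) = y := by
  funext i
  rw [toGrid, ofGrid_apply]; field_simp; ring

lemma continuous_toGrid {N : ℕ} (o : Fin N → ℝ) (s : ℝ) : Continuous (toGrid o s) := by
  refine continuous_pi fun i => ?_
  unfold toGrid; fun_prop

lemma continuous_ofGrid {N : ℕ} (o : Fin N → ℝ) (s : ℝ) : Continuous (ofGrid o s) := by
  refine (PiLp.continuous_toLp 2 _).comp (continuous_pi fun i => ?_)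
  fun_prop

lemma abs_toGrid_sub_le {N : ℕ} {o : Fin N → ℝ} {s : ℝ} (hs : 0 < s) (x y : Rn N) (i : Fin N) :
    |toGrid o s x i - toGrid o s y i| ≤ dist x y / s := by
  have : toGrid o s x i - toGrid o s y i = (x i - y i) / s := by simp only [toGrid]; ring
  rw [this, abs_div, abs_of_pos hs]
  gcongr
  exact abs_apply_sub_le_dist x y i

lemma dist_ofGrid_le {N : ℕ} {o : Fin N → ℝ} {s : ℝ} (hs : 0 < s) {y z : Fin N → ℝ} {δ : ℝ}
    (hδ : 0 ≤ δ) (h : ∀ i, |y i - z i| ≤ δ) : dist (ofGrid o s y) (ofGrid o s z) ≤ N * s * δ := by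
  rw [mul_assoc]
  refine dist_le_of_apply (by positivity) fun i => ?_
  rw [ofGrid_apply, ofGrid_apply, add_sub_add_left_eq_sub, ← mul_sub, abs_mul, abs_of_pos hs]
  exact mul_le_mul_of_nonneg_left (h i) hs.le

lemma isClosed_skel (N d : ℕ) : IsClosed (skel N d) := by
  have : skel N d = ⋃ σ : {p : (Fin N → ℤ) × Finset (Fin N) // p.2.card < d},
      gridCell σ.1.1 σ.1.2 := by
    refine Subset.antisymm (fun x hx =>
      mem_iUnion.2 ⟨⟨(fun i => ⌊x i⌋, nonint x), hx⟩, mem_cellOf x⟩) (iUnion_subset ?_)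
    rintro ⟨⟨c, D⟩, hD⟩ x hx
    exact (Finset.card_le_card (nonint_subset hx)).trans_lt hD
  rw [this]
  exact (locallyFinite_gridCell _).isClosed_iUnion fun σ => isClosed_gridCell _ _

lemma abs_sub_le_of_mem_cellOf {N : ℕ} {x z : Fin N → ℝ} (hz : z ∈ cellOf x) (i : Fin N) :
    |z i - x i| ≤ 1 := by
  have h := hz i
  have h0 := Int.floor_le (x i)
  have h1 := Int.lt_floor_add_one (x i)
  rw [abs_le]
  split_ifs at h
  · have h' : (⌊x i⌋ : ℝ) ≤ z i ∧ z i ≤ ⌊x i⌋ + 1 := h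
    constructor <;> linarith [h'.1, h'.2]
  · have h' : z i = ⌊x i⌋ := h
    constructor <;> linarith

/-- A Lipschitz map on `Q` that agrees with the neighbourhood retraction `r` close to `M`, and sends
the `(j + 1)`-skeleton close to `M`: `r` is extended continuously over the skeleton with values in
`M`, the extension is smoothed, and the result is glued to `r` by a cutoff. Gluing is harmless on
the skeleton, since the extension still equals `r` where the cutoff is neither `0` nor `1`. -/
lemma exists_skeleton_map {N j : ℕ} {M Q : Set (Rn N)}
    (hS : ∀ d ≤ j + 1, SphereExt M d) (hQ : IsCompact Q) (hQc : Convex ℝ Q)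
    {r : Rn N → Rn N} {L : NNReal} (hr : LipschitzWith L r) {ε η s : ℝ} (hε : 0 < ε) (hs : 0 < s)
    (hη : 0 < η) (hηs : N * s ≤ η) (hηε : 4 * η ≤ ε)
    (hrM : ∀ x, infDist x M ≤ ε → r x ∈ M) (o : Fin N → ℝ) :
    ∃ (w : Rn N → Rn N) (C : NNReal), LipschitzOnWith C w Q ∧
      (∀ y, infDist y M ≤ 2 * η → w y = r y) ∧
      ∀ y ∈ Q, toGrid o s y ∈ skel N (j + 2) → infDist (w y) M ≤ ε := by
  let O : Set (Fin N → ℝ) := {y | infDist (ofGrid o s y) M ≤ 4 * η}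
  obtain ⟨g, hg, hgM, hgr⟩ := exists_skel_extension hS (O := O) (ρ := r ∘ ofGrid o s)
    (hr.continuous.comp (continuous_ofGrid o s)).continuousOn
    (fun y hy => hrM _ (le_trans hy hηε)) (j + 2) le_rfl
  let K : Set (Rn N) := toGrid o s ⁻¹' skel N (j + 2)
  have hK : IsClosed K := (isClosed_skel N (j + 2)).preimage (continuous_toGrid o s)
  have hgK : ContinuousOn (g ∘ toGrid o s) K :=
    hg.comp (continuous_toGrid o s).continuousOn (mapsTo_preimage _ _)
  obtain ⟨g₁, hg₁⟩ := ContinuousMap.exists_restrict_eq hK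
    ⟨K.domRestrict (g ∘ toGrid o s), continuousOn_iff_continuous_domRestrict.1 hgK⟩
  have hg₁' : ∀ y ∈ K, g₁ y = g (toGrid o s y) := fun y hy =>
    congrArg (fun f : C(K, Rn N) => f ⟨y, hy⟩) hg₁
  obtain ⟨g₂, hg₂, hg₂d, -⟩ := Continuous.exists_contDiff_approx (ε := fun _ => ε) 1
    g₁.continuous continuous_const fun _ => hε
  obtain ⟨C₂, hC₂⟩ := (hg₂.contDiffOn (s := Q)).exists_lipschitzOnWith one_ne_zero hQc hQ
  obtain ⟨B, hB⟩ := hQ.exists_bound_of_continuousOn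
    (f := fun y => r y - g₂ y) (hr.continuous.sub hg₂.continuous).continuousOn
  let v : Rn N → ℝ := fun y => max 0 (min 1 (3 - infDist y M / η))
  have hv0 : ∀ y, 0 ≤ v y := fun y => le_max_left _ _
  have hv1 : ∀ y, v y ≤ 1 := fun y => max_le zero_le_one (min_le_left _ _)
  have hvd : ∀ x y, |v x - v y| ≤ dist x y / η := by
    intro x y
    have h1 := abs_max_sub_max_le_max 0 (min 1 (3 - infDist x M / η)) 0
      (min 1 (3 - infDist y M / η))
    have h2 := abs_min_sub_min_le_max 1 (3 - infDist x M / η) 1 (3 - infDist y M / η)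
    simp only [sub_self, abs_zero, abs_nonneg, max_eq_right] at h1 h2
    refine h1.trans (h2.trans ?_)
    have e : 3 - infDist x M / η - (3 - infDist y M / η) = (infDist y M - infDist x M) / η := by
      ring
    rw [e, abs_div, abs_of_pos hη]
    gcongr
    have a1 := infDist_le_infDist_add_dist (s := M) (x := x) (y := y)
    have a2 := infDist_le_infDist_add_dist (s := M) (x := y) (y := x)
    rw [dist_comm y x] at a2
    rw [abs_le]; constructor <;> linarith
  refine ⟨fun y => g₂ y + v y • (r y - g₂ y),
    Real.toNNReal (C₂ + (L + C₂) + |B| / η), ?_, ?_, ?_⟩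
  · refine LipschitzOnWith.of_dist_le_mul fun x hx y hy => ?_
    rw [Real.coe_toNNReal _ (by positivity), dist_eq_norm]
    have e : g₂ x + v x • (r x - g₂ x) - (g₂ y + v y • (r y - g₂ y))
        = (g₂ x - g₂ y) + v x • ((r x - r y) - (g₂ x - g₂ y)) + (v x - v y) • (r y - g₂ y) := by
      module
    rw [e]
    have h1 : ‖g₂ x - g₂ y‖ ≤ C₂ * dist x y := by
      rw [← dist_eq_norm]; exact hC₂.dist_le_mul x hx y hy
    have h2 : ‖r x - r y‖ ≤ L * dist x y := by
      rw [← dist_eq_norm]; exact hr.dist_le_mul x y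
    have h3 : ‖v x • ((r x - r y) - (g₂ x - g₂ y))‖ ≤ (L + C₂) * dist x y := by
      rw [norm_smul, Real.norm_eq_abs, abs_of_nonneg (hv0 x)]
      have := norm_sub_le (r x - r y) (g₂ x - g₂ y)
      refine (mul_le_of_le_one_left (norm_nonneg _) (hv1 x)).trans ?_
      linarith
    have h4 : ‖(v x - v y) • (r y - g₂ y)‖ ≤ |B| / η * dist x y := by
      rw [norm_smul, Real.norm_eq_abs]
      calc _ ≤ dist x y / η * |B| :=
            mul_le_mul (hvd x y) ((hB y hy).trans (le_abs_self B)) (norm_nonneg _) (by positivity)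
        _ = _ := by ring
    calc _ ≤ _ := norm_add₃_le
      _ ≤ _ := by linarith
  · intro y hy
    have : v y = 1 := by
      have : infDist y M / η ≤ 2 := by rw [div_le_iff₀ hη]; linarith
      simp only [v]
      rw [min_eq_left (by linarith), max_eq_right zero_le_one]
    simp only [this, one_smul, add_sub_cancel]
  · intro y hyQ hy
    have hgd : dist (g₂ y) (g (toGrid o s y)) < ε := hg₁' y hy ▸ hg₂d y
    by_cases h3 : infDist y M ≤ 3 * η
    · have hcell : cellOf (toGrid o s y) ⊆ O := by
        intro z hz
        have h1 := dist_ofGrid_le (o := o) hs zero_le_one (abs_sub_le_of_mem_cellOf hz)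
        rw [ofGrid_toGrid hs] at h1
        have h2 := infDist_le_infDist_add_dist (s := M) (x := ofGrid o s z) (y := y)
        show infDist (ofGrid o s z) M ≤ 4 * η
        linarith
      have hgy := hgr _ hy hcell
      rw [comp_apply, ofGrid_toGrid hs] at hgy
      rw [hgy] at hgd
      refine (infDist_le_dist_of_mem (hrM y (by linarith))).trans ?_
      have e : g₂ y + v y • (r y - g₂ y) - r y = (1 - v y) • (g₂ y - r y) := by module
      rw [dist_eq_norm, e, norm_smul, Real.norm_eq_abs, abs_of_nonneg (by linarith [hv1 y])]
      refine (mul_le_of_le_one_left (norm_nonneg _) (by linarith [hv0 y])).trans ?_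
      rw [← dist_eq_norm]; exact hgd.le
    · have : v y = 0 := by
        have : 3 ≤ infDist y M / η := by rw [le_div_iff₀ hη]; linarith
        simp only [v]
        exact max_eq_left (min_le_of_right_le (by linarith))
      simp only [this, zero_smul, add_zero]
      exact (infDist_le_dist_of_mem (hgM hy)).trans hgd.le

/-! ### The retraction -/

/-- **Retraction lemma.** If `M ⊆ ℝ^N` (`N ≥ 3`) is a compact `j`-connected
submanifold, `j ∈ {1, …, N−2}`, contained in a cube `Q`, then there are a closed
`(N−j−2)`-dimensional Lipschitz polyhedron `X ⊆ Q ∖ M` and a locally Lipschitz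
retraction `ψ : Q ∖ X → M` with `|Dψ(x)| ≤ c / dist(x, X)` on `Q ∖ X`, for some
`c = c(N, j, M) > 0` (the gradient bound being expressed through local Lipschitz
constants). -/
theorem lipschitz_retraction_onto_connected_manifold
    (N m j : ℕ) (hN : 3 ≤ N) (hj1 : 1 ≤ j) (hj2 : j ≤ N - 2)
    (M : Set (Rn N)) (hMne : M.Nonempty) (hMcpt : IsCompact M)
    (hMsub : IsC3Submanifold m M)
    (hconn : ∀ i : ℕ, i ≤ j → ∀ x : ↥M, Subsingleton (HomotopyGroup (Fin i) ↥M x))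
    (Q : Set (Rn N)) (hQ : IsCube Q) (hMQ : M ⊆ Q) :
    ∃ (X : Set (Rn N)) (ψ : Rn N → Rn N) (c : ℝ),
      IsLipschitzPolyhedron (N - j - 2) X ∧ X ⊆ Q \ M ∧ 0 < c ∧
      (∀ a ∈ M, ψ a = a) ∧ (∀ x ∈ Q \ X, ψ x ∈ M) ∧
      ∀ x ∈ Q \ X, ∃ ε > 0,
        LipschitzOnWith (Real.toNNReal (c / infDist x X)) ψ
          (ball x ε ∩ (Q \ X)) := by
  obtain ⟨a, ρ, hρ, rfl⟩ := hQ
  set Q : Set (Rn N) := {y : Rn N | ∀ i, |y i - a i| ≤ ρ} with hQdef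
  obtain ⟨r, L, ε₀, hε₀, hr, hrid, hrM⟩ := exists_lipschitz_nbhd_retraction hMsub hMcpt hMne
  obtain ⟨p, hpQ, hpM⟩ := exists_mem_cube_not_mem (by omega) hMsub hMcpt a hρ
  have hN0 : (0 : ℝ) < N := by exact_mod_cast (by omega : 0 < N)
  -- The mesh `s` is chosen such that the diameter of a grid cube is at most `η = N s ≤ ε₀ / 4`.
  obtain ⟨n, hn⟩ := exists_nat_gt (8 * N * ρ / ε₀)
  have hn0 : (0 : ℝ) < n := lt_of_le_of_lt (by positivity) hn
  obtain ⟨s, hs_def⟩ : ∃ s : ℝ, s = 2 * ρ / n := ⟨_, rfl⟩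
  have hs : 0 < s := by rw [hs_def]; positivity
  have hsn : s * n = 2 * ρ := by rw [hs_def]; field_simp
  obtain ⟨η, hη_def⟩ : ∃ η : ℝ, η = N * s := ⟨_, rfl⟩
  have hη : 0 < η := by rw [hη_def]; positivity
  have hηε : 4 * η ≤ ε₀ := by
    rw [div_lt_iff₀ hε₀] at hn
    have : 4 * η * n ≤ ε₀ * n := by
      rw [hη_def, show 4 * ((N : ℝ) * s) * n = 4 * N * (s * n) by ring, hsn]; nlinarith
    exact le_of_mul_le_mul_right this hn0
  let o : Fin N → ℝ := fun i => a i - ρ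
  have hQiff : ∀ x : Rn N, x ∈ Q ↔ ∀ i, 0 ≤ toGrid o s x i ∧ toGrid o s x i ≤ n := by
    intro x
    refine forall_congr' fun i => ?_
    simp only [toGrid, o]
    rw [abs_le, div_le_iff₀ hs, mul_comm (n : ℝ) s, hsn, le_div_iff₀ hs, zero_mul]
    constructor <;> rintro ⟨h1, h2⟩ <;> constructor <;> linarith
  have hQclosed : IsClosed Q := by
    have : Q = ⋂ i, {y : Rn N | |y i - a i| ≤ ρ} := by ext; simp [hQdef]
    rw [this]
    exact isClosed_iInter fun i => isClosed_le (by fun_prop) continuous_const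
  have hQdist : ∀ x ∈ Q, ∀ y ∈ Q, dist x y ≤ N * (2 * ρ) := by
    intro x hx y hy
    refine dist_le_of_apply (by positivity) fun i => ?_
    have h1 := abs_le.1 (hx i)
    have h2 := abs_le.1 (hy i)
    rw [abs_le]; constructor <;> linarith [h1.1, h1.2, h2.1, h2.2]
  have hQcpt : IsCompact Q :=
    isCompact_of_isClosed_isBounded hQclosed (isBounded_iff.2 ⟨_, fun x hx y hy => hQdist x hx y hy⟩)
  have hQconv : Convex ℝ Q := by
    intro x hx y hy b c hb hc hbc i
    have h1 := abs_le.1 (hx i)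
    have h2 := abs_le.1 (hy i)
    have e : (b • x + c • y) i - a i = b * (x i - a i) + c * (y i - a i) := by
      have : (b • x + c • y) i = b * x i + c * y i := rfl
      rw [this]; linear_combination (a i) * hbc
    rw [e, abs_le]
    constructor
    · nlinarith [mul_le_mul_of_nonneg_left h1.1 hb, mul_le_mul_of_nonneg_left h2.1 hc]
    · nlinarith [mul_le_mul_of_nonneg_left h1.2 hb, mul_le_mul_of_nonneg_left h2.2 hc]
  obtain ⟨w, Cw, hw, hwr, hwK⟩ := exists_skeleton_map (sphereExt_of_connected hMne hconn) hQcpt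
    hQconv hr hε₀ hs hη hη_def.ge hηε hrM o
  obtain ⟨t, ht01, htD, htcard, htlip⟩ :=
    exists_dual_function (N := N) (k := j + 2) (by omega) (by omega)
  -- `u` is a cutoff around `M`, `T` is the dilation parameter. Away from `M` the map `h` retracts
  -- onto the skeleton, and on `M` it is the identity because there `T = 1`.
  let u : Rn N → ℝ := fun x => max 0 (1 - infDist x M / η)
  let T : Rn N → ℝ := fun x => max (t (toGrid o s x)) (u x)
  let h : Rn N → Rn N := fun x => ofGrid o s fun i => squeeze (T x) (toGrid o s x i)
  -- The point `p` makes `X` nonempty, since the distance to the empty set would be the junk value `0`.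
  let X : Set (Rn N) := {x | x ∈ Q ∧ t (toGrid o s x) = 0 ∧ u x ≤ 1 / 2} ∪ {p}
  have htd : ∀ x y, t (toGrid o s x) ≤ t (toGrid o s y) + 2 / s * dist x y := by
    intro x y
    have := htlip (toGrid o s x) (toGrid o s y) _ (abs_toGrid_sub_le hs x y)
    calc _ ≤ _ := this
      _ = _ := by ring
  have hud : ∀ x y, u x ≤ u y + 1 / η * dist x y := by
    intro x y
    have h1 := infDist_le_infDist_add_dist (s := M) (x := y) (y := x)
    rw [dist_comm] at h1
    have h2 : infDist y M / η ≤ infDist x M / η + 1 / η * dist x y := by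
      calc _ ≤ (infDist x M + dist x y) / η := by gcongr
        _ = _ := by ring
    have h3 : 0 ≤ 1 / η * dist x y := by positivity
    refine max_le (by linarith [le_max_left 0 (1 - infDist y M / η)]) ?_
    linarith [le_max_right 0 (1 - infDist y M / η)]
  have hTd : ∀ x y, |T x - T y| ≤ (2 / s + 1 / η) * dist x y := by
    have hle : ∀ x y, T x ≤ T y + (2 / s + 1 / η) * dist x y := by
      intro x y
      have h1 : 0 ≤ 2 / s * dist x y := by positivity
      have h2 : 0 ≤ 1 / η * dist x y := by positivity
      refine max_le ?_ ?_
      · linarith [htd x y, le_max_left (t (toGrid o s y)) (u y)]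
      · linarith [hud x y, le_max_right (t (toGrid o s y)) (u y)]
    intro x y
    have h1 := hle x y
    have h2 := hle y x
    rw [dist_comm] at h2
    rw [abs_le]; constructor <;> linarith
  have hu1 : ∀ x, u x ≤ 1 := fun x => max_le zero_le_one <| by
    have : 0 ≤ infDist x M / η := div_nonneg infDist_nonneg hη.le
    linarith
  have hT1 : ∀ x, T x ≤ 1 := fun x => max_le (ht01 _).2 (hu1 x)
  have huM : ∀ x ∈ M, u x = 1 := fun x hx => by
    simp only [u, infDist_zero_of_mem hx, zero_div, sub_zero, max_eq_right zero_le_one]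
  have hTpos : ∀ x ∈ Q \ X, 0 < T x := by
    rintro x ⟨hxQ, hxX⟩
    by_contra! hcon
    have h1 : t (toGrid o s x) ≤ 0 := (le_max_left _ _).trans hcon
    have h2 : u x ≤ 0 := (le_max_right _ _).trans hcon
    exact hxX (Or.inl ⟨hxQ, le_antisymm h1 (ht01 _).1, by linarith⟩)
  have hhQ : ∀ x ∈ Q, 0 < T x → h x ∈ Q := by
    intro x hx hTx
    rw [hQiff] at hx ⊢
    intro i
    simp only [h, toGrid_ofGrid hs]
    exact squeeze_mem hTx (hT1 x) (hx i).1 (hx i).2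
  have hhd : ∀ x, dist (h x) x ≤ η := by
    intro x
    have h1 := dist_ofGrid_le (o := o) hs zero_le_one
      fun i => abs_squeeze_sub_self_le (T x) (toGrid o s x i)
    rw [ofGrid_toGrid hs] at h1
    linarith
  have htcont : Continuous fun x => t (toGrid o s x) := by
    refine (LipschitzWith.of_dist_le_mul (K := Real.toNNReal (2 / s)) fun x y => ?_).continuous
    rw [Real.coe_toNNReal _ (by positivity), Real.dist_eq, abs_le]
    have h1 := htd x y
    have h2 := htd y x
    rw [dist_comm] at h2
    constructor <;> linarith
  have hucont : Continuous u := by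
    have := continuous_infDist_pt M
    fun_prop
  have hXcpt : IsCompact X := by
    refine IsCompact.union ?_ isCompact_singleton
    refine hQcpt.inter_right (t := {x | t (toGrid o s x) = 0 ∧ u x ≤ 1 / 2}) ?_
    exact (isClosed_eq htcont continuous_const).inter (isClosed_le hucont continuous_const)
  have hXne : X.Nonempty := ⟨p, Or.inr rfl⟩
  have hXQ : X ⊆ Q \ M := by
    rintro x (⟨hxQ, -, hux⟩ | rfl)
    · refine ⟨hxQ, fun hxM => ?_⟩
      rw [huM x hxM] at hux
      norm_num at hux
    · exact ⟨hpQ, hpM⟩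
  -- The dual set is reached from `x` by moving `j + 2` coordinates to the nearest half-integer.
  have hXdist : ∀ x ∈ Q, infDist x X ≤ (4 * (N * (2 * ρ)) + η) * T x := by
    intro x hx
    have hT0 : 0 ≤ T x := (ht01 _).1.trans (le_max_left _ _)
    have hB : 0 ≤ (N : ℝ) * (2 * ρ) := by positivity
    by_cases hT4 : 1 / 4 ≤ T x
    · have hpX : p ∈ X := Or.inr rfl
      refine (infDist_le_dist_of_mem hpX).trans ((hQdist x hx p hpQ).trans ?_)
      nlinarith [mul_nonneg hη.le hT0, mul_nonneg hB (sub_nonneg.2 hT4)]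
    push Not at hT4
    have ht4 : t (toGrid o s x) ≤ T x := le_max_left _ _
    have hu4 : u x ≤ T x := le_max_right _ _
    obtain ⟨D, hDc, hD⟩ := htD (toGrid o s x)
    let y : Fin N → ℝ := fun i =>
      if i ∈ D then ⌊toGrid o s x i⌋ + 1 / 2 else toGrid o s x i
    have hyd : ∀ i, |y i - toGrid o s x i| ≤ T x / 2 := by
      intro i
      by_cases hi : i ∈ D
      · simp only [y, if_pos hi]
        have h1 := hD i hi
        rw [saw_eq] at h1
        have e : (⌊toGrid o s x i⌋ : ℝ) + 1 / 2 - toGrid o s x i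
            = -(2 * Int.fract (toGrid o s x i) - 1) / 2 := by
          have := Int.floor_add_fract (toGrid o s x i)
          linarith
        rw [e, abs_div, abs_neg, abs_two]
        linarith
      · simp only [y, if_neg hi, sub_self, abs_zero]; linarith
    have hyx : dist (ofGrid o s y) x ≤ η * (T x / 2) := by
      have := dist_ofGrid_le (o := o) hs (by linarith) hyd
      rwa [ofGrid_toGrid hs, ← hη_def] at this
    have hyQ : ofGrid o s y ∈ Q := by
      rw [hQiff] at hx ⊢
      intro i
      rw [toGrid_ofGrid hs]
      by_cases hi : i ∈ D
      · have h1 := hyd i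
        simp only [y, if_pos hi] at h1 ⊢
        have hf : 0 ≤ ⌊toGrid o s x i⌋ := Int.floor_nonneg.2 (hx i).1
        have hlt : toGrid o s x i < n := by
          refine (hx i).2.lt_of_ne fun heq => ?_
          rw [heq, Int.floor_natCast, abs_le] at h1
          have := h1.2
          push_cast at this
          linarith
        have hf' : ⌊toGrid o s x i⌋ + 1 ≤ (n : ℤ) := Int.floor_lt.2 (by exact_mod_cast hlt)
        have g1 : (0 : ℝ) ≤ ⌊toGrid o s x i⌋ := by exact_mod_cast hf
        have g2 : (⌊toGrid o s x i⌋ : ℝ) + 1 ≤ n := by exact_mod_cast hf'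
        constructor <;> linarith
      · simp only [y, if_neg hi]; exact hx i
    have hyt : t y = 0 := by
      by_contra hne
      have hpos := lt_of_le_of_ne (ht01 y).1 (Ne.symm hne)
      refine absurd (htcard y) (not_lt.2 (hDc ▸ Finset.card_le_card fun i hi => ?_))
      refine Finset.mem_filter.2 ⟨Finset.mem_univ _, ?_⟩
      simp only [y, if_pos hi, saw_half]
      exact hpos
    have hyu : u (ofGrid o s y) ≤ 1 / 2 := by
      have h1 := hud (ofGrid o s y) x
      have h2 : 1 / η * dist (ofGrid o s y) x ≤ T x / 2 := by
        calc _ ≤ 1 / η * (η * (T x / 2)) := by gcongr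
          _ = _ := by field_simp
      linarith
    have hyX : ofGrid o s y ∈ X := Or.inl ⟨hyQ, by rw [toGrid_ofGrid hs]; exact hyt, hyu⟩
    refine (infDist_le_dist_of_mem hyX).trans ?_
    rw [dist_comm]
    nlinarith [mul_nonneg hη.le hT0, mul_nonneg hB hT0]
  -- `h` is Lipschitz with a constant inversely proportional to the minimum of `T`.
  have hhlip : ∀ b > 0, ∀ x y, b ≤ T x → b ≤ T y →
      dist (h x) (h y) ≤ N * s * ((1 / s + (2 / s + 1 / η)) / b) * dist x y := by
    intro b hb x y hx hy
    have h1 : ∀ i, |squeeze (T x) (toGrid o s x i) - squeeze (T y) (toGrid o s y i)|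
        ≤ (dist x y / s + (2 / s + 1 / η) * dist x y) / b := by
      intro i
      refine (abs_squeeze_sub_le_both hb hx hy (hT1 x) _ _).trans ?_
      gcongr
      · exact abs_toGrid_sub_le hs x y i
      · exact hTd x y
    calc _ ≤ _ := dist_ofGrid_le (o := o) hs (by positivity) h1
      _ = _ := by ring
  obtain ⟨C₂, hC₂⟩ : ∃ C₂ : ℝ, C₂ = L * (Cw * (N * s * (1 / s + (2 / s + 1 / η)))) * 2 + 1 :=
    ⟨_, rfl⟩
  have hC₂pos : 0 < C₂ := by rw [hC₂]; positivity
  refine ⟨X, fun x => r (w (h x)), C₂ * (4 * (N * (2 * ρ)) + η), ?_, hXQ, by positivity,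
    ?_, ?_, ?_⟩
  · let F : Finset (Fin N) × (Fin N → Fin (n + 1)) → Finset (Fin N) × (Fin N → ℝ) := fun q =>
      (q.1, fun i => o i + s * (((q.2 i : ℕ) : ℝ) + 1 / 2))
    obtain ⟨D₀, -, hD₀⟩ := Finset.exists_subset_card_eq
      (show j + 2 ≤ (Finset.univ : Finset (Fin N)).card by rw [Finset.card_fin]; omega)
    classical
    rw [Nat.sub_sub]
    refine isLipschitzPolyhedron_of_planes (k := j + 2) hXcpt
      (insert (D₀, fun i => p i)
        (((Finset.univ.powersetCard (j + 2)) ×ˢ Finset.univ).image F)) ?_ ?_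
    · intro σ hσ
      rcases Finset.mem_insert.1 hσ with rfl | hσ
      · exact hD₀
      · obtain ⟨q, hq, rfl⟩ := Finset.mem_image.1 hσ
        exact (Finset.mem_powersetCard.1 (Finset.mem_product.1 hq).1).2
    · rintro x (⟨hxQ, htx, -⟩ | rfl)
      · obtain ⟨D, hDc, hD⟩ := htD (toGrid o s x)
        have hx := (hQiff x).1 hxQ
        have hfl : ∀ i, 0 ≤ ⌊toGrid o s x i⌋ := fun i => Int.floor_nonneg.2 (hx i).1
        have hfl' : ∀ i, ⌊toGrid o s x i⌋.toNat < n + 1 := fun i => by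
          have h1 : ⌊toGrid o s x i⌋ ≤ (n : ℤ) := by
            have := Int.floor_le_floor (hx i).2
            rwa [Int.floor_natCast] at this
          omega
        refine ⟨F (D, fun i => ⟨_, hfl' i⟩), Finset.mem_insert_of_mem
          (Finset.mem_image_of_mem _ (Finset.mem_product.2
            ⟨Finset.mem_powersetCard.2 ⟨Finset.subset_univ _, hDc⟩, Finset.mem_univ _⟩)), ?_⟩
        intro i hi
        have h0 : saw (toGrid o s x i) = 0 :=
          le_antisymm ((hD i hi).trans htx.le) (saw_nonneg _)
        have h1 := fract_eq_half_of_saw h0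
        have h2 : ((⌊toGrid o s x i⌋.toNat : ℕ) : ℝ) = ⌊toGrid o s x i⌋ := by
          exact_mod_cast Int.toNat_of_nonneg (hfl i)
        simp only [F]
        rw [h2, ← h1, ← ofGrid_apply, ofGrid_toGrid hs]
      · exact ⟨_, Finset.mem_insert_self _ _, fun i _ => rfl⟩
  · intro b hb
    have hTb : T b = 1 := le_antisymm (hT1 b) (by rw [← huM b hb]; exact le_max_right _ _)
    have hhb : h b = b := by
      simp only [h, hTb, squeeze_one]
      exact ofGrid_toGrid hs b
    have hwb : w b = b := by
      rw [hwr b (by rw [infDist_zero_of_mem hb]; positivity), hrid b hb]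
    show r (w (h b)) = b
    rw [hhb, hwb, hrid b hb]
  · intro x hx
    -- Near `M` the map `w` is `r`; elsewhere `h x` lies on the skeleton.
    have hTx := hTpos x hx
    have hhx := hhQ x hx.1 hTx
    by_cases hux : 0 < u x
    · have h1 : infDist x M ≤ η := by
        by_contra! hcon
        have : 1 ≤ infDist x M / η := by rw [le_div_iff₀ hη]; linarith
        have : u x = 0 := max_eq_left (by linarith)
        linarith
      have h2 : infDist (h x) M ≤ 2 * η := by
        have := infDist_le_infDist_add_dist (s := M) (x := h x) (y := x)
        linarith [hhd x]
      have h3 : r (h x) ∈ M := hrM _ (by linarith)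
      show r (w (h x)) ∈ M
      rw [hwr _ h2, hrid _ h3]; exact h3
    · have hu0 : u x = 0 := le_antisymm (not_lt.1 hux) (le_max_left _ _)
      have hTt : T x = t (toGrid o s x) := by
        simp only [T, hu0]; exact max_eq_left (ht01 _).1
      refine hrM _ (hwK _ hhx ?_)
      simp only [h, toGrid_ofGrid hs]
      refine lt_of_le_of_lt (Finset.card_le_card fun i hi => ?_) (htcard (toGrid o s x))
      refine Finset.mem_filter.2 ⟨Finset.mem_univ _, ?_⟩
      by_contra! hcon
      exact not_mem_nonint.2 (squeeze_int_of_saw hTx (hTt ▸ hcon)) hi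
  · intro x hx
    have hTx := hTpos x hx
    have hdpos : 0 < infDist x X := (hXcpt.isClosed.notMem_iff_infDist_pos hXne).1 hx.2
    have hTcont : Continuous T := htcont.max hucont
    obtain ⟨ε, hε, hball⟩ := Metric.mem_nhds_iff.1
      (hTcont.continuousAt.eventually (lt_mem_nhds (half_lt_self hTx)))
    refine ⟨ε, hε, LipschitzOnWith.of_dist_le_mul ?_⟩
    rintro y ⟨hyb, hyQ⟩ z ⟨hzb, hzQ⟩
    rw [Real.coe_toNNReal _ (by positivity)]
    have h1 := hhlip (T x / 2) (by positivity) y z (hball hyb).le (hball hzb).le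
    have h2 := hw.dist_le_mul _ (hhQ y hyQ.1 (hTpos y hyQ)) _ (hhQ z hzQ.1 (hTpos z hzQ))
    have h3 := hr.dist_le_mul (w (h y)) (w (h z))
    calc dist (r (w (h y))) (r (w (h z)))
        ≤ L * (Cw * (N * s * ((1 / s + (2 / s + 1 / η)) / (T x / 2)) * dist y z)) :=
          h3.trans (mul_le_mul_of_nonneg_left
            (h2.trans (mul_le_mul_of_nonneg_left h1 Cw.2)) L.2)
      _ = (C₂ - 1) / T x * dist y z := by rw [hC₂]; field_simp; ring
      _ ≤ C₂ * (4 * (N * (2 * ρ)) + η) / infDist x X * dist y z := by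
          refine mul_le_mul_of_nonneg_right ?_ dist_nonneg
          rw [div_le_div_iff₀ hTx hdpos]
          calc _ ≤ C₂ * infDist x X := by nlinarith
            _ ≤ C₂ * ((4 * (N * (2 * ρ)) + η) * T x) :=
              mul_le_mul_of_nonneg_left (hXdist x hx.1) hC₂pos.le
            _ = _ := by ring
end
end

section
/- Let p satisfy (P1)–(P2) and let w ∈ L^∞_loc(Ω,ℝᴺ) ∩ W^{1,p(·)}_loc(Ω,ℝᴺ), and let B_r ⋐ Ω be a ball with 0 < r ≤ 1. Then ∫_{B_r} |(w − (w)_r)/r|^{p(x)} dx ≤ c (∫_{B_r} |Dw|^{p(x)} dx + |B_r|) with c = c(n, N, γ₁, γ₂, [p]_{0,α}, α, ‖w‖_{L^∞(B_r)}). Furthermore, if for some 0 < θ < 1 the map w ∈ L^∞(A_{rθ},ℝᴺ) ∩ W^{1,p(·)}(A_{rθ},ℝᴺ) has zero trace on ∂B_r, where A_{rθ} = B_r ∖ B_{r(1−θ)}, then ∫_{A_{rθ}} |w/(rθ)|^{p(x)} dx ≤ c (∫_{A_{rθ}} |Dw|^{p(x)} dx + |A_{rθ}|) with c = c(n, N,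 γ₁, γ₂, [p]_{0,α}, α, ‖w‖_{L^∞(A_{rθ})}). -/
/-!
Both inequalities are obtained from difference quotients, without mollification. If `v` has weak
differential `D` on `U`, then for a fixed vector `h` and almost every `x` whose segment `[x, x + h]`
lies in `U`, `v (x + h) - v x = ∫₀¹ D (x + t h) h dt` (`ae_shift_eq`): testing against a bump
function, both sides have the same integral because translates of a test function differ by the
integral of a directional derivative. Jensen's inequality gives
`|v (x + h) - v x| ^ q ≤ |h| ^ q ∫₀¹ |D (x + t h)| ^ q dt` for all `q ≥ 1` at once.

The variable exponent is replaced by a smaller frozen exponent `q ≥ 1`. On the scale `ρ ≤ 1` the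
gap is at most `M ρ ^ α`, and `(1 / ρ) ^ (M ρ ^ α) ≤ exp (M / α)`, so together with the bound on `w`
this costs only a constant factor (`rpow_div_le_freeze`). Since `q ≤ p`,
`|Dw| ^ q ≤ 1 + |Dw| ^ p`, which produces the term `|B_r|` on the right-hand side.

* Ball: the deviation from the mean is bounded by the double integral of `|v x - v y| ^ q`. Writing
  `y = x + h` with `|h| < 2 r`, the segments stay in the ball, and integrating over `x` and `t` for
  fixed `h` gives `|h| ^ q ∫ |D| ^ q` (`IsMeasurableWeak.ball_poincare`).
* Annulus: it is covered by `2 n` cones around the coordinate half-axes. On the cone around `e`,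
  translation by `n r θ e` leads out of the ball, where the zero extension vanishes, without ever
  meeting the inner ball; so `w` itself is the difference (`poincare_annulus_cone`).

In `IsWeakFDerivOn` only the norm of the differential is required to be locally integrable, so the
differential itself may fail to be measurable. In such a direction every integral against it is the
junk value `0` for suitable test functions, and the zero function serves as weak derivative
(`exists_locallyIntegrable_weak`).
-/

open MeasureTheory Metric Set Filter Topology Function

noncomputable section

/-! ### Differences along a vector -/

lemma integrable_shift {n N : ℕ} {U S : Set (Rn n)} (h : Rn n)
    (hpath : ∀ x ∈ S, ∀ t ∈ Icc (0 : ℝ) 1, x + t • h ∈ U)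
    {d : Rn n → Rn N} (hd : StronglyMeasurable d) (hdU : LocallyIntegrableOn d U volume)
    {K : Set (Rn n)} (hK : IsCompact K) (hKS : K ⊆ S) :
    Integrable (fun z : ℝ × Rn n => d (z.2 + z.1 • h))
      ((volume.restrict (Ioc (0 : ℝ) 1)).prod (volume.restrict K)) := by
  set K' : Set (Rn n) := Set.image (fun z : ℝ × Rn n => z.2 + z.1 • h) (Icc (0 : ℝ) 1 ×ˢ K) with hK'
  have hK'c : IsCompact K' := (isCompact_Icc.prod hK).image (by fun_prop)
  have hK'U : K' ⊆ U := by
    rintro _ ⟨⟨t, x⟩, ⟨ht, hx⟩, rfl⟩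
    exact hpath x (hKS hx) t ht
  have hint := hdU.integrableOn_compact_subset hK'U hK'c
  have hm : Measurable (fun z : ℝ × Rn n => z.2 + z.1 • h) := by fun_prop
  refine ⟨(hd.comp_measurable hm).aestronglyMeasurable, ?_⟩
  rw [hasFiniteIntegral_iff_enorm, lintegral_prod _ (by
    exact ((hd.comp_measurable hm).enorm).aemeasurable)]
  calc ∫⁻ t in Ioc (0 : ℝ) 1, ∫⁻ x in K, ‖d (x + t • h)‖ₑ
      ≤ ∫⁻ t in Ioc (0 : ℝ) 1, ∫⁻ x in K', ‖d x‖ₑ := by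
        refine setLIntegral_mono measurable_const fun t ht => ?_
        rw [← lintegral_indicator hK'c.measurableSet,
          ← lintegral_add_right_eq_self (fun x => K'.indicator (fun x => ‖d x‖ₑ) x) (t • h),
          ← lintegral_indicator hK.measurableSet]
        refine lintegral_mono fun x => ?_
        by_cases hx : x ∈ K
        · have : x + t • h ∈ K' := ⟨(t, x), ⟨⟨ht.1.le, ht.2⟩, hx⟩, rfl⟩
          simp [hx, this]
        · simp [hx]
    _ < ⊤ := by
        have := hint.2
        rw [hasFiniteIntegral_iff_enorm] at this
        simpa using this

/-- If `d` is the weak derivative of `u` in the direction `h`, then `u (x + h) - u x` is the integral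
of `d` along the segment from `x` to `x + h`, for almost every `x` whose segment stays in `U`.
The proof differentiates `s ↦ ∫ ψ (x - s h) u x dx` for a test function `ψ`. -/
lemma ae_shift_eq {n N : ℕ} {U S : Set (Rn n)} (hS : IsOpen S) (h : Rn n)
    (hpath : ∀ x ∈ S, ∀ t ∈ Icc (0 : ℝ) 1, x + t • h ∈ U)
    {u d : Rn n → Rn N} (hd : StronglyMeasurable d) (huU : LocallyIntegrableOn u U volume)
    (hdU : LocallyIntegrableOn d U volume)
    (hw : ∀ φ : Rn n → ℝ, ContDiff ℝ (⊤ : ℕ∞) φ → HasCompactSupport φ → tsupport φ ⊆ U →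
      ∫ x, (fderiv ℝ φ x h) • u x = - ∫ x, φ x • d x) :
    ∀ᵐ x, x ∈ S → u (x + h) - u x - ∫ t in Ioc (0 : ℝ) 1, d (x + t • h) = 0 := by
  have hcomp : ∀ K : Set (Rn n), IsCompact K → K ⊆ S → ∀ t ∈ Icc (0 : ℝ) 1,
      IntegrableOn (fun x => u (x + t • h)) K := by
    intro K hK hKS t ht
    have h1 : IntegrableOn u (Set.image (fun x => x + t • h) K) := by
      refine huU.integrableOn_compact_subset ?_ (hK.image (by fun_prop))
      rintro _ ⟨x, hx, rfl⟩
      exact hpath x (hKS hx) t ht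
    have := (measurePreserving_add_right (volume : Measure (Rn n)) (t • h)).integrableOn_image
      (Homeomorph.addRight (t • h)).measurableEmbedding (f := u) (s := K)
    exact this.1 h1
  refine hS.ae_eq_zero_of_integral_contDiff_smul_eq_zero ?_ ?_
  · rw [locallyIntegrableOn_iff hS.isLocallyClosed]
    intro K hKS hK
    have h1 := hcomp K hK hKS 1 (by simp)
    have h0 := hcomp K hK hKS 0 (by simp)
    simp only [one_smul, zero_smul, add_zero] at h1 h0
    exact (h1.sub h0).sub (integrable_shift h hpath hd hdU hK hKS).integral_prod_right
  · intro ψ hψ hψc hψS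
    set K := tsupport ψ with hKdef
    have hK : IsCompact K := hψc
    set K' : Set (Rn n) := Set.image (fun z : ℝ × Rn n => z.2 + z.1 • h) (Icc (0 : ℝ) 1 ×ˢ K) with hK'
    have hK'c : IsCompact K' := (isCompact_Icc.prod hK).image (by fun_prop)
    have hK'U : K' ⊆ U := by
      rintro _ ⟨⟨t, x⟩, ⟨ht, hx⟩, rfl⟩
      exact hpath x (hψS hx) t ht
    set v : Rn n → Rn N := K'.indicator u with hv
    have hvint : Integrable v :=
      (integrable_indicator_iff hK'c.measurableSet).2
        (huU.integrableOn_compact_subset hK'U hK'c)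
    have hψcont : Continuous ψ := hψ.continuous
    have hψd : Continuous (fderiv ℝ ψ) := hψ.continuous_fderiv (by simp)
    obtain ⟨C, hC⟩ := hψcont.bounded_above_of_compact_support hψc
    obtain ⟨C', hC'⟩ := hψd.bounded_above_of_compact_support (hψc.fderiv (𝕜 := ℝ))
    -- translated test functions are test functions supported in `K'`
    have hsup : ∀ s ∈ Icc (0 : ℝ) 1, tsupport (fun x => ψ (x - s • h)) ⊆ K' := by
      intro s hs x hx
      have : x - s • h ∈ K := by
        have hc : Continuous (fun x : Rn n => x - s • h) := by fun_prop
        exact tsupport_comp_subset_preimage ψ hc hx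
      exact ⟨(s, x - s • h), ⟨hs, this⟩, by simp⟩
    set F : ℝ → Rn N := fun s => ∫ x, ψ (x - s • h) • v x with hF
    set F' : ℝ → Rn N := fun s => ∫ x, (-(fderiv ℝ ψ (x - s • h) h)) • v x with hF'
    have hbd : ∀ (s : ℝ) (x : Rn n),
        ‖(-(fderiv ℝ ψ (x - s • h) h)) • v x‖ ≤ C' * ‖h‖ * ‖v x‖ := by
      intro s x
      rw [norm_smul, norm_neg]
      gcongr
      exact (ContinuousLinearMap.le_opNorm _ _).trans (by gcongr; exact hC' _)
    have hmeas' : ∀ s : ℝ, AEStronglyMeasurable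
        (fun x : Rn n => (-(fderiv ℝ ψ (x - s • h) h)) • v x) volume := fun s =>
      AEStronglyMeasurable.smul (f := fun x : Rn n => -(fderiv ℝ ψ (x - s • h) h))
        (Continuous.aestronglyMeasurable (by fun_prop)) hvint.aestronglyMeasurable
    have hmeas : ∀ s : ℝ, AEStronglyMeasurable
        (fun x : Rn n => ψ (x - s • h) • v x) volume := fun s =>
      AEStronglyMeasurable.smul (f := fun x : Rn n => ψ (x - s • h))
        (Continuous.aestronglyMeasurable (by fun_prop)) hvint.aestronglyMeasurable
    have hder : ∀ s, HasDerivAt F (F' s) s := by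
      intro s
      refine (hasDerivAt_integral_of_dominated_loc_of_deriv_le (s := univ) univ_mem
        (Eventually.of_forall hmeas) ?_ (hmeas' s)
        (bound := fun x => C' * ‖h‖ * ‖v x‖) (Eventually.of_forall fun x s _ => hbd s x)
        (hvint.norm.const_mul _) (Eventually.of_forall fun x s _ => ?_)).2
      · refine (hvint.norm.const_mul C).mono' (hmeas s) (Eventually.of_forall fun x => ?_)
        rw [norm_smul]
        gcongr
        exact hC _
      · have h1 : HasDerivAt (fun s : ℝ => x - s • h) (-h) s := by
          simpa using ((hasDerivAt_id s).smul_const h).const_sub x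
        have h2 : HasFDerivAt ψ (fderiv ℝ ψ (x - s • h)) (x - s • h) :=
          (hψ.differentiable (by simp) _).hasFDerivAt
        have h3 := h2.comp_hasDerivAt s h1
        rw [map_neg] at h3
        exact h3.smul_const (v x)
    have hF'cont : Continuous F' :=
      continuous_of_dominated hmeas' (fun s => Eventually.of_forall (hbd s))
        (hvint.norm.const_mul _) (Eventually.of_forall fun x => by fun_prop)
    have hftc : ∫ s in (0 : ℝ)..1, F' s = F 1 - F 0 :=
      intervalIntegral.integral_eq_sub_of_hasDerivAt (fun s _ => hder s)
        (hF'cont.intervalIntegrable _ _)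
    have hF'eq : ∀ s ∈ Icc (0 : ℝ) 1, F' s = ∫ x, ψ x • d (x + s • h) := by
      intro s hs
      have hsm : ContDiff ℝ (⊤ : ℕ∞) (fun x : Rn n => ψ (x - s • h)) :=
        hψ.comp (contDiff_id.sub contDiff_const)
      have hcs : HasCompactSupport (fun x : Rn n => ψ (x - s • h)) :=
        hK'c.of_isClosed_subset (isClosed_tsupport _) (hsup s hs)
      have key := hw _ hsm hcs ((hsup s hs).trans hK'U)
      have hfd : ∀ x : Rn n, fderiv ℝ (fun x : Rn n => ψ (x - s • h)) x = fderiv ℝ ψ (x - s • h) :=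
        fun x => fderiv_comp_sub (s • h)
      have e1 : F' s = - ∫ x, (fderiv ℝ (fun x : Rn n => ψ (x - s • h)) x h) • u x := by
        rw [hF', ← integral_neg]
        refine integral_congr_ae (Eventually.of_forall fun x => ?_)
        by_cases hx : x ∈ K'
        · simp [hv, hx, hfd]
        · have : fderiv ℝ (fun x : Rn n => ψ (x - s • h)) x = 0 :=
            fderiv_of_notMem_tsupport ℝ (fun hx' => hx (hsup s hs hx'))
          simp [hv, hx, this]
      rw [e1, key, neg_neg,
        ← integral_add_right_eq_self (fun x => ψ (x - s • h) • d x) (s • h)]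
      simp
    have hFeq : ∀ s ∈ Icc (0 : ℝ) 1, F s = ∫ x, ψ x • u (x + s • h) := by
      intro s hs
      have e1 : F s = ∫ x, ψ (x - s • h) • u x := by
        refine integral_congr_ae (Eventually.of_forall fun x => ?_)
        by_cases hx : x ∈ K'
        · simp [hv, hx]
        · have : ψ (x - s • h) = 0 :=
            image_eq_zero_of_notMem_tsupport (f := fun x => ψ (x - s • h))
              (fun hx' => hx (hsup s hs hx'))
          simp [this]
      rw [e1, ← integral_add_right_eq_self (fun x => ψ (x - s • h) • u x) (s • h)]
      simp
    have hψ0 : ∀ x, x ∉ K → ψ x = 0 := fun x hx => image_eq_zero_of_notMem_tsupport hx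
    have huint : ∀ s ∈ Icc (0 : ℝ) 1, Integrable (fun x => ψ x • u (x + s • h)) := by
      intro s hs
      have h1 := (hcomp K hK hψS s hs)
      have h2 : IntegrableOn (fun x => ψ x • u (x + s • h)) K :=
        Integrable.bdd_smul h1 C hψcont.aestronglyMeasurable (Eventually.of_forall hC)
      refine (integrableOn_iff_integrable_of_support_subset ?_).1 h2
      intro x hx
      by_contra hxK
      exact hx (by simp [hψ0 x hxK])
    have hprod := integrable_shift h hpath hd hdU hK hψS
    have hprod2 : Integrable (uncurry fun (t : ℝ) (x : Rn n) => ψ x • d (x + t • h))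
        ((volume.restrict (Ioc (0 : ℝ) 1)).prod (volume.restrict K)) :=
      Integrable.bdd_smul (φ := fun z : ℝ × Rn n => ψ z.2) hprod C
        (Continuous.aestronglyMeasurable (by fun_prop)) (Eventually.of_forall fun z => hC _)
    have hswap := integral_integral_swap hprod2
    have hdint : IntegrableOn (fun x => ψ x • ∫ t in Ioc (0 : ℝ) 1, d (x + t • h)) K :=
      Integrable.bdd_smul hprod.integral_prod_right C
        hψcont.aestronglyMeasurable (Eventually.of_forall hC)
    have hdint' : Integrable (fun x => ψ x • ∫ t in Ioc (0 : ℝ) 1, d (x + t • h)) := by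
      refine (integrableOn_iff_integrable_of_support_subset ?_).1 hdint
      intro x hx
      by_contra hxK
      exact hx (by simp [hψ0 x hxK])
    have hK0 : ∀ f : Rn n → Rn N, ∫ x in K, ψ x • f x = ∫ x, ψ x • f x := fun f =>
      setIntegral_eq_integral_of_forall_compl_eq_zero fun x hx => by simp [hψ0 x hx]
    have h1 := huint 1 (by simp)
    have h0 := huint 0 (by simp)
    have f1 := hFeq 1 (by simp)
    have f0 := hFeq 0 (by simp)
    simp only [one_smul, zero_smul, add_zero] at h1 h0 f1 f0
    have hI : ∫ s in (0 : ℝ)..1, F' s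
        = ∫ x, ψ x • ∫ t in Ioc (0 : ℝ) 1, d (x + t • h) := by
      rw [intervalIntegral.integral_of_le zero_le_one, ← hK0]
      simp_rw [← integral_smul]
      rw [← hswap]
      refine setIntegral_congr_fun measurableSet_Ioc fun s hs => ?_
      rw [hF'eq s ⟨hs.1.le, hs.2⟩, hK0 (fun x => d (x + s • h))]
    simp_rw [smul_sub]
    rw [integral_sub (by exact h1.sub h0) hdint', integral_sub h1 h0, ← hI, hftc, f1, f0, sub_self]

/-! ### Measurable representatives of weak derivatives -/

/-- If some directional part `Du · e` of a weak differential fails to be locally integrable (only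
the norm of `Du` is assumed measurable), the integrals `∫ φ • Du e` take the junk value `0`, and `u`
has vanishing weak derivative in direction `e`. -/
lemma integral_fderiv_smul_eq_zero_of_not_locallyIntegrableOn {n N : ℕ} {U : Set (Rn n)}
    (hU : IsOpen U) {u : Rn n → Rn N} {Du : Rn n → (Rn n →L[ℝ] Rn N)}
    (hw : IsWeakFDerivOn U u Du) {e : Rn n}
    (he : ¬ LocallyIntegrableOn (fun x => Du x e) U volume)
    {φ : Rn n → ℝ} (hφ : ContDiff ℝ (⊤ : ℕ∞) φ) (hφc : HasCompactSupport φ)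
    (hφU : tsupport φ ⊆ U) (hint : ∀ φ : Rn n → ℝ, ContDiff ℝ (⊤ : ℕ∞) φ → HasCompactSupport φ →
      tsupport φ ⊆ U → ∀ e : Rn n, IntegrableOn (fun x => (fderiv ℝ φ x e) • u x) U) :
    ∫ x in U, (fderiv ℝ φ x e) • u x = 0 := by
  unfold LocallyIntegrableOn at he
  push Not at he
  obtain ⟨z, hzU, hz⟩ := he
  have key : ∀ φ : Rn n → ℝ, ContDiff ℝ (⊤ : ℕ∞) φ → HasCompactSupport φ →
      tsupport φ ⊆ U → φ z ≠ 0 → ∫ x in U, (fderiv ℝ φ x e) • u x = 0 := by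
    intro φ hφ hφc hφU hφz
    rw [hw.2.2 φ hφ hφc hφU e, integral_undef, neg_zero]
    intro hI
    replace hI : IntegrableOn (fun x => φ x • Du x e) U := hI
    apply hz
    obtain ⟨s, hs, hsm⟩ : ∃ s ∈ 𝓝 z, MeasurableSet s ∧ s ⊆ U ∧ ∀ x ∈ s, |φ z| / 2 < |φ x| := by
      have h1 : {x | |φ z| / 2 < |φ x|} ∈ 𝓝 z :=
        (isOpen_lt continuous_const hφ.continuous.abs).mem_nhds (by
          have := abs_pos.2 hφz
          change |φ z| / 2 < |φ z|; linarith)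
      obtain ⟨s, hs, hso, hzs⟩ := _root_.mem_nhds_iff.1 (inter_mem h1 (hU.mem_nhds hzU))
      exact ⟨s, hso.mem_nhds hzs, hso.measurableSet, fun x hx => (hs hx).2, fun x hx => (hs hx).1⟩
    refine ⟨s, mem_nhdsWithin_of_mem_nhds hs, ?_⟩
    have h2 : IntegrableOn (fun x => φ x • Du x e) s := hI.mono_set hsm.2.1
    have h3 : IntegrableOn (fun x => (φ x)⁻¹ • (φ x • Du x e)) s := by
      refine Integrable.bdd_smul (φ := fun x => (φ x)⁻¹) h2 ((|φ z| / 2)⁻¹) ?_ ?_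
      · exact (hφ.continuous.measurable.inv).aestronglyMeasurable
      · refine (ae_restrict_mem hsm.1).mono fun x hx => ?_
        rw [norm_inv, Real.norm_eq_abs]
        have := abs_pos.2 hφz
        exact inv_anti₀ (by positivity) (hsm.2.2 x hx).le
    refine h3.congr_fun (fun x hx => ?_) hsm.1
    have : φ x ≠ 0 := by
      have h4 := hsm.2.2 x hx
      have := abs_pos.2 hφz
      exact abs_pos.1 (by linarith)
    exact inv_smul_smul₀ this _
  by_cases hφz : φ z ≠ 0
  · exact key φ hφ hφc hφU hφz
  -- a test function vanishing at `z` is a difference of two that do not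
  push Not at hφz
  obtain ⟨ψ, hψU, hψc, hψ, -, hψz⟩ := exists_contDiff_tsupport_subset (n := (⊤ : ℕ∞)) (hU.mem_nhds hzU)
  have hsum := key (fun x => φ x + ψ x) (hφ.add hψ) (hφc.add hψc)
    ((tsupport_add φ ψ).trans (union_subset hφU hψU)) (by simp [hφz, hψz])
  have hψ0 := key ψ hψ hψc hψU (by simp [hψz])
  have hfd : ∀ x, fderiv ℝ (fun x => φ x + ψ x) x = fderiv ℝ φ x + fderiv ℝ ψ x := fun x =>
    fderiv_fun_add (hφ.differentiable (by simp) x) (hψ.differentiable (by simp) x)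
  simp_rw [hfd, add_apply, add_smul] at hsum
  rw [integral_add (hint φ hφ hφc hφU e) (hint ψ hψ hψc hψU e), hψ0, add_zero] at hsum
  exact hsum

/-- A weak differential can be replaced by a locally integrable one with pointwise no larger norm:
itself if it is measurable, and `0` otherwise. -/
lemma exists_locallyIntegrable_weak {n N : ℕ} {U : Set (Rn n)}
    (hU : IsOpen U) {u : Rn n → Rn N} {Du : Rn n → (Rn n →L[ℝ] Rn N)}
    (hw : IsWeakFDerivOn U u Du) :
    ∃ D : Rn n → (Rn n →L[ℝ] Rn N), LocallyIntegrableOn D U volume ∧ (∀ x, ‖D x‖ ≤ ‖Du x‖) ∧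
      ∀ φ : Rn n → ℝ, ContDiff ℝ (⊤ : ℕ∞) φ → HasCompactSupport φ → tsupport φ ⊆ U →
        ∀ e : Rn n, ∫ x in U, (fderiv ℝ φ x e) • u x = - ∫ x in U, φ x • D x e := by
  by_cases hall : ∀ e : Rn n, LocallyIntegrableOn (fun x => Du x e) U volume
  · refine ⟨Du, ?_, fun x => le_rfl, hw.2.2⟩
    have hrep : Du = fun x => ∑ i, ContinuousLinearMap.smulRightL ℝ (Rn n) (Rn N)
        (EuclideanSpace.proj i) (Du x (EuclideanSpace.single i 1)) := by
      funext x
      ext1 y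
      conv_lhs => rw [← (EuclideanSpace.basisFun (Fin n) ℝ).sum_repr y, map_sum]
      simp
    have hm : AEStronglyMeasurable Du (volume.restrict U) := by
      rw [hrep]
      refine Finset.aestronglyMeasurable_fun_sum _ fun i _ => ?_
      exact (ContinuousLinearMap.continuous _).comp_aestronglyMeasurable
        (hall (EuclideanSpace.single i 1)).aestronglyMeasurable
    rw [locallyIntegrableOn_iff hU.isLocallyClosed]
    intro K hKU hK
    exact (integrable_norm_iff (hm.mono_measure (Measure.restrict_mono hKU le_rfl))).1
      (hw.2.1.integrableOn_compact_subset hKU hK)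
  · have hint : ∀ φ : Rn n → ℝ, ContDiff ℝ (⊤ : ℕ∞) φ → HasCompactSupport φ →
        tsupport φ ⊆ U → ∀ e : Rn n, IntegrableOn (fun x => (fderiv ℝ φ x e) • u x) U := by
      intro φ hφ hφc hφU e
      have hd : Continuous (fun x => fderiv ℝ φ x e) :=
        (hφ.continuous_fderiv (by simp)).clm_apply continuous_const
      have hs : ∀ x, x ∉ tsupport φ → fderiv ℝ φ x e = 0 := fun x hx => by
        simp [fderiv_of_notMem_tsupport ℝ hx]
      obtain ⟨C, hC⟩ := hd.bounded_above_of_compact_support (HasCompactSupport.intro hφc hs)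
      have h0 : IntegrableOn u (tsupport φ) := hw.1.integrableOn_compact_subset hφU hφc
      have h1 : IntegrableOn (fun x => (fderiv ℝ φ x e) • u x) (tsupport φ) :=
        Integrable.bdd_smul h0 C hd.aestronglyMeasurable (Eventually.of_forall hC)
      refine Integrable.integrableOn
        ((integrableOn_iff_integrable_of_support_subset (s := tsupport φ) ?_).1 h1)
      intro x hx
      by_contra hxK
      exact hx (by simp [hs x hxK])
    push Not at hall
    obtain ⟨e₁, he₁⟩ := hall
    refine ⟨fun _ => 0, hw.2.1.mono aestronglyMeasurable_const (Eventually.of_forall fun x => by simp),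
      fun x => by simp, ?_⟩
    intro φ hφ hφc hφU e
    have h0 := fun e he => integral_fderiv_smul_eq_zero_of_not_locallyIntegrableOn hU hw (e := e) he
      hφ hφc hφU hint
    simp only [zero_apply, smul_zero, integral_zero, neg_zero]
    by_cases he : LocallyIntegrableOn (fun x => Du x e) U volume
    · have hne : ¬ LocallyIntegrableOn (fun x => Du x (e + e₁)) U volume := by
        intro h
        refine he₁ ((h.sub he).congr (Eventually.of_forall fun x => ?_))
        simp
      have h1 := h0 _ hne
      simp_rw [map_add, add_smul] at h1
      rw [integral_add (hint φ hφ hφc hφU e) (hint φ hφ hφc hφU e₁), h0 _ he₁, add_zero] at h1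
      exact h1
    · exact h0 e he

/-- `D` is a weak differential of `v` on `U`, where `v` and `D` are genuinely measurable functions on
the whole space, locally integrable on `U`. -/
structure IsMeasurableWeak {n N : ℕ} (U : Set (Rn n)) (v : Rn n → Rn N)
    (D : Rn n → (Rn n →L[ℝ] Rn N)) : Prop where
  meas : StronglyMeasurable v
  meas_deriv : StronglyMeasurable D
  locInt : LocallyIntegrableOn v U volume
  locInt_deriv : LocallyIntegrableOn D U volume
  weak : ∀ φ : Rn n → ℝ, ContDiff ℝ (⊤ : ℕ∞) φ → HasCompactSupport φ → tsupport φ ⊆ U →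
    ∀ e : Rn n, ∫ x, (fderiv ℝ φ x e) • v x = - ∫ x, φ x • D x e

/-- Measurable representatives of `u`, of its weak differential and of an auxiliary density `η`.
The differential is set to `0` on the null set where the representatives go wrong, so that its
bounds hold at every point; this makes them stable under restriction to segments. -/
lemma exists_measurable_weak {n N : ℕ} {U : Set (Rn n)}
    (hU : IsOpen U) {u : Rn n → Rn N} {Du : Rn n → (Rn n →L[ℝ] Rn N)}
    (hw : IsWeakFDerivOn U u Du) {η : Rn n → ENNReal} (hη : AEMeasurable η (volume.restrict U)) :
    ∃ (v : Rn n → Rn N) (D : Rn n → (Rn n →L[ℝ] Rn N)) (H : Rn n → ENNReal),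
      IsMeasurableWeak U v D ∧ Measurable H ∧
      (∀ᵐ x ∂(volume.restrict U), v x = u x) ∧
      (∀ x ∈ U, D x = 0 ∨ (‖D x‖ ≤ ‖Du x‖ ∧ H x = η x)) ∧
      ∫⁻ x in U, H x = ∫⁻ x in U, η x := by
  obtain ⟨D₀, hD₀, hDu, hform⟩ := exists_locallyIntegrable_weak hU hw
  have hum := hw.1.aestronglyMeasurable
  have hDm := hD₀.aestronglyMeasurable
  set v := hum.mk u with hv
  set D₁ := hDm.mk D₀ with hD₁
  set H := hη.mk η with hH
  have hvu : ∀ᵐ x ∂(volume.restrict U), v x = u x := hum.ae_eq_mk.mono fun x hx => hx.symm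
  have hDD : ∀ᵐ x ∂(volume.restrict U), D₁ x = D₀ x := hDm.ae_eq_mk.mono fun x hx => hx.symm
  have hHη : ∀ᵐ x ∂(volume.restrict U), H x = η x := hη.ae_eq_mk.mono fun x hx => hx.symm
  set N₀ : Set (Rn n) := {x | ¬ (x ∈ U → D₁ x = D₀ x ∧ H x = η x)} with hN₀
  have hN0 : volume N₀ = 0 :=
    (ae_restrict_iff' hU.measurableSet).1 (hDD.and hHη)
  set M := toMeasurable volume N₀ with hM
  have hM0 : volume M = 0 := by rw [hM, measure_toMeasurable, hN0]
  have hMm : MeasurableSet M := measurableSet_toMeasurable _ _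
  have hgood : ∀ x ∈ U, x ∉ M → D₁ x = D₀ x ∧ H x = η x := by
    intro x hx hxM
    by_contra hc
    exact hxM (subset_toMeasurable volume N₀ (fun h => hc (h hx)))
  set D : Rn n → (Rn n →L[ℝ] Rn N) := Mᶜ.indicator D₁ with hD
  have hDae : ∀ᵐ x ∂(volume.restrict U), D x = D₀ x := by
    have : ∀ᵐ x ∂(volume.restrict U), x ∉ M :=
      ae_restrict_of_ae (measure_eq_zero_iff_ae_notMem.1 hM0)
    filter_upwards [this, hDD] with x hx h1
    simp [hD, hx, h1]
  refine ⟨v, D, H, ⟨hum.stronglyMeasurable_mk, hDm.stronglyMeasurable_mk.indicator hMm.compl,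
    hw.1.congr (hvu.mono fun x hx => hx.symm),
    hD₀.congr (hDae.mono fun x hx => hx.symm), ?_⟩, hη.measurable_mk, hvu, ?_,
    lintegral_congr_ae hHη⟩
  · intro φ hφ hφc hφU e
    have h1 := hform φ hφ hφc hφU e
    have e1 : ∫ x in U, (fderiv ℝ φ x e) • v x = ∫ x, (fderiv ℝ φ x e) • v x :=
      setIntegral_eq_integral_of_forall_compl_eq_zero fun x hx => by
        rw [fderiv_of_notMem_tsupport ℝ (fun h => hx (hφU h)), zero_apply, zero_smul]
    have e2 : ∫ x in U, φ x • D x e = ∫ x, φ x • D x e :=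
      setIntegral_eq_integral_of_forall_compl_eq_zero fun x hx => by
        rw [image_eq_zero_of_notMem_tsupport (fun h => hx (hφU h)), zero_smul]
    have e3 : ∫ x in U, (fderiv ℝ φ x e) • v x = ∫ x in U, (fderiv ℝ φ x e) • u x :=
      integral_congr_ae (hvu.mono fun x hx => by simp only [hx])
    have e4 : ∫ x in U, φ x • D x e = ∫ x in U, φ x • D₀ x e :=
      integral_congr_ae (hDae.mono fun x hx => by simp only [hx])
    rw [← e1, ← e2, e3, e4, h1]
  · intro x hx
    by_cases hxM : x ∈ M
    · left; simp [hD, hxM]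
    · right
      obtain ⟨h1, h2⟩ := hgood x hx hxM
      exact ⟨by simpa [hD, hxM, h1] using hDu x, h2⟩

/-! ### Integral inequalities -/

lemma rpow_lintegral_le {β : Type*} [MeasurableSpace β] (μ : Measure β) [IsProbabilityMeasure μ]
    {f : β → ENNReal} (hf : AEMeasurable f μ) {q : ℝ} (hq : 1 ≤ q) :
    (∫⁻ a, f a ∂μ) ^ q ≤ ∫⁻ a, f a ^ q ∂μ := by
  have hq0 : 0 < q := by linarith
  have h := eLpNorm'_le_eLpNorm'_of_exponent_le one_pos hq μ hf.aestronglyMeasurable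
  have h2 := lintegral_rpow_enorm_eq_rpow_eLpNorm' (μ := μ) (f := f) hq0
  simp only [enorm_eq_self] at h2
  rw [h2]
  refine ENNReal.rpow_le_rpow ?_ hq0.le
  simpa [eLpNorm'] using h

lemma IsMeasurableWeak.ae_shift_le {n N : ℕ} {U S : Set (Rn n)} {v : Rn n → Rn N}
    {D : Rn n → (Rn n →L[ℝ] Rn N)} (hv : IsMeasurableWeak U v D) (hS : IsOpen S) (h : Rn n)
    (hpath : ∀ x ∈ S, ∀ t ∈ Icc (0 : ℝ) 1, x + t • h ∈ U) :
    ∀ᵐ x, x ∈ S → ∀ q : ℝ, 1 ≤ q →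
      ‖v (x + h) - v x‖ₑ ^ q ≤ ‖h‖ₑ ^ q * ∫⁻ t in Ioc (0 : ℝ) 1, ‖D (x + t • h)‖ₑ ^ q := by
  have happ : Continuous fun T : Rn n →L[ℝ] Rn N => T h := by fun_prop
  have hdm : StronglyMeasurable fun x => D x h := happ.comp_stronglyMeasurable hv.meas_deriv
  have hdl : LocallyIntegrableOn (fun x => D x h) U volume := by
    have h1 := (hv.locInt_deriv.norm).smul ‖h‖
    refine h1.mono hdm.aestronglyMeasurable (Eventually.of_forall fun x => ?_)
    simpa [mul_comm] using (D x).le_opNorm h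
  filter_upwards [ae_shift_eq hS h hpath hdm hv.locInt hdl
    (fun φ h1 h2 h3 => hv.weak φ h1 h2 h3 h)] with x hx hxS q hq
  have hq0 : 0 ≤ q := by linarith
  have : IsProbabilityMeasure ((volume : Measure ℝ).restrict (Ioc (0 : ℝ) 1)) :=
    ⟨by simp⟩
  have hm : Measurable fun t : ℝ => ‖D (x + t • h)‖ₑ :=
    (hv.meas_deriv.comp_measurable (by fun_prop : Measurable fun t : ℝ => x + t • h)).enorm
  rw [sub_eq_zero.1 (hx hxS)]
  calc ‖∫ t in Ioc (0 : ℝ) 1, D (x + t • h) h‖ₑ ^ q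
      ≤ (∫⁻ t in Ioc (0 : ℝ) 1, ‖h‖ₑ * ‖D (x + t • h)‖ₑ) ^ q := by
        refine ENNReal.rpow_le_rpow ((enorm_integral_le_lintegral_enorm _).trans ?_) hq0
        refine lintegral_mono fun t => ?_
        rw [mul_comm]
        exact ContinuousLinearMap.le_opENorm _ _
    _ ≤ ∫⁻ t in Ioc (0 : ℝ) 1, (‖h‖ₑ * ‖D (x + t • h)‖ₑ) ^ q :=
        rpow_lintegral_le _ (hm.const_mul _).aemeasurable hq
    _ = ‖h‖ₑ ^ q * ∫⁻ t in Ioc (0 : ℝ) 1, ‖D (x + t • h)‖ₑ ^ q := by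
        simp_rw [ENNReal.mul_rpow_of_nonneg _ _ hq0]
        exact lintegral_const_mul _ (hm.pow_const q)

lemma lintegral_lintegral_shift {n : ℕ} {G : Rn n → ENNReal} (hG : Measurable G) (h : Rn n) :
    ∫⁻ x, ∫⁻ t in Ioc (0 : ℝ) 1, G (x + t • h) = ∫⁻ x, G x := by
  rw [lintegral_lintegral_swap (by fun_prop)]
  simp [lintegral_add_right_eq_self G]

/-- The Poincaré inequality on a ball for a constant exponent, with `‖Dv‖ ^ q` replaced by a
majorant. Both variables run over the ball; for a fixed difference `h` of the two points, the
segments `[x, x + h]` stay in the ball and are translates of one another. -/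
lemma IsMeasurableWeak.ball_poincare {n N : ℕ} {x₀ : Rn n} {r : ℝ} (hr : 0 < r) {v : Rn n → Rn N}
    {D : Rn n → (Rn n →L[ℝ] Rn N)} (hv : IsMeasurableWeak (ball x₀ r) v D)
    (hvi : IntegrableOn v (ball x₀ r)) {H : Rn n → ENNReal} (hH : Measurable H) {q : ℝ}
    (hq : 1 ≤ q) (hDH : ∀ x ∈ ball x₀ r, ‖D x‖ₑ ^ q ≤ H x) :
    ∫⁻ x in ball x₀ r, ‖v x - ⨍ y in ball x₀ r, v y‖ₑ ^ q
      ≤ ENNReal.ofReal (2 * r) ^ q * 2 ^ n * ∫⁻ x in ball x₀ r, H x := by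
  set B := ball x₀ r with hB
  have hq0 : 0 ≤ q := by linarith
  have hBm : MeasurableSet B := measurableSet_ball
  have hB0 : volume B ≠ 0 := (measure_ball_pos volume x₀ hr).ne'
  have hBt : volume B ≠ ⊤ := measure_ball_lt_top.ne
  have hvm : Measurable v := hv.meas.measurable
  -- the average is compared with all values
  have step1 : ∀ x, ‖v x - ⨍ y in B, v y‖ₑ ^ q
      ≤ (volume B)⁻¹ * ∫⁻ y in B, ‖v y - v x‖ₑ ^ q := by
    intro x
    have : IsProbabilityMeasure ((volume B)⁻¹ • volume.restrict B) :=
      ⟨by simp [ENNReal.inv_mul_cancel hB0 hBt]⟩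
    have hvi' : Integrable v ((volume B)⁻¹ • volume.restrict B) :=
      Integrable.smul_measure hvi (by simp [hB0])
    have e : v x - ⨍ y in B, v y = ∫ y, (v x - v y) ∂((volume B)⁻¹ • volume.restrict B) := by
      rw [integral_sub (integrable_const _) hvi', integral_const, setAverage_eq']
      simp
    rw [e]
    calc _ ≤ (∫⁻ y, ‖v y - v x‖ₑ ∂((volume B)⁻¹ • volume.restrict B)) ^ q := by
          refine ENNReal.rpow_le_rpow ((enorm_integral_le_lintegral_enorm _).trans ?_) hq0
          refine lintegral_mono fun y => ?_
          rw [enorm_sub_rev]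
      _ ≤ ∫⁻ y, ‖v y - v x‖ₑ ^ q ∂((volume B)⁻¹ • volume.restrict B) :=
          rpow_lintegral_le _ (by fun_prop) hq
      _ = _ := by rw [lintegral_smul_measure, smul_eq_mul]
  set k : Rn n → Rn n → ENNReal := fun x y =>
    B.indicator 1 x * (B.indicator 1 y * ‖v y - v x‖ₑ ^ q) with hk
  have hone : Measurable (B.indicator (1 : Rn n → ENNReal)) := measurable_one.indicator hBm
  have hkm : Measurable (uncurry k) := by
    refine (hone.comp measurable_fst).mul ((hone.comp measurable_snd).mul ?_)
    exact (((hvm.comp measurable_snd).sub (hvm.comp measurable_fst)).enorm).pow_const q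
  have step2 : ∫⁻ x in B, ∫⁻ y in B, ‖v y - v x‖ₑ ^ q = ∫⁻ h, ∫⁻ x, k x (x + h) := by
    have e1 : ∫⁻ x in B, ∫⁻ y in B, ‖v y - v x‖ₑ ^ q = ∫⁻ x, ∫⁻ y, k x y := by
      rw [← lintegral_indicator hBm]
      refine lintegral_congr fun x => ?_
      by_cases hx : x ∈ B
      · simp only [hk, hx, indicator_of_mem, Pi.one_apply, one_mul]
        rw [← lintegral_indicator hBm]
        refine lintegral_congr fun y => ?_
        by_cases hy : y ∈ B <;> simp [hy]
      · simp [hk, hx]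
    have e2 : ∀ x, ∫⁻ y, k x y = ∫⁻ h, k x (x + h) := fun x =>
      (lintegral_add_left_eq_self (fun y => k x y) x).symm
    rw [e1]
    simp_rw [e2]
    rw [lintegral_lintegral_swap]
    exact (hkm.comp (by fun_prop : Measurable fun z : Rn n × Rn n => (z.1, z.1 + z.2))).aemeasurable
  have step3 : ∀ h, ∫⁻ x, k x (x + h) ≤ (ball (0 : Rn n) (2 * r)).indicator
      (fun _ => ENNReal.ofReal (2 * r) ^ q * ∫⁻ x in B, H x) h := by
    intro h
    by_cases hh : h ∈ ball (0 : Rn n) (2 * r)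
    · rw [indicator_of_mem hh]
      have hSo : IsOpen (B ∩ {x | x + h ∈ B}) :=
        isOpen_ball.inter (isOpen_ball.preimage (continuous_id.add continuous_const))
      have hpath : ∀ x ∈ B ∩ {x | x + h ∈ B}, ∀ t ∈ Icc (0 : ℝ) 1, x + t • h ∈ B := by
        intro x hx t ht
        exact (convex_ball x₀ r).add_smul_mem hx.1 hx.2 ht
      have hnorm : ‖h‖ₑ ≤ ENNReal.ofReal (2 * r) := by
        rw [← ofReal_norm]
        exact ENNReal.ofReal_le_ofReal (mem_ball_zero_iff.1 hh).le
      calc ∫⁻ x, k x (x + h)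
          ≤ ∫⁻ x, ENNReal.ofReal (2 * r) ^ q *
              ∫⁻ t in Ioc (0 : ℝ) 1, B.indicator H (x + t • h) := by
            refine lintegral_mono_ae ?_
            filter_upwards [hv.ae_shift_le hSo h hpath] with x hx
            by_cases hxS : x ∈ B ∩ {x | x + h ∈ B}
            · have h1 : x ∈ B := hxS.1
              have h2 : x + h ∈ B := hxS.2
              simp only [hk, h1, h2, indicator_of_mem, Pi.one_apply, one_mul]
              refine (hx hxS q hq).trans ?_
              refine mul_le_mul' (ENNReal.rpow_le_rpow hnorm hq0) ?_
              refine setLIntegral_mono' measurableSet_Ioc fun t ht => ?_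
              have := hpath x hxS t ⟨ht.1.le, ht.2⟩
              rw [indicator_of_mem this]
              exact hDH _ this
            · have : k x (x + h) = 0 := by
                by_cases h1 : x ∈ B
                · have h2 : x + h ∉ B := fun h2 => hxS ⟨h1, h2⟩
                  simp [hk, h2]
                · simp [hk, h1]
              rw [this]
              exact zero_le
        _ = ENNReal.ofReal (2 * r) ^ q * ∫⁻ x in B, H x := by
            have hm : Measurable (B.indicator H) := hH.indicator hBm
            rw [lintegral_const_mul', lintegral_lintegral_shift hm,
              lintegral_indicator hBm]
            exact ENNReal.rpow_ne_top_of_nonneg hq0 ENNReal.ofReal_ne_top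
    · rw [indicator_of_notMem hh]
      refine le_of_eq (lintegral_eq_zero_of_ae_eq_zero (Eventually.of_forall fun x => ?_))
      by_cases h1 : x ∈ B
      · have h2 : x + h ∉ B := by
          intro h2
          apply hh
          rw [mem_ball_zero_iff]
          have e : h = (x + h) - x := by abel
          rw [e, ← dist_eq_norm]
          have := dist_triangle_right (x + h) x x₀
          have a1 := mem_ball.1 h1
          have a2 := mem_ball.1 h2
          linarith
        simp [hk, h2]
      · simp [hk, h1]
  have hvol : volume (ball (0 : Rn n) (2 * r)) = 2 ^ n * volume B := by
    rw [Measure.addHaar_ball_mul_of_pos volume _ two_pos, hB, Measure.addHaar_ball_center volume x₀]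
    simp
  calc ∫⁻ x in B, ‖v x - ⨍ y in B, v y‖ₑ ^ q
      ≤ ∫⁻ x in B, (volume B)⁻¹ * ∫⁻ y in B, ‖v y - v x‖ₑ ^ q := lintegral_mono fun x => step1 x
    _ = (volume B)⁻¹ * ∫⁻ h, ∫⁻ x, k x (x + h) := by
        rw [lintegral_const_mul' _ _ (by simp [hB0]), step2]
    _ ≤ (volume B)⁻¹ * ∫⁻ h, (ball (0 : Rn n) (2 * r)).indicator
          (fun _ => ENNReal.ofReal (2 * r) ^ q * ∫⁻ x in B, H x) h := by
        gcongr with h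
        exact step3 h
    _ = ((volume B)⁻¹ * volume B) * (ENNReal.ofReal (2 * r) ^ q * 2 ^ n * ∫⁻ x in B, H x) := by
        rw [lintegral_indicator measurableSet_ball, setLIntegral_const, hvol]
        ring
    _ = _ := by rw [ENNReal.inv_mul_cancel hB0 hBt, one_mul]

/-! ### Freezing the exponent -/

/-- The Hölder continuity of the exponent enters here: an exponent gap of order `ρ ^ α` costs only a
bounded factor on the scale `ρ`, because `ρ ^ α * log (1 / ρ) ≤ 1 / α`. -/
lemma rpow_div_le_freeze {α ρ a b q s M γ : ℝ} (hα : 0 < α) (hρ : 0 < ρ) (hρ1 : ρ ≤ 1)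
    (ha : 0 ≤ a) (hab : a ≤ b) (hb : 1 ≤ b) (hq : 1 ≤ q) (hqs : q ≤ s)
    (hgap : s - q ≤ M * ρ ^ α) (hsγ : s ≤ γ) :
    (a / ρ) ^ s ≤ b ^ γ * Real.exp (M / α) * (a / ρ) ^ q := by
  rcases ha.eq_or_lt with rfl | ha
  · rw [zero_div, Real.zero_rpow (by linarith), Real.zero_rpow (by linarith), mul_zero]
  have hpos : 0 < a / ρ := by positivity
  have e : (a / ρ) ^ s = (a / ρ) ^ (s - q) * (a / ρ) ^ q := by
    rw [← Real.rpow_add hpos]; congr 1; ring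
  rw [e]
  refine mul_le_mul_of_nonneg_right ?_ (by positivity)
  rw [div_eq_mul_inv, Real.mul_rpow ha.le (by positivity)]
  refine mul_le_mul ?_ ?_ (by positivity) (by positivity)
  · calc a ^ (s - q) ≤ b ^ (s - q) := Real.rpow_le_rpow ha.le hab (by linarith)
      _ ≤ b ^ γ := Real.rpow_le_rpow_of_exponent_le hb (by linarith)
  · rw [Real.rpow_def_of_pos (by positivity)]
    refine Real.exp_le_exp.2 ?_
    have hlog : Real.log ρ⁻¹ ≤ ρ⁻¹ ^ α / α := Real.log_le_rpow_div (by positivity) hα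
    have hlog0 : 0 ≤ Real.log ρ⁻¹ := Real.log_nonneg ((one_le_inv₀ hρ).2 hρ1)
    have hρα : 0 < ρ ^ α := by positivity
    calc Real.log ρ⁻¹ * (s - q) ≤ Real.log ρ⁻¹ * (M * ρ ^ α) := by gcongr
      _ ≤ (ρ⁻¹ ^ α / α) * (M * ρ ^ α) := by
          gcongr
          linarith
      _ = M / α := by
          rw [Real.inv_rpow hρ.le]
          field_simp

lemma enorm_rpow_le_one_add {E F : Type*} [NormedAddCommGroup E] [NormedAddCommGroup F] {a : E}
    {b : F} (hab : ‖a‖ ≤ ‖b‖) {q s : ℝ} (hq : 0 ≤ q) (hqs : q ≤ s) :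
    ‖a‖ₑ ^ q ≤ 1 + ENNReal.ofReal (‖b‖ ^ s) := by
  rw [← ofReal_norm, ENNReal.ofReal_rpow_of_nonneg (norm_nonneg _) hq, ← ENNReal.ofReal_one,
    ← ENNReal.ofReal_add zero_le_one (by positivity)]
  refine ENNReal.ofReal_le_ofReal ((Real.rpow_le_rpow (norm_nonneg _) hab hq).trans ?_)
  rcases le_total ‖b‖ 1 with h | h
  · have := Real.rpow_le_one (norm_nonneg b) h hq
    have : 0 ≤ ‖b‖ ^ s := by positivity
    linarith
  · have := Real.rpow_le_rpow_of_exponent_le h hqs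
    linarith

lemma ofReal_norm_smul_rpow_le {F : Type*} [NormedAddCommGroup F] [NormedSpace ℝ F]
    {α ρ b q s M γ : ℝ} (hα : 0 < α) (hρ : 0 < ρ) (hρ1 : ρ ≤ 1) {a : F}
    (hab : ‖a‖ ≤ b) (hb : 1 ≤ b) (hq : 1 ≤ q) (hqs : q ≤ s)
    (hgap : s - q ≤ M * ρ ^ α) (hsγ : s ≤ γ) :
    ENNReal.ofReal (‖(1 / ρ) • a‖ ^ s)
      ≤ ENNReal.ofReal (b ^ γ * Real.exp (M / α)) * (ENNReal.ofReal (1 / ρ) ^ q * ‖a‖ₑ ^ q) := by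
  have hq0 : 0 ≤ q := by linarith
  have e : ‖(1 / ρ) • a‖ = ‖a‖ / ρ := by
    rw [norm_smul, Real.norm_of_nonneg (by positivity)]; ring
  have e2 : ENNReal.ofReal (1 / ρ) ^ q * ‖a‖ₑ ^ q = ENNReal.ofReal ((‖a‖ / ρ) ^ q) := by
    rw [← ENNReal.mul_rpow_of_nonneg _ _ hq0, ← ofReal_norm,
      ← ENNReal.ofReal_mul (by positivity), ENNReal.ofReal_rpow_of_nonneg (by positivity) hq0]
    congr 2; ring
  rw [e, e2, ← ENNReal.ofReal_mul (by positivity)]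
  exact ENNReal.ofReal_le_ofReal
    (rpow_div_le_freeze hα hρ hρ1 (norm_nonneg a) hab hb hq hqs hgap hsγ)

lemma setIntegral_le_of_setLIntegral_le {E : Type*} [MeasurableSpace E] {μ : Measure E} {A : Set E}
    (hA : μ A ≠ ⊤) {f g : E → ℝ} (hf : ∀ x, 0 ≤ f x) (hg : ∀ x, 0 ≤ g x)
    (hgi : IntegrableOn g A μ) {c : ℝ} (hc : 0 ≤ c)
    (h : ∫⁻ x in A, ENNReal.ofReal (f x) ∂μ
      ≤ ENNReal.ofReal c * ∫⁻ x in A, (1 + ENNReal.ofReal (g x)) ∂μ) :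
    ∫ x in A, f x ∂μ ≤ c * ((∫ x in A, g x ∂μ) + (μ A).toReal) := by
  have hg0 : 0 ≤ ∫ x in A, g x ∂μ := integral_nonneg hg
  have hR : 0 ≤ c * ((∫ x in A, g x ∂μ) + (μ A).toReal) := by positivity
  by_cases hfi : IntegrableOn f A μ
  · rw [← ENNReal.ofReal_le_ofReal_iff hR,
      ofReal_integral_eq_lintegral_ofReal hfi (Eventually.of_forall hf)]
    refine h.trans_eq ?_
    rw [lintegral_add_left measurable_const, setLIntegral_const, one_mul,
      ENNReal.ofReal_mul hc, ENNReal.ofReal_add hg0 ENNReal.toReal_nonneg,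
      ENNReal.ofReal_toReal hA,
      ofReal_integral_eq_lintegral_ofReal hgi (Eventually.of_forall hg), add_comm]
  -- a non-integrable `f` has integral `0`
  · rw [integral_undef hfi]
    exact hR

/-! ### The two inequalities -/

lemma IsWeakFDerivOn.mono_open {n N : ℕ} {Ω U : Set (Rn n)} (hΩ : IsOpen Ω) (hUΩ : U ⊆ Ω)
    {u : Rn n → Rn N} {Du : Rn n → (Rn n →L[ℝ] Rn N)} (hw : IsWeakFDerivOn Ω u Du) :
    IsWeakFDerivOn U u Du := by
  refine ⟨hw.1.mono_set hUΩ, hw.2.1.mono_set hUΩ, fun φ hφ hφc hφU e => ?_⟩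
  have e1 : ∫ x in Ω, (fderiv ℝ φ x e) • u x = ∫ x in U, (fderiv ℝ φ x e) • u x := by
    refine setIntegral_eq_of_subset_of_forall_sdiff_eq_zero hΩ.measurableSet hUΩ fun x hx => ?_
    rw [fderiv_of_notMem_tsupport ℝ (fun h => hx.2 (hφU h)), zero_apply, zero_smul]
  have e2 : ∫ x in Ω, φ x • Du x e = ∫ x in U, φ x • Du x e := by
    refine setIntegral_eq_of_subset_of_forall_sdiff_eq_zero hΩ.measurableSet hUΩ fun x hx => ?_
    rw [image_eq_zero_of_notMem_tsupport (fun h => hx.2 (hφU h)), zero_smul]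
  rw [← e1, ← e2, hw.2.2 φ hφ hφc (hφU.trans hUΩ) e]

lemma poincare_ball {n N : ℕ} {α γ₁ γ₂ Cp K : ℝ} {Ω : Set (Rn n)} (hΩ : IsOpen Ω)
    {p : Rn n → ℝ} (hp : Pconds Ω p α γ₁ γ₂ Cp) {w : Rn n → Rn N}
    {Dw : Rn n → (Rn n →L[ℝ] Rn N)} (hw : MemW1pLoc Ω p w Dw) {x₀ : Rn n} {r : ℝ} (hr : 0 < r)
    (hr1 : r ≤ 1) (hBΩ : closedBall x₀ r ⊆ Ω) (hK : ∀ x ∈ ball x₀ r, ‖w x‖ ≤ K) :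
    ∫ x in ball x₀ r, ‖(1 / r) • (w x - ⨍ y in ball x₀ r, w y)‖ ^ p x
      ≤ (max 1 (2 * K) ^ γ₂ * Real.exp (2 * |Cp| / α) * 2 ^ γ₂ * 2 ^ n)
        * ((∫ x in ball x₀ r, ‖Dw x‖ ^ p x) + (volume (ball x₀ r)).toReal) := by
  obtain ⟨hα, -, hhol, hγ₁, hbd⟩ := hp
  set B := ball x₀ r with hB
  have hBB : B ⊆ closedBall x₀ r := ball_subset_closedBall
  have hB' : B ⊆ Ω := hBB.trans hBΩ
  have hBm : MeasurableSet B := measurableSet_ball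
  have hB0 : volume B ≠ 0 := (measure_ball_pos volume x₀ hr).ne'
  have hBt : volume B ≠ ⊤ := measure_ball_lt_top.ne
  obtain ⟨hwi, -, -, hDi⟩ := hw.2 _ (isCompact_closedBall x₀ r) hBΩ
  replace hwi := hwi.mono_set hBB
  replace hDi := hDi.mono_set hBB
  have hx₀ : x₀ ∈ B := mem_ball_self hr
  set q : ℝ := max 1 (p x₀ - |Cp| * r ^ α) with hq
  have hq1 : 1 ≤ q := le_max_left _ _
  have hq0 : 0 ≤ q := by linarith
  have hosc : ∀ x ∈ B, |p x - p x₀| ≤ |Cp| * r ^ α := by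
    intro x hx
    refine (hhol x (hB' hx) x₀ (hB' hx₀)).trans ?_
    have : dist x x₀ ^ α ≤ r ^ α :=
      Real.rpow_le_rpow dist_nonneg (mem_ball.1 hx).le hα.le
    exact mul_le_mul (le_abs_self _) this (by positivity) (abs_nonneg _)
  have hqp : ∀ x ∈ B, q ≤ p x := by
    intro x hx
    have h1 := (abs_le.1 (hosc x hx)).1
    have h2 := (hbd x (hB' hx)).1
    exact max_le (by linarith) (by linarith)
  have hgap : ∀ x ∈ B, p x - q ≤ 2 * |Cp| * r ^ α := by
    intro x hx
    have h1 := (abs_le.1 (hosc x hx)).2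
    have h2 : p x₀ - |Cp| * r ^ α ≤ q := le_max_right _ _
    linarith
  have hqγ : q ≤ γ₂ := (hqp x₀ hx₀).trans (hbd x₀ (hB' hx₀)).2
  have hηm : AEMeasurable (fun x => 1 + ENNReal.ofReal (‖Dw x‖ ^ p x)) (volume.restrict B) :=
    hDi.aemeasurable.ennreal_ofReal.const_add 1
  obtain ⟨v, D, H, hv, hH, hvw, hDH, hHint⟩ :=
    exists_measurable_weak isOpen_ball (hw.1.mono_open hΩ hB') hηm
  have hDH' : ∀ x ∈ B, ‖D x‖ₑ ^ q ≤ H x := by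
    intro x hx
    rcases hDH x hx with h | ⟨h1, h2⟩
    · rw [← ofReal_norm, h, norm_zero, ENNReal.ofReal_zero,
        ENNReal.zero_rpow_of_pos (by linarith)]
      exact zero_le
    · rw [h2]
      exact enorm_rpow_le_one_add h1 hq0 (hqp x hx)
  have hvi : IntegrableOn v B := hwi.congr (hvw.mono fun x hx => hx.symm)
  have hav : ⨍ y in B, v y = ⨍ y in B, w y := average_congr hvw
  have hcore := hv.ball_poincare hr hvi hH hq1 hDH'
  rw [hav, hHint] at hcore
  set m := ⨍ y in B, w y with hm
  have hmK : ‖m‖ ≤ K := by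
    have := (convex_closedBall (0 : Rn N) K).set_average_mem isClosed_closedBall hB0 hBt
      (f := w) ((ae_restrict_mem hBm).mono fun x hx => by simpa using hK x hx) hwi
    simpa using this
  refine setIntegral_le_of_setLIntegral_le hBt (fun x => by positivity) (fun x => by positivity) hDi
    (by positivity) ?_
  set C₀ : ℝ := max 1 (2 * K) ^ γ₂ * Real.exp (2 * |Cp| / α) with hC₀
  have hC₀0 : 0 ≤ C₀ := by positivity
  have hpt : ∀ᵐ x ∂(volume.restrict B), ENNReal.ofReal (‖(1 / r) • (w x - m)‖ ^ p x)
      ≤ (ENNReal.ofReal C₀ * ENNReal.ofReal (1 / r) ^ q) * ‖v x - m‖ₑ ^ q := by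
    filter_upwards [hvw, ae_restrict_mem hBm] with x hx hxB
    rw [hx, mul_assoc]
    refine ofReal_norm_smul_rpow_le hα hr hr1 ?_ (le_max_left _ _) hq1 (hqp x hxB)
      (hgap x hxB) (hbd x (hB' hxB)).2
    refine (norm_sub_le _ _).trans (le_trans ?_ (le_max_right _ _))
    linarith [hK x hxB]
  refine (lintegral_mono_ae hpt).trans ?_
  rw [lintegral_const_mul' _ _ (ENNReal.mul_ne_top ENNReal.ofReal_ne_top
    (ENNReal.rpow_ne_top_of_nonneg hq0 ENNReal.ofReal_ne_top))]
  refine (mul_le_mul_right hcore _).trans ?_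
  have hc1 : ENNReal.ofReal (1 / r) ^ q * ENNReal.ofReal (2 * r) ^ q
      ≤ ENNReal.ofReal (2 ^ γ₂) := by
    rw [← ENNReal.mul_rpow_of_nonneg _ _ hq0, ← ENNReal.ofReal_mul (by positivity),
      show 1 / r * (2 * r) = 2 by field_simp, ENNReal.ofReal_rpow_of_nonneg zero_le_two hq0]
    exact ENNReal.ofReal_le_ofReal (Real.rpow_le_rpow_of_exponent_le one_le_two hqγ)
  have hc2 : ENNReal.ofReal (C₀ * 2 ^ γ₂ * 2 ^ n)
      = ENNReal.ofReal C₀ * ENNReal.ofReal (2 ^ γ₂) * 2 ^ n := by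
    rw [ENNReal.ofReal_mul (by positivity), ENNReal.ofReal_mul hC₀0,
      ENNReal.ofReal_pow zero_le_two]
    simp
  rw [hc2]
  calc _ = ENNReal.ofReal C₀ * (ENNReal.ofReal (1 / r) ^ q * ENNReal.ofReal (2 * r) ^ q) * 2 ^ n
        * ∫⁻ x in B, (1 + ENNReal.ofReal (‖Dw x‖ ^ p x)) := by ring
    _ ≤ _ := by gcongr

/-- Moving a point of the cone `‖y‖ ≤ n ⟪e, y⟫` by `n ρ` in the direction `e` increases its norm by
at least `ρ`. -/
lemma norm_add_le_norm_add_smul {n : ℕ} (hn : 1 ≤ n) {e y : Rn n} (he : ‖e‖ = 1) {ρ : ℝ}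
    (hρ : 0 ≤ ρ) (hy : ‖y‖ ≤ n * inner ℝ e y) : ‖y‖ + ρ ≤ ‖y + ((n : ℝ) * ρ) • e‖ := by
  have hn' : (1 : ℝ) ≤ n := by exact_mod_cast hn
  refine le_of_sq_le_sq ?_ (norm_nonneg _)
  rw [norm_add_sq_real, norm_smul, he, inner_smul_right, real_inner_comm,
    Real.norm_of_nonneg (by positivity)]
  have h1 : ρ * ‖y‖ ≤ ρ * (n * inner ℝ e y) := by gcongr
  have h2 : 1 * ρ ^ 2 ≤ (n : ℝ) ^ 2 * ρ ^ 2 := by gcongr; nlinarith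
  nlinarith

lemma norm_le_norm_add_smul {n : ℕ} {e y : Rn n} {s : ℝ} (hs : 0 ≤ s)
    (hy : 0 ≤ inner ℝ e y) : ‖y‖ ≤ ‖y + s • e‖ := by
  refine le_of_sq_le_sq ?_ (norm_nonneg _)
  rw [norm_add_sq_real, inner_smul_right, real_inner_comm]
  have : 0 ≤ s * inner ℝ e y := by positivity
  nlinarith [sq_nonneg ‖s • e‖]

/-- The part of the annulus estimate coming from the cone around the unit vector `e`. Translating by
`n ρ e` moves this part of the annulus out of the ball, where the zero extension vanishes, along
segments on which it is weakly differentiable. The frozen exponent `q` depends on the point. -/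
lemma poincare_annulus_cone {n N : ℕ} (hn : 1 ≤ n) {α γ₁ γ₂ Cp K : ℝ} {Ω : Set (Rn n)}
    {p : Rn n → ℝ} (hp : Pconds Ω p α γ₁ γ₂ Cp) {x₀ : Rn n} {r θ : ℝ} (hr : 0 < r)
    (hr1 : r ≤ 1) (hθ : 0 < θ) (hθ1 : θ < 1) (hBΩ : closedBall x₀ r ⊆ Ω) {w : Rn n → Rn N}
    {Dw : Rn n → (Rn n →L[ℝ] Rn N)} {A U : Set (Rn n)}
    (hA : A = ball x₀ r \ closedBall x₀ (r * (1 - θ))) (hU : U = (closedBall x₀ (r * (1 - θ)))ᶜ)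
    (hDi : IntegrableOn (fun x => ‖Dw x‖ ^ p x) A) (hK : ∀ x ∈ A, ‖w x‖ ≤ K)
    (hw : IsWeakFDerivOn U (A.indicator w) (A.indicator Dw)) {e : Rn n} (he : ‖e‖ = 1) :
    ∫⁻ x in A ∩ {x | ‖x - x₀‖ ≤ n * inner ℝ e (x - x₀)},
        ENNReal.ofReal (‖(1 / (r * θ)) • w x‖ ^ p x)
      ≤ ENNReal.ofReal (max 1 K ^ γ₂ * Real.exp (|Cp| * n ^ α / α) * n ^ γ₂)
        * ∫⁻ x in A, (1 + ENNReal.ofReal (‖Dw x‖ ^ p x)) := by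
  obtain ⟨hα, -, hhol, hγ₁, hbd⟩ := hp
  have hn' : (1 : ℝ) ≤ n := by exact_mod_cast hn
  have hAm : MeasurableSet A := hA ▸ measurableSet_ball.diff measurableSet_closedBall
  have hUo : IsOpen U := hU ▸ isClosed_closedBall.isOpen_compl
  have hAU : A ⊆ U := by rw [hA, hU]; exact fun x hx => hx.2
  have hAΩ : A ⊆ Ω := by rw [hA]; exact fun x hx => hBΩ (ball_subset_closedBall hx.1)
  have hUmem : ∀ x, x ∈ U ↔ r * (1 - θ) < ‖x - x₀‖ := by
    intro x; rw [hU, mem_compl_iff, mem_closedBall, dist_eq_norm, not_le]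
  set ρ := r * θ with hρdef
  have hρ : 0 < ρ := by positivity
  have hρ1 : ρ ≤ 1 := by nlinarith
  set η : Rn n → ENNReal := A.indicator (fun x => 1 + ENNReal.ofReal (‖Dw x‖ ^ p x)) with hη
  have hηm : AEMeasurable η (volume.restrict U) := by
    refine AEMeasurable.restrict ?_
    rw [hη, aemeasurable_indicator_iff hAm]
    exact hDi.aemeasurable.ennreal_ofReal.const_add 1
  obtain ⟨v, D, H, hv, hH, hvw, hDH, hHint⟩ := exists_measurable_weak hUo hw hηm
  have hηint : ∫⁻ x in U, η x = ∫⁻ x in A, (1 + ENNReal.ofReal (‖Dw x‖ ^ p x)) := by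
    rw [hη, setLIntegral_indicator hAm, inter_eq_left.2 hAU]
  set h : Rn n := ((n : ℝ) * ρ) • e with hh
  have hhn : ‖h‖ = n * ρ := by
    rw [hh, norm_smul, he, mul_one, Real.norm_of_nonneg (by positivity)]
  set S : Set (Rn n) := U ∩ {x | 0 < inner ℝ e (x - x₀)} with hS
  have hSo : IsOpen S := hUo.inter (isOpen_lt continuous_const (by fun_prop))
  have hpath : ∀ x ∈ S, ∀ t ∈ Icc (0 : ℝ) 1, x + t • h ∈ U := by
    intro x hx t ht
    rw [hUmem]
    refine ((hUmem x).1 hx.1).trans_le ?_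
    rw [show x + t • h - x₀ = x - x₀ + (t * (n * ρ)) • e by rw [hh, smul_smul]; abel]
    have ht0 := ht.1
    exact norm_le_norm_add_smul (by positivity) (le_of_lt hx.2)
  have hvw' : ∀ᵐ x, x ∈ U → v x = A.indicator w x := (ae_restrict_iff' hUo.measurableSet).1 hvw
  have hvwh : ∀ᵐ x, x + h ∈ U → v (x + h) = A.indicator w (x + h) :=
    (measurePreserving_add_right volume h).quasiMeasurePreserving.ae hvw'
  set G : Rn n → ENNReal := U.indicator H with hG
  have hGm : Measurable G := hH.indicator hUo.measurableSet
  set C₀ : ℝ := max 1 K ^ γ₂ * Real.exp (|Cp| * n ^ α / α) with hC₀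
  have hC₀0 : 0 ≤ C₀ := by positivity
  have hpt : ∀ᵐ x ∂(volume.restrict (A ∩ {x | ‖x - x₀‖ ≤ n * inner ℝ e (x - x₀)})),
      ENNReal.ofReal (‖(1 / ρ) • w x‖ ^ p x)
        ≤ ENNReal.ofReal (C₀ * n ^ γ₂) * ∫⁻ t in Ioc (0 : ℝ) 1, G (x + t • h) := by
    have hcone : MeasurableSet {x : Rn n | ‖x - x₀‖ ≤ n * inner ℝ e (x - x₀)} :=
      (isClosed_le (by fun_prop) (by fun_prop)).measurableSet
    refine (ae_restrict_iff' (hAm.inter hcone)).2 ?_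
    filter_upwards [hvw', hvwh, hv.ae_shift_le hSo h hpath] with x hx1 hx2 hx3 hx
    obtain ⟨hxA, hxC⟩ := hx
    rw [mem_ofPred_eq] at hxC
    have hxU := hAU hxA
    have hnorm : 0 < ‖x - x₀‖ :=
      lt_of_le_of_lt (mul_nonneg hr.le (by linarith)) ((hUmem x).1 hxU)
    have hinner : 0 < inner ℝ e (x - x₀) := by
      by_contra hneg
      rw [not_lt] at hneg
      nlinarith
    have hxS : x ∈ S := ⟨hxU, hinner⟩
    have hfar : r < ‖x + h - x₀‖ := by
      rw [show x + h - x₀ = x - x₀ + h by abel]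
      refine lt_of_lt_of_le ?_ (norm_add_le_norm_add_smul hn he hρ.le hxC)
      have := (hUmem x).1 hxU
      rw [hρdef]
      linarith
    have hxhA : x + h ∉ A := by
      rw [hA]
      intro hmem
      have := mem_ball.1 hmem.1
      rw [dist_eq_norm] at this
      linarith
    have hxhU : x + h ∈ U := by simpa using hpath x hxS 1 (by simp)
    have hvh : ‖v (x + h) - v x‖ₑ = ‖w x‖ₑ := by
      rw [hx2 hxhU, hx1 hxU, indicator_of_notMem hxhA, indicator_of_mem hxA, zero_sub, enorm_neg]
    set q : ℝ := max 1 (p x - |Cp| * (n * ρ) ^ α) with hq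
    have hq1 : 1 ≤ q := le_max_left _ _
    have hq0 : 0 ≤ q := by linarith
    have hpx := hbd x (hAΩ hxA)
    have hqx : q ≤ p x := by
      have : 0 ≤ |Cp| * (n * ρ) ^ α := by positivity
      exact max_le (by linarith) (by linarith)
    have hgap : p x - q ≤ |Cp| * n ^ α * ρ ^ α := by
      have h2 : p x - |Cp| * (n * ρ) ^ α ≤ q := le_max_right _ _
      rw [Real.mul_rpow (by positivity) hρ.le] at h2
      linarith
    have hDG : ∀ t ∈ Ioc (0 : ℝ) 1, ‖D (x + t • h)‖ₑ ^ q ≤ G (x + t • h) := by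
      intro t ht
      have hy : x + t • h ∈ U := hpath x hxS t ⟨ht.1.le, ht.2⟩
      set y := x + t • h with hydef
      have hzero : D y = 0 → ‖D y‖ₑ ^ q ≤ G y := by
        intro h0
        rw [← ofReal_norm, h0, norm_zero, ENNReal.ofReal_zero,
          ENNReal.zero_rpow_of_pos (by linarith)]
        exact zero_le
      rcases hDH y hy with h0 | ⟨h1, h2⟩
      · exact hzero h0
      by_cases hyA : y ∈ A
      · rw [hG, indicator_of_mem hy, h2, hη, indicator_of_mem hyA]
        rw [indicator_of_mem hyA] at h1
        refine enorm_rpow_le_one_add h1 hq0 ?_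
        have hd : dist x y ≤ n * ρ := by
          rw [dist_eq_norm, hydef, sub_add_cancel_left, norm_neg, norm_smul, hhn,
            Real.norm_of_nonneg ht.1.le]
          exact mul_le_of_le_one_left (by positivity) ht.2
        have hd' : |p x - p y| ≤ |Cp| * (n * ρ) ^ α := by
          refine (hhol x (hAΩ hxA) y (hAΩ hyA)).trans ?_
          exact mul_le_mul (le_abs_self _) (Real.rpow_le_rpow dist_nonneg hd hα.le)
            (by positivity) (abs_nonneg _)
        have h3 := (abs_le.1 hd').2
        have h4 := (hbd y (hAΩ hyA)).1
        exact max_le (by linarith) (by linarith)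
      · rw [indicator_of_notMem hyA, norm_zero] at h1
        exact hzero (norm_le_zero_iff.1 h1)
    have hstep := hx3 hxS q hq1
    rw [hvh] at hstep
    have hbase := ofReal_norm_smul_rpow_le hα hρ hρ1 (a := w x) (b := max 1 K)
      ((hK x hxA).trans (le_max_right _ _)) (le_max_left _ _) hq1 hqx hgap hpx.2
    refine hbase.trans ?_
    have hc1 : ENNReal.ofReal (1 / ρ) ^ q * ‖h‖ₑ ^ q ≤ ENNReal.ofReal (n ^ γ₂) := by
      rw [← ofReal_norm, hhn, ← ENNReal.mul_rpow_of_nonneg _ _ hq0,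
        ← ENNReal.ofReal_mul (by positivity),
        show 1 / ρ * (n * ρ) = n by field_simp, ENNReal.ofReal_rpow_of_nonneg (by positivity) hq0]
      exact ENNReal.ofReal_le_ofReal
        (Real.rpow_le_rpow_of_exponent_le hn' (hqx.trans hpx.2))
    rw [ENNReal.ofReal_mul hC₀0, mul_assoc (ENNReal.ofReal C₀)]
    refine mul_le_mul_right ?_ _
    calc ENNReal.ofReal (1 / ρ) ^ q * ‖w x‖ₑ ^ q
        ≤ ENNReal.ofReal (1 / ρ) ^ q
          * (‖h‖ₑ ^ q * ∫⁻ t in Ioc (0 : ℝ) 1, ‖D (x + t • h)‖ₑ ^ q) := by gcongr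
      _ = (ENNReal.ofReal (1 / ρ) ^ q * ‖h‖ₑ ^ q)
          * ∫⁻ t in Ioc (0 : ℝ) 1, ‖D (x + t • h)‖ₑ ^ q := by ring
      _ ≤ _ := mul_le_mul' hc1 (setLIntegral_mono' measurableSet_Ioc hDG)
  calc _ ≤ ∫⁻ x in A ∩ {x | ‖x - x₀‖ ≤ n * inner ℝ e (x - x₀)},
          ENNReal.ofReal (C₀ * n ^ γ₂) * ∫⁻ t in Ioc (0 : ℝ) 1, G (x + t • h) :=
        lintegral_mono_ae hpt
    _ ≤ ∫⁻ x, ENNReal.ofReal (C₀ * n ^ γ₂) * ∫⁻ t in Ioc (0 : ℝ) 1, G (x + t • h) :=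
        setLIntegral_le_lintegral _ _
    _ = _ := by
        rw [lintegral_const_mul' _ _ ENNReal.ofReal_ne_top, lintegral_lintegral_shift hGm h, hG,
          lintegral_indicator hUo.measurableSet, hHint, hηint]

/-- The `2 n` cones of aperture `1 / n` around the coordinate half-axes cover the space. -/
lemma exists_norm_le_mul_inner {n : ℕ} (hn : 1 ≤ n) (y : Rn n) :
    ∃ i : Fin n × Bool,
      ‖y‖ ≤ n * inner ℝ (EuclideanSpace.single i.1 (if i.2 then (1 : ℝ) else -1)) y := by
  by_contra! hcon
  have hlt : ∀ i : Fin n, (n : ℝ) * |y i| < ‖y‖ := by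
    intro i
    have h1 := hcon (i, true)
    have h2 := hcon (i, false)
    simp [EuclideanSpace.inner_single_left] at h1 h2
    rcases abs_cases (y i) with h | h <;> rw [h.1] <;> linarith
  have hsum : ‖y‖ ≤ ∑ i, |y i| := by
    conv_lhs => rw [← (EuclideanSpace.basisFun (Fin n) ℝ).sum_repr y]
    refine (norm_sum_le _ _).trans_eq ?_
    refine Finset.sum_congr rfl fun i _ => ?_
    rw [norm_smul, (EuclideanSpace.basisFun (Fin n) ℝ).norm_eq_one, mul_one]
    simp
  have hne : (Finset.univ : Finset (Fin n)).Nonempty := ⟨⟨0, hn⟩, Finset.mem_univ _⟩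
  have h2 : ∑ i, (n : ℝ) * |y i| < ∑ _i : Fin n, ‖y‖ :=
    Finset.sum_lt_sum_of_nonempty hne fun i _ => hlt i
  rw [← Finset.mul_sum, Finset.sum_const, Finset.card_univ, Fintype.card_fin, nsmul_eq_mul] at h2
  have : (n : ℝ) * ‖y‖ ≤ n * ∑ i, |y i| := by gcongr
  linarith

lemma poincare_annulus {n N : ℕ} (hn : 1 ≤ n) {α γ₁ γ₂ Cp K : ℝ} {Ω : Set (Rn n)}
    {p : Rn n → ℝ} (hp : Pconds Ω p α γ₁ γ₂ Cp) {x₀ : Rn n} {r θ : ℝ} (hr : 0 < r)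
    (hr1 : r ≤ 1) (hθ : 0 < θ) (hθ1 : θ < 1) (hBΩ : closedBall x₀ r ⊆ Ω) {w : Rn n → Rn N}
    {Dw : Rn n → (Rn n →L[ℝ] Rn N)}
    (hDi : IntegrableOn (fun x => ‖Dw x‖ ^ p x) (ball x₀ r \ closedBall x₀ (r * (1 - θ))))
    (hK : ∀ x ∈ ball x₀ r \ closedBall x₀ (r * (1 - θ)), ‖w x‖ ≤ K)
    (hw : IsWeakFDerivOn ((closedBall x₀ (r * (1 - θ)))ᶜ)
      ((ball x₀ r \ closedBall x₀ (r * (1 - θ))).indicator w)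
      ((ball x₀ r \ closedBall x₀ (r * (1 - θ))).indicator Dw)) :
    ∫ x in ball x₀ r \ closedBall x₀ (r * (1 - θ)), ‖(1 / (r * θ)) • w x‖ ^ p x
      ≤ (2 * n * (max 1 K ^ γ₂ * Real.exp (|Cp| * n ^ α / α) * n ^ γ₂))
        * ((∫ x in ball x₀ r \ closedBall x₀ (r * (1 - θ)), ‖Dw x‖ ^ p x)
          + (volume (ball x₀ r \ closedBall x₀ (r * (1 - θ)))).toReal) := by
  set A := ball x₀ r \ closedBall x₀ (r * (1 - θ)) with hA
  have hAt : volume A ≠ ⊤ := measure_ne_top_of_subset sdiff_subset measure_ball_lt_top.ne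
  refine setIntegral_le_of_setLIntegral_le hAt (fun x => by positivity) (fun x => by positivity) hDi
    (by positivity) ?_
  set e : Fin n × Bool → Rn n :=
    fun i => EuclideanSpace.single i.1 (if i.2 then (1 : ℝ) else -1) with he
  have he1 : ∀ i, ‖e i‖ = 1 := by
    rintro ⟨i, b⟩
    cases b <;> simp [he]
  have hcover : A ⊆ ⋃ i, A ∩ {x | ‖x - x₀‖ ≤ n * inner ℝ (e i) (x - x₀)} := by
    intro x hx
    obtain ⟨i, hi⟩ := exists_norm_le_mul_inner hn (x - x₀)
    exact mem_iUnion.2 ⟨i, hx, hi⟩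
  calc _ ≤ ∫⁻ x in ⋃ i, A ∩ {x | ‖x - x₀‖ ≤ n * inner ℝ (e i) (x - x₀)},
          ENNReal.ofReal (‖(1 / (r * θ)) • w x‖ ^ p x) := lintegral_mono_set hcover
    _ ≤ ∑' i, ∫⁻ x in A ∩ {x | ‖x - x₀‖ ≤ n * inner ℝ (e i) (x - x₀)},
          ENNReal.ofReal (‖(1 / (r * θ)) • w x‖ ^ p x) := lintegral_iUnion_le _ _
    _ ≤ ∑' _i : Fin n × Bool,
          ENNReal.ofReal (max 1 K ^ γ₂ * Real.exp (|Cp| * n ^ α / α) * n ^ γ₂)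
            * ∫⁻ x in A, (1 + ENNReal.ofReal (‖Dw x‖ ^ p x)) :=
        ENNReal.tsum_le_tsum fun i =>
          poincare_annulus_cone hn hp hr hr1 hθ hθ1 hBΩ hA rfl hDi hK hw (he1 i)
    _ = _ := by
        rw [tsum_fintype, Finset.sum_const, Finset.card_univ, Fintype.card_prod, Fintype.card_fin,
          Fintype.card_bool, nsmul_eq_mul, ← mul_assoc]
        congr 1
        rw [show (2 * n : ℝ) = ((n * 2 : ℕ) : ℝ) by push_cast; ring,
          ENNReal.ofReal_mul (Nat.cast_nonneg _), ENNReal.ofReal_natCast]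

/-- **Poincaré's inequality** for bounded maps in `W^{1,p(·)}`, on balls and on
annuli with zero trace on the outer boundary (the latter expressed through the
zero extension remaining weakly differentiable across `∂B_r`). The constants depend
only on `n, N, γ₁, γ₂, [p]_{0,α}, α` and the `L^∞`-bound `K`. -/
theorem poincare_inequality_variable_exponent
    (n N : ℕ) (hn : 2 ≤ n)
    (α γ₁ γ₂ Cp K : ℝ) (hα : 0 < α) (hα1 : α ≤ 1) (hγ₁ : 1 < γ₁) :
    (∃ c : ℝ, 0 < c ∧
      ∀ (Ω : Set (Rn n)), IsOpen Ω →
      ∀ p : Rn n → ℝ, Pconds Ω p α γ₁ γ₂ Cp →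
      ∀ (w : Rn n → Rn N) (Dw : Rn n → (Rn n →L[ℝ] Rn N)), MemW1pLoc Ω p w Dw →
      ∀ (x₀ : Rn n) (r : ℝ), 0 < r → r ≤ 1 → closedBall x₀ r ⊆ Ω →
        (∀ x ∈ ball x₀ r, ‖w x‖ ≤ K) →
        ∫ x in ball x₀ r, ‖(1 / r) • (w x - ⨍ y in ball x₀ r, w y)‖ ^ p x
          ≤ c * ((∫ x in ball x₀ r, ‖Dw x‖ ^ p x)
              + (volume (ball x₀ r)).toReal)) ∧
    (∃ c : ℝ, 0 < c ∧
      ∀ (Ω : Set (Rn n)), IsOpen Ω →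
      ∀ p : Rn n → ℝ, Pconds Ω p α γ₁ γ₂ Cp →
      ∀ (x₀ : Rn n) (r θ : ℝ), 0 < r → r ≤ 1 → 0 < θ → θ < 1 →
        closedBall x₀ r ⊆ Ω →
      ∀ (w : Rn n → Rn N) (Dw : Rn n → (Rn n →L[ℝ] Rn N)),
        MemW1p (ball x₀ r \ closedBall x₀ (r * (1 - θ))) p w Dw →
        (∀ x ∈ ball x₀ r \ closedBall x₀ (r * (1 - θ)), ‖w x‖ ≤ K) →
        IsWeakFDerivOn ((closedBall x₀ (r * (1 - θ)))ᶜ)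
          ((ball x₀ r \ closedBall x₀ (r * (1 - θ))).indicator w)
          ((ball x₀ r \ closedBall x₀ (r * (1 - θ))).indicator Dw) →
        ∫ x in ball x₀ r \ closedBall x₀ (r * (1 - θ)), ‖(1 / (r * θ)) • w x‖ ^ p x
          ≤ c * ((∫ x in ball x₀ r \ closedBall x₀ (r * (1 - θ)), ‖Dw x‖ ^ p x)
              + (volume (ball x₀ r \ closedBall x₀ (r * (1 - θ)))).toReal)) := by
  constructor
  · exact ⟨max 1 (2 * K) ^ γ₂ * Real.exp (2 * |Cp| / α) * 2 ^ γ₂ * 2 ^ n, by positivity,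
      fun Ω hΩ p hp w Dw hw x₀ r hr hr1 hBΩ hK => poincare_ball hΩ hp hw hr hr1 hBΩ hK⟩
  · have hn0 : 0 < n := by omega
    exact ⟨2 * n * (max 1 K ^ γ₂ * Real.exp (|Cp| * n ^ α / α) * n ^ γ₂), by positivity,
      fun Ω _ p hp x₀ r θ hr hr1 hθ hθ1 hBΩ w Dw hw hK hz =>
        poincare_annulus (by omega) hp hr hr1 hθ hθ1 hBΩ hw.2.2.2.2 hK hz⟩
end
end
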